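/- arXiv:1210.4582 — 2 statements merged into one kernel-verified Lean document; each statement's English description precedes it below -/
import Mathlib

section
/- Assume ε ∉ (1/2)ℤ. Then there exists a constant C > 0, depending only on V₁, V₂ and ε, such that for every C^∞ 1-periodic φ : ℝ → ℂ, every positive integer N (h = 1/N), and every vector (ψ₀,…,ψ_{N−1}) ∈ ℂ^N with associated step function ψ_h = Σ_i ψ_i χ_{i+ε}, the consistency bound | h Σ_{i=0}^{N−1} ψ_i (Wφ)(t_{i+ε}) − Σ_{i=0}^{N−1} ψ_i [ (V₁φ′)(s_{i+ε}) − (V₁φ′)(s_{i+1+ε}) ] − h² Σ_{i,j=0}^{N−1} ψ_i V₂(t_{i+ε}, t_j) φ(t_j) + h C̄₁(ε) ∫₀¹ ψ_h(t) A₂(t,t) φ(t) dt | ≤ C h² ‖ψ_h‖₀ ‖φ‖₃ holds, where C̄₁(ε) = −(1/(2πi)) log(4 sin²(πε)). -/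
/-!
Write `h = 1/N` and `g = V₁φ′`. Since `Wφ = -g′ + V₂φ`, the quantity to be bounded is
`Σ_i ψ_i (d_i + r_i)`, where

* `d_i = g(s_{i+1+ε}) - g(s_{i+ε}) - h g′(t_{i+ε})` is a midpoint difference error, and
* `r_i` is `h` times the quadrature error of `V₂φ` at `t_{i+ε}` corrected by
  `h C̄₁(ε) A₂(t,t) φ(t)`, plus `h C̄₁(ε)` times the difference between the integral of `A₂(t,t) φ(t)`
  over the cell and its midpoint value.

By Cauchy–Schwarz (`pairing`) it suffices that `Σ |d_i|² ≤ C h⁵ ‖φ‖₃²` and `|r_i| ≤ C h³ ‖φ‖₃`.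

*The terms `d_i`.* They are controlled cell by cell by `g‴` in `L²` (`midpoint_sum`), so one needs
`‖g‴‖ ≤ C ‖φ‖₃` (`g_main`). After the substitution `x = s - t` the singularity sits at a fixed place
and `g` can be differentiated under the integral. All terms of `g‴` except the one carrying `φ⁗`
are bounded directly. In that term the kernel `A₁(s, s-x)` is split as `α` plus a function vanishing at
`x = 0` and `x = 1`. Convolution of a derivative with `log sin²` loses nothing in `L²`, because
`log(4 sin²(πx))` has Fourier coefficients `-1/|m|` (`integral_lg4_ee`, `conv_lg_deriv`); for the
vanishing part, integration by parts moves one derivative onto the kernel (`conv_gain`).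

*The terms `r_i`.* The `V₂` quadrature is treated one Fourier mode at a time (`quad_mode`). The identity
`Σ_j log(4 sin²(π(x - j/N))) = log(4 sin²(πNx))` (`log_prod`), at `x = t_{i+ε}`, produces exactly the
constant `log(4 sin²(πε))` of the correction. What remains is the trapezoidal rule for
`log(4 sin²(πx)) (e^{-2πimx} - 1)`, whose error is the sum of its Fourier coefficients at the nonzero
multiples of `N` and hence `O(h²|m|)` (`Fm_quad`). Summation over the modes costs `Σ m² |û(m)|`, which
`‖u‖₃` controls (`S2_bound`).
-/

noncomputable section

/-- Smooth kernel data, 1-periodic in each variable. -/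
def SPK (A : ℝ → ℝ → ℂ) : Prop :=
  ContDiff ℝ (⊤ : ℕ∞) (fun p : ℝ × ℝ => A p.1 p.2) ∧
    (∀ s t, A (s + 1) t = A s t) ∧ (∀ s t, A s (t + 1) = A s t)

/-- Logarithmic kernel `V(s,t) = (i/(2π)) A(s,t) log(sin²(π(s−t))) + K(s,t)`. -/
def logKer (A K : ℝ → ℝ → ℂ) (s t : ℝ) : ℂ :=
  Complex.I / (2 * Real.pi) * A s t * (Real.log (Real.sin (Real.pi * (s - t)) ^ 2) : ℂ) + K s t

/-- Grid point `s_{j+ε} = (j − 1/2 + ε)h`. -/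
def sg (h ε : ℝ) (j : ℤ) : ℝ := ((j : ℝ) - 1 / 2 + ε) * h

/-- Grid point `t_{j+ε} = (j + ε)h`. -/
def tg (h ε : ℝ) (j : ℤ) : ℝ := ((j : ℝ) + ε) * h

/-- Integral operator with kernel `V`. -/
def Vop (V : ℝ → ℝ → ℂ) (φ : ℝ → ℂ) (s : ℝ) : ℂ := ∫ t in (0:ℝ)..1, V s t * φ t

/-- Hypersingular operator `W = −D V₁ D + V₂`. -/
def Wop (V1 V2 : ℝ → ℝ → ℂ) (φ : ℝ → ℂ) (s : ℝ) : ℂ :=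
  -deriv (Vop V1 (deriv φ)) s + Vop V2 φ s

/-- Nyström matrix entries `W^ε_{ij}`. -/
def Wmat (V1 V2 : ℝ → ℝ → ℂ) (h ε : ℝ) (i j : ℤ) : ℂ :=
  V1 (sg h ε (i + 1)) (sg h 0 (j + 1)) - V1 (sg h ε i) (sg h 0 (j + 1))
    - V1 (sg h ε (i + 1)) (sg h 0 j) + V1 (sg h ε i) (sg h 0 j)
    + (h : ℂ) ^ 2 * V2 (tg h ε i) (tg h 0 j)

/-- Fourier coefficient of a 1-periodic function. -/
def fc (u : ℝ → ℂ) (m : ℤ) : ℂ :=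
  ∫ t in (0:ℝ)..1, u t * Complex.exp (-(2 * Real.pi * Complex.I * (m : ℂ) * (t : ℂ)))

/-- Periodic Sobolev norm of order `r`. -/
def sobNorm (r : ℝ) (u : ℝ → ℂ) : ℝ :=
  Real.sqrt (‖fc u 0‖ ^ 2 +
    ∑' m : ℤ, if m = 0 then 0 else |(m : ℝ)| ^ (2 * r) * ‖fc u m‖ ^ 2)

/-- 1-periodic step function on the ε-shifted grid with coefficients `v`. -/
def stepf (N : ℕ) (ε : ℝ) (v : ZMod N → ℂ) (s : ℝ) : ℂ :=
  v ((⌊s * N + 1 / 2 - ε⌋ : ℤ) : ZMod N)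

/-- Midpoint quadrature error matrix entries `E^ε_{ij}`. -/
def Emat (V2 : ℝ → ℝ → ℂ) (h ε : ℝ) (i j : ℤ) : ℂ :=
  (∫ s in (sg h ε i)..(sg h ε (i + 1)), ∫ t in (sg h 0 j)..(sg h 0 (j + 1)), V2 s t)
    - (h : ℂ) ^ 2 * V2 (tg h ε i) (tg h 0 j)

/-- Spectral (ℓ²-operator) norm of a complex `N×N` matrix. -/
def specNorm {N : ℕ} (M : Matrix (Fin N) (Fin N) ℂ) : ℝ :=
  ‖LinearMap.toContinuousLinearMap (Matrix.toEuclideanLin M)‖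

/-- The function `C̄₁(t) = −(1/(2πi)) log(4 sin²(πt))`. -/
def Cbar1 (t : ℝ) : ℂ :=
  -(1 / (2 * Real.pi * Complex.I)) * (Real.log (4 * Real.sin (Real.pi * t) ^ 2) : ℂ)

end

open MeasureTheory Set Filter Topology intervalIntegral

/-! ### Characters and Fourier coefficients -/

/-- The character `x ↦ exp(2πimx)`. -/
noncomputable def ee (m : ℤ) (x : ℝ) : ℂ := Complex.exp (2 * Real.pi * Complex.I * (m : ℂ) * (x : ℂ))

lemma ee_add (m n : ℤ) (x : ℝ) : ee (m + n) x = ee m x * ee n x := by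
  unfold ee; rw [← Complex.exp_add]; push_cast; ring_nf

lemma ee_add_arg (m : ℤ) (x y : ℝ) : ee m (x + y) = ee m x * ee m y := by
  unfold ee; rw [← Complex.exp_add]; push_cast; ring_nf

@[simp] lemma ee_zero (x : ℝ) : ee 0 x = 1 := by simp [ee]

@[simp] lemma ee_zero_arg (m : ℤ) : ee m 0 = 1 := by simp [ee]

lemma ee_neg_arg (m : ℤ) (x : ℝ) : ee m (-x) = ee (-m) x := by
  unfold ee; push_cast; ring_nf

@[simp] lemma norm_ee (m : ℤ) (x : ℝ) : ‖ee m x‖ = 1 := by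
  unfold ee
  have : (2 * Real.pi * Complex.I * (m : ℂ) * (x : ℂ)) = ((2 * Real.pi * m * x : ℝ) : ℂ) * Complex.I := by
    push_cast; ring
  rw [this, Complex.norm_exp_ofReal_mul_I]

lemma ee_int (m k : ℤ) : ee m (k : ℝ) = 1 := by
  unfold ee
  rw [Complex.exp_eq_one_iff]
  exact ⟨m * k, by push_cast; ring⟩

lemma ee_periodic (m : ℤ) : Function.Periodic (ee m) 1 := by
  intro x
  rw [ee_add_arg]
  have := ee_int m 1
  push_cast at this
  rw [this, mul_one]

lemma hasDerivAt_ee (m : ℤ) (x : ℝ) :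
    HasDerivAt (ee m) (2 * Real.pi * Complex.I * m * ee m x) x := by
  unfold ee
  have h1 : HasDerivAt (fun x : ℝ => (2 * Real.pi * Complex.I * (m : ℂ) * (x : ℂ)))
      (2 * Real.pi * Complex.I * m * 1) x :=
    (Complex.ofRealCLM.hasDerivAt (x := x)).const_mul _
  convert h1.cexp using 1
  ring

lemma continuous_ee (m : ℤ) : Continuous (ee m) := by
  unfold ee; fun_prop

lemma fourier_eq_ee (m : ℤ) (x : ℝ) : fourier m (x : UnitAddCircle) = ee m x := by
  rw [fourier_coe_apply]; simp [ee]

lemma fc_eq (u : ℝ → ℂ) (m : ℤ) : fc u m = ∫ t in (0:ℝ)..1, u t * ee (-m) t := by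
  unfold fc ee
  congr 1; ext t; congr 2; push_cast; ring

lemma integral_ee (m : ℤ) : ∫ x in (0:ℝ)..1, ee m x = if m = 0 then 1 else 0 := by
  split_ifs with h
  · subst h; simp
  · have hc : (2 * Real.pi * Complex.I * m : ℂ) ≠ 0 := by
      simp [Real.pi_ne_zero, h]
    have : ∀ x ∈ uIcc (0:ℝ) 1, HasDerivAt (fun x => ee m x / (2 * Real.pi * Complex.I * m)) (ee m x) x := by
      intro x _
      have := (hasDerivAt_ee m x).div_const (2 * Real.pi * Complex.I * m)
      rwa [mul_div_cancel_left₀ _ hc] at this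
    rw [integral_eq_sub_of_hasDerivAt this ((continuous_ee m).intervalIntegrable _ _)]
    have h1 := ee_int m 1
    push_cast at h1
    simp [h1]

lemma fc_eq_on (u : ℝ → ℂ) (m : ℤ) : fc u m = fourierCoeffOn (zero_lt_one' ℝ) u m := by
  rw [fourierCoeffOn_eq_integral, fc_eq]
  simp only [sub_zero, div_one, one_smul, smul_eq_mul]
  congr 1; ext t
  rw [mul_comm]; congr 1
  have := fourier_eq_ee (-m) t
  rw [← this]
  simp [fourier_coe_apply]

/-- Parseval's identity. -/
lemma parseval (f : ℝ → ℂ) (hf : Continuous f) :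
    HasSum (fun m => ‖fc f m‖ ^ 2) (∫ x in (0:ℝ)..1, ‖f x‖ ^ 2) := by
  have hL2 : MemLp f 2 (volume.restrict (Ioc (0:ℝ) 1)) := by
    obtain ⟨C, hC⟩ := (isCompact_Icc (a := (0:ℝ)) (b := 1)).exists_bound_of_continuousOn hf.continuousOn
    refine MemLp.of_bound hf.aestronglyMeasurable C ?_
    filter_upwards [ae_restrict_mem measurableSet_Ioc] with x hx
    exact hC x ⟨hx.1.le, hx.2⟩
  have := hasSum_sq_fourierCoeffOn (zero_lt_one' ℝ) hL2
  simpa [fc_eq_on] using this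

/-- A continuous periodic function with summable Fourier coefficients is the sum of its Fourier
series. -/
lemma hasSum_fc (f : ℝ → ℂ) (hf : Continuous f) (hp : Function.Periodic f 1)
    (hs : Summable (fc f)) (x : ℝ) : HasSum (fun m => fc f m * ee m x) (f x) := by
  let g : C(UnitAddCircle, ℂ) := ⟨hp.lift, continuous_coinduced_dom.mpr hf⟩
  have hg : ∀ m, fourierCoeff g m = fc f m := by
    intro m
    rw [fourierCoeff_eq_intervalIntegral _ _ 0, fc_eq]
    simp only [zero_add, div_one, one_smul, smul_eq_mul]
    congr 1; ext t
    rw [fourier_eq_ee, mul_comm]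
    rfl
  have hs' : Summable (fourierCoeff g) := by
    convert hs using 1; ext m; exact hg m
  have := has_pointwise_sum_fourier_series_of_summable hs' (x : UnitAddCircle)
  simp only [hg, fourier_eq_ee, smul_eq_mul] at this
  exact this

lemma fc_deriv (f f' : ℝ → ℂ) (hf : ∀ x, HasDerivAt f (f' x) x) (hf' : Continuous f')
    (hp : Function.Periodic f 1) (m : ℤ) :
    fc f' m = 2 * Real.pi * Complex.I * m * fc f m := by
  have h1 : ∀ x ∈ uIcc (0:ℝ) 1, HasDerivAt (fun x => f x * ee (-m) x)
      (f' x * ee (-m) x + f x * (2 * Real.pi * Complex.I * (-m : ℤ) * ee (-m) x)) x :=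
    fun x _ => (hf x).mul (hasDerivAt_ee (-m) x)
  have hfc : Continuous f := continuous_iff_continuousAt.2 fun x => (hf x).continuousAt
  have hi1 : IntervalIntegrable (fun x => f' x * ee (-m) x) volume 0 1 :=
    (hf'.mul (continuous_ee _)).intervalIntegrable _ _
  have hi2 : IntervalIntegrable (fun x => f x * (2 * Real.pi * Complex.I * (-m : ℤ) * ee (-m) x))
      volume 0 1 :=
    (hfc.mul (continuous_const.mul (continuous_ee _))).intervalIntegrable _ _
  have h2 := integral_eq_sub_of_hasDerivAt h1 (hi1.add hi2)
  rw [integral_add hi1 hi2] at h2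
  have e1 : f 1 * ee (-m) 1 = f 0 * ee (-m) 0 := by
    have := hp 0; have h' := ee_periodic (-m) 0
    rw [zero_add] at this h'; rw [this, h']
  rw [e1, sub_self] at h2
  rw [fc_eq, fc_eq, eq_neg_of_add_eq_zero_left h2, ← intervalIntegral.integral_const_mul,
    ← intervalIntegral.integral_neg]
  congr 1; ext x; push_cast; ring

/-- Fourier coefficients of the sum of an absolutely convergent trigonometric series. -/
lemma fc_of_hasSum (f : ℝ → ℂ) (c : ℤ → ℂ) (hc : Summable fun m => ‖c m‖)
    (h : ∀ x, HasSum (fun m => c m * ee m x) (f x)) (m : ℤ) : fc f m = c m := by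
  have key := hasSum_integral_of_summable_integral_norm (μ := volume.restrict (Ioc (0:ℝ) 1))
    (F := fun n x => c n * ee n x * ee (-m) x) (fun n => by
      have : Continuous fun x => c n * ee n x * ee (-m) x :=
        (continuous_const.mul (continuous_ee _)).mul (continuous_ee _)
      exact (this.intervalIntegrable 0 1).1) (by
      simpa using hc)
  have e1 : ∀ n, ∫ x in Ioc (0:ℝ) 1, c n * ee n x * ee (-m) x = if n = m then c m else 0 := by
    intro n
    rw [← integral_of_le zero_le_one]
    simp only [mul_assoc, ← ee_add]
    rw [intervalIntegral.integral_const_mul, integral_ee]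
    by_cases hnm : n = m
    · simp [hnm]
    · have : n + -m ≠ 0 := by omega
      simp [hnm, this]
  simp only [e1] at key
  have k2 := hasSum_ite_eq m (c m)
  have := key.unique k2
  rw [fc_eq, integral_of_le zero_le_one, ← this]
  congr 1; ext x
  exact (((h x).mul_right _).tsum_eq).symm

lemma integral_shift {E : Type*} [NormedAddCommGroup E] [NormedSpace ℝ E]
    (p : ℝ → E) (hp : Function.Periodic p 1) (s : ℝ) :
    ∫ t in (0:ℝ)..1, p (s - t) = ∫ x in (0:ℝ)..1, p x := by
  rw [intervalIntegral.integral_comp_sub_left (fun x => p x) s]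
  have := hp.intervalIntegral_add_eq (s - 1) 0
  simpa using this

/-! ### The periodic logarithm and its Fourier coefficients -/

/-- The periodic logarithm `x ↦ log(sin²(πx))`; its value at the integers is the junk value `0`. -/
noncomputable def lg (x : ℝ) : ℝ := Real.log (Real.sin (Real.pi * x) ^ 2)

lemma sin_sq_add_int (x : ℝ) (k : ℤ) :
    Real.sin (Real.pi * (x + k)) ^ 2 = Real.sin (Real.pi * x) ^ 2 := by
  have : Real.pi * (x + k) = Real.pi * x + k * Real.pi := by ring
  rw [this, Real.sin_add_int_mul_pi, mul_pow]
  rcases Int.even_or_odd k with h | h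
  · simp [h.neg_one_zpow]
  · simp [h.neg_one_zpow]

lemma lg_periodic : Function.Periodic lg 1 := by
  intro x
  have := sin_sq_add_int x 1
  push_cast at this
  unfold lg; rw [this]

lemma sin_pi_pos {x : ℝ} (hx : x ∈ Ioo (0:ℝ) 1) : 0 < Real.sin (Real.pi * x) := by
  apply Real.sin_pos_of_pos_of_lt_pi
  · exact mul_pos Real.pi_pos hx.1
  · nlinarith [hx.2, Real.pi_pos]

lemma sin_pi_lb {x : ℝ} (hx : x ∈ Icc (0:ℝ) 1) : 2 * min x (1 - x) ≤ Real.sin (Real.pi * x) := by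
  have hpi := Real.pi_pos
  rcases le_total x (1/2) with h | h
  · have := Real.mul_le_sin (x := Real.pi * x) (by nlinarith [hx.1]) (by nlinarith)
    have e : 2 / Real.pi * (Real.pi * x) = 2 * x := by field_simp
    rw [e] at this
    linarith [min_le_left x (1 - x)]
  · have := Real.mul_le_sin (x := Real.pi * (1 - x)) (by nlinarith [hx.2]) (by nlinarith)
    have e : 2 / Real.pi * (Real.pi * (1 - x)) = 2 * (1 - x) := by field_simp
    have e2 : Real.pi * (1 - x) = Real.pi - Real.pi * x := by ring
    rw [e, e2, Real.sin_pi_sub] at this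
    linarith [min_le_right x (1 - x)]

lemma hasDerivAt_lg {x : ℝ} (hx : x ∈ Ioo (0:ℝ) 1) :
    HasDerivAt lg (2 * Real.pi * (Real.cos (Real.pi * x) / Real.sin (Real.pi * x))) x := by
  have hs := sin_pi_pos hx
  have h1 : HasDerivAt (fun x => Real.pi * x) (Real.pi * 1) x := (hasDerivAt_id x).const_mul _
  have h2 := ((h1.sin.fun_pow 2)).log (by positivity)
  have e : 2 * Real.pi * (Real.cos (Real.pi * x) / Real.sin (Real.pi * x)) =
      ((2 : ℕ) : ℝ) * Real.sin (Real.pi * x) ^ (2 - 1) * (Real.cos (Real.pi * x) * (Real.pi * 1)) /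
        Real.sin (Real.pi * x) ^ 2 := by
    push_cast; field_simp
  rw [e]
  exact h2

lemma measurable_lg : Measurable lg := by
  unfold lg; fun_prop

/-- The logarithmic singularities at `0` and `1` are dominated by integrable inverse powers. -/
lemma abs_lg_le {x : ℝ} (hx : x ∈ Ioo (0:ℝ) 1) :
    lg x ^ 2 ≤ 64 * (x ^ (-(1/2) : ℝ) + (1 - x) ^ (-(1/2) : ℝ)) := by
  set y := Real.sin (Real.pi * x) with hy
  have hy0 : 0 < y := sin_pi_pos hx
  have hy1 : y ≤ 1 := Real.sin_le_one _
  have h := Real.abs_log_mul_self_rpow_lt y (1/4) hy0 hy1 (by norm_num)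
  rw [abs_mul, abs_of_nonneg (Real.rpow_nonneg hy0.le _)] at h
  have hl : lg x = 2 * Real.log y := by
    unfold lg; rw [Real.log_pow]; norm_num; rfl
  have h4 : (y ^ (1/4 : ℝ)) ^ 2 * y ^ (-(1/2) : ℝ) = 1 := by
    rw [← Real.rpow_natCast, ← Real.rpow_mul hy0.le, ← Real.rpow_add hy0]; norm_num
  have h5 : lg x ^ 2 ≤ 64 * y ^ (-(1/2) : ℝ) := by
    have hq : 0 < y ^ (1/4 : ℝ) := Real.rpow_pos_of_pos hy0 _
    have hr : 0 < y ^ (-(1/2) : ℝ) := Real.rpow_pos_of_pos hy0 _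
    have h6 : (|Real.log y| * y ^ (1/4 : ℝ)) ^ 2 ≤ 16 := by
      have : 0 ≤ |Real.log y| * y ^ (1/4 : ℝ) := by positivity
      nlinarith
    rw [mul_pow, sq_abs] at h6
    calc lg x ^ 2 = 4 * (Real.log y ^ 2 * ((y ^ (1/4 : ℝ)) ^ 2 * y ^ (-(1/2) : ℝ))) := by
          rw [h4, hl]; ring
      _ = 4 * (Real.log y ^ 2 * (y ^ (1/4 : ℝ)) ^ 2) * y ^ (-(1/2) : ℝ) := by ring
      _ ≤ 4 * 16 * y ^ (-(1/2) : ℝ) := by gcongr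
      _ = _ := by ring
  refine h5.trans ?_
  gcongr
  have hlb := sin_pi_lb ⟨hx.1.le, hx.2.le⟩
  have hx1 : 0 < 1 - x := by linarith [hx.2]
  rcases le_total x (1 - x) with h | h
  · rw [min_eq_left h] at hlb
    have := Real.rpow_le_rpow_of_nonpos hx.1 (show x ≤ y by linarith [hx.1]) (show (-(1/2) : ℝ) ≤ 0 by norm_num)
    have h' := Real.rpow_nonneg hx1.le (-(1/2))
    linarith
  · rw [min_eq_right h] at hlb
    have := Real.rpow_le_rpow_of_nonpos hx1 (show 1 - x ≤ y by linarith [hx.1]) (show (-(1/2) : ℝ) ≤ 0 by norm_num)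
    have h' := Real.rpow_nonneg hx.1.le (-(1/2))
    linarith

lemma ae_mem_Ioo : ∀ᵐ x ∂(volume.restrict (Ioc (0:ℝ) 1)), x ∈ Ioo (0:ℝ) 1 := by
  rw [← Measure.restrict_congr_set Ioo_ae_eq_Ioc]
  exact ae_restrict_mem measurableSet_Ioo

lemma lg_sq_integrable : IntervalIntegrable (fun x => lg x ^ 2) volume 0 1 := by
  have h1 : IntervalIntegrable (fun x : ℝ => x ^ (-(1/2) : ℝ)) volume 0 1 :=
    intervalIntegral.intervalIntegrable_rpow' (by norm_num)
  have h2 : IntervalIntegrable (fun x : ℝ => (1 - x) ^ (-(1/2) : ℝ)) volume 0 1 := by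
    have := h1.comp_sub_left 1
    simp only [sub_zero, sub_self] at this
    exact this.symm
  have h3 := (h1.add h2).const_mul 64
  rw [intervalIntegrable_iff_integrableOn_Ioc_of_le zero_le_one] at h3 ⊢
  refine Integrable.mono' h3 (measurable_lg.pow_const 2).aestronglyMeasurable ?_
  filter_upwards [ae_mem_Ioo] with x hx
  rw [Real.norm_eq_abs, abs_of_nonneg (sq_nonneg _)]
  exact abs_lg_le hx

lemma lg_integrable : IntervalIntegrable lg volume 0 1 := by
  have h := lg_sq_integrable.add (intervalIntegrable_const (μ := volume) (a := (0:ℝ)) (b := 1) (c := (1:ℝ)))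
  rw [intervalIntegrable_iff_integrableOn_Ioc_of_le zero_le_one] at h ⊢
  refine Integrable.mono' h measurable_lg.aestronglyMeasurable ?_
  refine Eventually.of_forall fun x => ?_
  simp only [Real.norm_eq_abs]
  rw [abs_le]; constructor <;> nlinarith [sq_nonneg (lg x - 1), sq_nonneg (lg x + 1)]

lemma integral_lg : ∫ x in (0:ℝ)..1, lg x = - Real.log 4 := by
  have h := integral_log_sin_zero_pi
  have h2 := intervalIntegral.integral_comp_mul_left (a := 0) (b := 1)
    (fun x => Real.log (Real.sin x)) Real.pi_ne_zero
  simp only [mul_zero, mul_one, h, smul_eq_mul] at h2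
  have : ∀ x, lg x = 2 * Real.log (Real.sin (Real.pi * x)) := by
    intro x; unfold lg; rw [Real.log_pow]; norm_num
  simp only [this]
  rw [intervalIntegral.integral_const_mul, h2]
  have h4 : Real.log 4 = 2 * Real.log 2 := by
    rw [show (4:ℝ) = 2 ^ 2 by norm_num, Real.log_pow]; norm_num
  rw [h4]; field_simp

/-- Multiplying `lg` by a continuous function that is `O(|sin(πx)|)` removes the singularity. -/
lemma continuousOn_lg_mul {S : Set ℝ} {g : ℝ → ℂ} {C : ℝ} (hg : ContinuousOn g S)
    (hb : ∀ x ∈ S, ‖g x‖ ≤ C * |Real.sin (Real.pi * x)|) :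
    ContinuousOn (fun x => (lg x : ℂ) * g x) S := by
  intro x hx
  by_cases h0 : Real.sin (Real.pi * x) = 0
  · have hgx : g x = 0 := by
      have := hb x hx; rw [h0] at this; simpa using this
    have hc : Continuous fun y => C * |2 * (Real.sin (Real.pi * y) * Real.log (Real.sin (Real.pi * y)))| := by
      have := Real.continuous_mul_log.comp (show Continuous fun y => Real.sin (Real.pi * y) by fun_prop)
      exact continuous_const.mul ((continuous_const.mul this).abs)
    unfold ContinuousWithinAt
    simp only [hgx, mul_zero]
    have ht := (hc.tendsto x).mono_left (nhdsWithin_le_nhds (s := S))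
    rw [h0] at ht; simp only [zero_mul, mul_zero, abs_zero] at ht
    refine squeeze_zero_norm' ?_ ht
    filter_upwards [self_mem_nhdsWithin] with y hy
    rw [norm_mul, Complex.norm_real, Real.norm_eq_abs]
    have hl : lg y = 2 * Real.log (Real.sin (Real.pi * y)) := by
      unfold lg; rw [Real.log_pow]; norm_num
    calc |lg y| * ‖g y‖ ≤ |lg y| * (C * |Real.sin (Real.pi * y)|) := by gcongr; exact hb y hy
      _ = _ := by rw [hl]; simp only [abs_mul]; ring
  · have h1 : ContinuousAt lg x := by
      unfold lg
      exact ContinuousAt.log (by fun_prop) (by positivity)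
    exact (Complex.continuous_ofReal.continuousAt.comp h1).continuousWithinAt.mul (hg x hx)

lemma lg_mul_integrable {f : ℝ → ℂ} (hf : Continuous f) :
    IntervalIntegrable (fun x => (lg x : ℂ) * f x) volume 0 1 := by
  have : IntervalIntegrable (fun x => (lg x : ℂ)) volume 0 1 := by
    rw [intervalIntegrable_iff_integrableOn_Ioc_of_le zero_le_one]
    exact ((intervalIntegrable_iff_integrableOn_Ioc_of_le zero_le_one).1 lg_integrable).ofReal
  exact this.mul_continuousOn hf.continuousOn

/-- Fourier multiplier of convolution with `log(4 sin²(πx))`: `-1/|m|`, and `0` at `m = 0`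
through the convention `1/0 = 0`. -/
noncomputable def lam (m : ℤ) : ℝ := -(1 / |(m : ℝ)|)

lemma ee_neg_one_sub (x : ℝ) :
    ee (-1) x - 1 = -2 * Complex.I * Real.sin (Real.pi * x) * Complex.exp (-(Real.pi * x) * Complex.I) := by
  unfold ee
  have e : (2 * Real.pi * Complex.I * ((-1 : ℤ) : ℂ) * x : ℂ)
      = (-(Real.pi * x) * Complex.I) + (-(Real.pi * x) * Complex.I) := by push_cast; ring
  rw [e, Complex.exp_add, Complex.ofReal_sin, Complex.sin]
  push_cast
  have h2 : Complex.exp (Real.pi * x * Complex.I) * Complex.exp (-(Real.pi * x) * Complex.I) = 1 := by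
    rw [← Complex.exp_add]; simp
  linear_combination h2 + (Complex.exp (-(Real.pi * x) * Complex.I) ^ 2
    - Complex.exp (Real.pi * x * Complex.I) * Complex.exp (-(Real.pi * x) * Complex.I)) * Complex.I_sq

lemma norm_ee_one_sub (x : ℝ) : ‖ee (-1) x - 1‖ = 2 * |Real.sin (Real.pi * x)| := by
  rw [ee_neg_one_sub]
  have : ‖Complex.exp (-(Real.pi * x) * Complex.I)‖ = 1 := by
    have := Complex.norm_exp_ofReal_mul_I (-(Real.pi * x))
    push_cast at this; exact this
  rw [norm_mul, this, norm_mul, Complex.norm_real]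
  simp

lemma cot_mul_ee (x : ℝ) (hx : x ∈ Ioo (0:ℝ) 1) :
    ((Real.cos (Real.pi * x) / Real.sin (Real.pi * x) : ℝ) : ℂ) * (ee (-1) x - 1)
      = -Complex.I * (1 + ee (-1) x) := by
  have hs : (Real.sin (Real.pi * x) : ℂ) ≠ 0 := by exact_mod_cast (sin_pi_pos hx).ne'
  have h1 := ee_neg_one_sub x
  have h2 : Complex.exp (Real.pi * x * Complex.I) * Complex.exp (-(Real.pi * x) * Complex.I) = 1 := by
    rw [← Complex.exp_add]; simp
  have h3 : ee (-1) x = Complex.exp (-(Real.pi * x) * Complex.I) ^ 2 := by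
    unfold ee; rw [← Complex.exp_nat_mul]; congr 1; push_cast; ring
  have h4 : (Real.cos (Real.pi * x) : ℂ) =
      (Complex.exp (Real.pi * x * Complex.I) + Complex.exp (-(Real.pi * x) * Complex.I)) / 2 := by
    rw [Complex.ofReal_cos, Complex.cos]; push_cast; rfl
  rw [h1, h3, Complex.ofReal_div, h4]
  generalize Complex.exp (-(Real.pi * x) * Complex.I) = E at *
  generalize Complex.exp (Real.pi * x * Complex.I) = P at *
  field_simp
  linear_combination -h2

/-- Recurrence for the Fourier coefficients of `lg`, from integrating the derivative of
`lg x (e^{-2πix} - 1) e^{-2πikx}`, in which the factor `e^{-2πix} - 1` cancels the singularity. -/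
lemma lam_rec (k : ℤ) :
    (k + 1 : ℂ) * (∫ x in (0:ℝ)..1, (lg x : ℂ) * ee (-(k + 1)) x)
      - k * (∫ x in (0:ℝ)..1, (lg x : ℂ) * ee (-k) x)
      = -((if k = 0 then 1 else 0) + (if k + 1 = 0 then 1 else 0)) := by
  have hc : Continuous fun x => (ee (-1) x - 1) * ee (-k) x :=
    ((continuous_ee _).sub continuous_const).mul (continuous_ee _)
  have hcont := continuousOn_lg_mul (S := Icc (0:ℝ) 1) (C := 2) hc.continuousOn (by
    intro x _
    rw [norm_mul, norm_ee, mul_one, norm_ee_one_sub])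
  have hd : ∀ x ∈ Ioo (0:ℝ) 1, HasDerivAt (fun x => (lg x : ℂ) * ((ee (-1) x - 1) * ee (-k) x))
      ((-2 * Real.pi * Complex.I) * ee (-k) x + (-2 * Real.pi * Complex.I) * ee (-(k+1)) x
        + (-2 * Real.pi * Complex.I * (k + 1)) * ((lg x : ℂ) * ee (-(k+1)) x)
        + (2 * Real.pi * Complex.I * k) * ((lg x : ℂ) * ee (-k) x)) x := by
    intro x hx
    have h1 := (hasDerivAt_lg hx).ofReal_comp
    have h2 := ((hasDerivAt_ee (-1) x).sub_const 1).fun_mul (hasDerivAt_ee (-k) x)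
    have h3 := h1.fun_mul h2
    have h4 := cot_mul_ee x hx
    refine h3.congr_deriv ?_
    have e1 : ee (-(k+1)) x = ee (-1) x * ee (-k) x := by rw [← ee_add]; congr 1; ring
    rw [e1, Complex.ofReal_mul]
    push_cast at h4 ⊢
    linear_combination (2 * Real.pi * ee (-k) x) * h4
  have hi1 : IntervalIntegrable (fun x => (-2 * Real.pi * Complex.I) * ee (-k) x) volume 0 1 :=
    (continuous_const.mul (continuous_ee _)).intervalIntegrable _ _
  have hi2 : IntervalIntegrable (fun x => (-2 * Real.pi * Complex.I) * ee (-(k+1)) x) volume 0 1 :=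
    (continuous_const.mul (continuous_ee _)).intervalIntegrable _ _
  have hi3 := (lg_mul_integrable (continuous_ee (-(k+1)))).const_mul (-2 * Real.pi * Complex.I * (k + 1))
  have hi4 := (lg_mul_integrable (continuous_ee (-k))).const_mul (2 * Real.pi * Complex.I * k)
  have h := integral_eq_sub_of_hasDerivAt_of_le zero_le_one hcont hd (((hi1.add hi2).add hi3).add hi4)
  rw [integral_add ((hi1.add hi2).add hi3) hi4, integral_add (hi1.add hi2) hi3, integral_add hi1 hi2] at h
  simp only [intervalIntegral.integral_const_mul, integral_ee] at h
  have h1 := ee_int (-1) 1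
  push_cast at h1
  rw [h1] at h
  simp only [ee_zero_arg, sub_self, zero_mul, mul_zero, neg_eq_zero] at h
  have hp : (2 * Real.pi * Complex.I : ℂ) ≠ 0 := by simp [Real.pi_ne_zero]
  apply mul_left_cancel₀ hp
  linear_combination -h

lemma integral_lg_ee (m : ℤ) (hm : m ≠ 0) :
    ∫ x in (0:ℝ)..1, (lg x : ℂ) * ee (-m) x = lam m := by
  have hpos : ∀ n : ℕ, ((n:ℂ) + 1) * (∫ x in (0:ℝ)..1, (lg x : ℂ) * ee (-((n:ℤ) + 1)) x) = -1 := by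
    intro n
    induction n with
    | zero => have := lam_rec 0; simpa using this
    | succ n ih =>
      have := lam_rec ((n : ℤ) + 1)
      rw [if_neg (by omega), if_neg (by omega)] at this
      push_cast at this ih ⊢
      linear_combination this + ih
  have hneg : ∀ n : ℕ, ((n:ℂ) + 1) * (∫ x in (0:ℝ)..1, (lg x : ℂ) * ee (((n:ℤ) + 1)) x) = -1 := by
    intro n
    induction n with
    | zero => have := lam_rec (-1); simpa using this
    | succ n ih =>
      have := lam_rec (-((n : ℤ) + 1 + 1))
      rw [if_neg (by omega), if_neg (by omega)] at this
      have e1 : -(-((n : ℤ) + 1 + 1) + 1) = n + 1 := by ring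
      have e2 : -(-((n : ℤ) + 1 + 1)) = n + 1 + 1 := by ring
      rw [e1, e2] at this
      push_cast at this ih ⊢
      linear_combination this + ih
  unfold lam
  rcases lt_or_gt_of_ne hm with h | h
  · obtain ⟨n, hn⟩ : ∃ n : ℕ, m = -((n:ℤ) + 1) := ⟨(-m - 1).toNat, by omega⟩
    have := hneg n
    have h0 : (n : ℂ) + 1 ≠ 0 := by exact_mod_cast Nat.succ_ne_zero n
    have ha : |(m : ℝ)| = n + 1 := by
      rw [hn]; push_cast; rw [abs_neg, abs_of_nonneg (by positivity)]
    rw [ha, hn, neg_neg]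
    push_cast
    field_simp
    linear_combination this
  · obtain ⟨n, hn⟩ : ∃ n : ℕ, m = ((n:ℤ) + 1) := ⟨(m - 1).toNat, by omega⟩
    have := hpos n
    have h0 : (n : ℂ) + 1 ≠ 0 := by exact_mod_cast Nat.succ_ne_zero n
    have ha : |(m : ℝ)| = n + 1 := by
      rw [hn]; push_cast; rw [abs_of_nonneg (by positivity)]
    rw [ha, hn]
    push_cast
    field_simp
    linear_combination this

lemma integral_lg4_ee (m : ℤ) :
    ∫ x in (0:ℝ)..1, ((lg x + Real.log 4 : ℝ) : ℂ) * ee (-m) x = lam m := by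
  have : ∀ x, ((lg x + Real.log 4 : ℝ) : ℂ) * ee (-m) x
      = (lg x : ℂ) * ee (-m) x + (Real.log 4 : ℂ) * ee (-m) x := by
    intro x; push_cast; ring
  simp only [this]
  have hi : IntervalIntegrable (fun x => (Real.log 4 : ℂ) * ee (-m) x) volume 0 1 :=
    (continuous_const.mul (continuous_ee _)).intervalIntegrable _ _
  rw [integral_add (lg_mul_integrable (continuous_ee _)) hi,
    intervalIntegral.integral_const_mul, integral_ee]
  by_cases hm : m = 0
  · subst hm
    have := integral_lg
    simp [intervalIntegral.integral_ofReal, this, lam]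
  · rw [integral_lg_ee m hm]; simp [hm]

/-! ### Quadrature of one Fourier mode against the logarithmic kernel -/

lemma ee_nat_mul (m : ℤ) (n : ℕ) (x : ℝ) : ee m (n * x) = ee m x ^ n := by
  unfold ee; rw [← Complex.exp_nat_mul]; congr 1; push_cast; ring

lemma ee_one_eq_one_iff (n : ℤ) (N : ℕ) (hN : 0 < N) : ee n (1 / N) = 1 ↔ (N : ℤ) ∣ n := by
  have hN' : (N : ℂ) ≠ 0 := by exact_mod_cast hN.ne'
  unfold ee
  rw [Complex.exp_eq_one_iff]
  have hp : (2 * Real.pi * Complex.I : ℂ) ≠ 0 := by simp [Real.pi_ne_zero]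
  constructor
  · rintro ⟨k, hk⟩
    refine ⟨k, ?_⟩
    push_cast at hk
    field_simp at hk
    have h3 : (n : ℂ) = N * k := by
      apply mul_left_cancel₀ hp; linear_combination (2 * Real.pi * Complex.I) * hk
    exact_mod_cast h3
  · rintro ⟨k, rfl⟩
    refine ⟨k, ?_⟩
    push_cast
    field_simp

/-- Orthogonality of characters on the shifted uniform grid. -/
lemma disc_orth (n : ℤ) (N : ℕ) (hN : 0 < N) (x : ℝ) :
    (1 / (N : ℂ)) * ∑ j ∈ Finset.range N, ee n (x - j / N) = if (N : ℤ) ∣ n then ee n x else 0 := by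
  have hN' : (N : ℂ) ≠ 0 := by exact_mod_cast hN.ne'
  have hNr : (N : ℝ) ≠ 0 := by exact_mod_cast hN.ne'
  have h1 : ∀ j : ℕ, ee n (x - j / N) = ee n x * ee (-n) (1 / N) ^ j := by
    intro j
    rw [← ee_nat_mul, ← ee_neg_arg, ← ee_add_arg]; congr 1; ring
  simp only [h1, ← Finset.mul_sum]
  split_ifs with h
  · rw [(ee_one_eq_one_iff (-n) N hN).2 ((dvd_neg).2 h)]
    simp; field_simp
  · have hr : ee (-n) (1 / N) ≠ 1 := fun h' => h ((dvd_neg).1 ((ee_one_eq_one_iff (-n) N hN).1 h'))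
    rw [geom_sum_eq hr, ← ee_nat_mul]
    have : (N : ℝ) * (1 / N) = ((1 : ℤ) : ℝ) := by push_cast; field_simp
    rw [this, ee_int]; simp

lemma lg4_eq (x : ℝ) (hx : Real.sin (Real.pi * x) ≠ 0) :
    lg x + Real.log 4 = 2 * Real.log ‖ee (-1) x - 1‖ := by
  rw [norm_ee_one_sub, Real.log_mul (by norm_num) (by simpa using hx), Real.log_abs, lg, Real.log_pow,
    show (4:ℝ) = 2 ^ 2 by norm_num, Real.log_pow]
  push_cast; ring

/-- Factorisation of `1 - z^N` over the `N`-th roots of unity. -/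
lemma prod_roots (N : ℕ) (hN : 0 < N) (z : ℂ) :
    1 - z ^ N = ∏ j ∈ Finset.range N, (1 - ee 1 (1 / N) ^ j * z) := by
  have hN' : (N : ℂ) ≠ 0 := by exact_mod_cast hN.ne'
  have hprim : IsPrimitiveRoot (ee 1 (1 / N)) N := by
    have := Complex.isPrimitiveRoot_exp N hN.ne'
    convert this using 1
    unfold ee; congr 1; push_cast; field_simp
  have h := hprim.pow_sub_pow_eq_prod_sub_mul 1 z hN
  rw [one_pow] at h
  rw [h]
  have : NeZero N := ⟨hN.ne'⟩
  symm
  refine Finset.prod_bij (fun j _ => ee 1 (1 / N) ^ j) ?_ ?_ ?_ ?_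
  · intro j _
    rw [Polynomial.mem_nthRootsFinset hN, ← pow_mul, mul_comm, pow_mul, hprim.pow_eq_one, one_pow]
  · intro a ha b hb hab
    exact hprim.pow_inj (Finset.mem_range.1 ha) (Finset.mem_range.1 hb) hab
  · intro ξ hξ
    rw [Polynomial.mem_nthRootsFinset hN] at hξ
    obtain ⟨i, hi, h⟩ := hprim.eq_pow_of_pow_eq_one hξ
    exact ⟨i, Finset.mem_range.2 hi, h⟩
  · intros; rfl

lemma sin_ne_iff (x : ℝ) : Real.sin (Real.pi * x) ≠ 0 ↔ ee (-1) x - 1 ≠ 0 := by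
  rw [← norm_ne_zero_iff (a := ee (-1) x - 1), norm_ee_one_sub]; simp

/-- The identity `∏_j |e^{-2πi(x-j/N)} - 1| = |e^{-2πiNx} - 1|` in logarithmic form. It is the source
of the constant `log(4 sin²(πε))`. -/
lemma log_prod (N : ℕ) (hN : 0 < N) (x : ℝ) (hx : Real.sin (Real.pi * (N * x)) ≠ 0) :
    (∀ j : ℕ, Real.sin (Real.pi * (x - j / N)) ≠ 0) ∧
    ∑ j ∈ Finset.range N, (lg (x - j / N) + Real.log 4) = lg (N * x) + Real.log 4 := by
  have hNr : (N : ℝ) ≠ 0 := by exact_mod_cast hN.ne'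
  have hj : ∀ j : ℕ, Real.sin (Real.pi * (x - j / N)) ≠ 0 := by
    intro j
    rw [sin_ne_iff] at hx ⊢
    intro h
    apply hx
    have h1 : ee (-1) (x - j / N) = 1 := by linear_combination h
    have h2 := ee_nat_mul (-1) N (x - j / N)
    rw [h1, one_pow] at h2
    have e : (N : ℝ) * x = N * (x - j / N) + ((j : ℤ) : ℝ) := by push_cast; field_simp; ring
    rw [e, ee_add_arg, ee_int, h2]; simp
  refine ⟨hj, ?_⟩
  rw [lg4_eq _ hx, Finset.sum_congr rfl fun j _ => lg4_eq _ (hj j), ← Finset.mul_sum,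
    ← Real.log_prod]
  · congr 2
    rw [← norm_prod, ee_nat_mul, ← norm_neg (ee (-1) x ^ N - 1), neg_sub, prod_roots N hN,
      norm_prod, norm_prod]
    refine Finset.prod_congr rfl fun j _ => ?_
    rw [← norm_neg, neg_sub]
    congr 2
    rw [← ee_nat_mul, sub_eq_add_neg x, ee_add_arg, ee_neg_arg, mul_comm]
    simp only [neg_neg]; congr 2; ring
  · intro j _
    rw [norm_ne_zero_iff, ← sin_ne_iff]; exact hj j

lemma abs_lam_le (m : ℤ) : |lam m| ≤ 1 := by
  unfold lam
  by_cases hm : m = 0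
  · subst hm; simp
  · have : (1:ℝ) ≤ |(m:ℝ)| := by exact_mod_cast Int.one_le_abs hm
    rw [abs_neg, abs_of_nonneg (by positivity)]
    rw [div_le_one (by linarith)]; exact this

lemma lam_diff (m n : ℤ) :
    |lam (m + n) - lam n| ≤ |(m:ℝ)| * (1 / (n:ℝ) ^ 2 + 1 / ((n + m : ℤ) : ℝ) ^ 2) := by
  unfold lam
  rcases eq_or_ne m 0 with hm | hm
  · subst hm; simp
  have hmr : (m:ℝ) ≠ 0 := by exact_mod_cast hm
  have hma := abs_pos.2 hmr
  rcases eq_or_ne n 0 with hn | hn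
  · subst hn; simp only [add_zero, zero_add]
    have e : |(m:ℝ)| * (1 / (m:ℝ) ^ 2) = 1 / |(m:ℝ)| := by
      rw [← sq_abs]; field_simp
    simp only [Int.cast_zero, abs_zero, div_zero, neg_zero, sub_zero, abs_neg]
    rw [show (1:ℝ) / 0 ^ 2 = 0 by norm_num, zero_add, e, abs_of_pos (by positivity)]
  have hnr : (n:ℝ) ≠ 0 := by exact_mod_cast hn
  have hna := abs_pos.2 hnr
  rcases eq_or_ne (m + n) 0 with hmn | hmn
  · have e1 : n = -m := by omega
    subst e1
    simp; rw [← sq_abs]; field_simp; rfl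
  have hmnr : ((n + m : ℤ):ℝ) ≠ 0 := by rw [add_comm]; exact_mod_cast hmn
  have hmna := abs_pos.2 hmnr
  rw [add_comm m n]
  set a := |(n:ℝ)| with ha
  set b := |((n + m : ℤ):ℝ)| with hb
  have hab : |b - a| ≤ |(m:ℝ)| := by
    have := abs_abs_sub_abs_le_abs_sub ((n + m : ℤ):ℝ) (n:ℝ)
    push_cast at this hb
    rw [add_sub_cancel_left] at this
    rw [hb]; exact this
  have e : -(1 / b) - -(1 / a) = (b - a) / (a * b) := by field_simp; ring
  rw [e, abs_div, abs_of_pos (mul_pos hna hmna), ← sq_abs (n:ℝ), ← sq_abs ((n + m : ℤ):ℝ), ← ha, ← hb,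
    div_eq_mul_inv]
  have h2 : (a * b)⁻¹ ≤ 1 / a ^ 2 + 1 / b ^ 2 := by
    have : 1 / a ^ 2 + 1 / b ^ 2 - (a * b)⁻¹ = ((a - b)^2 + a * b) / (a^2 * b^2) := by field_simp; ring
    have h' : 0 ≤ ((a - b)^2 + a * b) / (a^2 * b^2) := by positivity
    linarith
  gcongr

lemma summable_inv_sq : Summable fun n : ℤ => 1 / (n : ℝ) ^ 2 :=
  Real.summable_one_div_int_pow.2 (by norm_num)

lemma norm_ee_sub_one_le (m : ℤ) (x : ℝ) :
    ‖ee (-m) x - 1‖ ≤ |(m:ℝ)| * (2 * |Real.sin (Real.pi * x)|) := by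
  have hnat : ∀ n : ℕ, ‖ee (-(n:ℤ)) x - 1‖ ≤ n * (2 * |Real.sin (Real.pi * x)|) := by
    intro n
    induction n with
    | zero => simp
    | succ n ih =>
      have : ee (-((n + 1 : ℕ) : ℤ)) x - 1 = ee (-(n:ℤ)) x * (ee (-1) x - 1) + (ee (-(n:ℤ)) x - 1) := by
        have : (-((n + 1 : ℕ) : ℤ)) = -(n:ℤ) + -1 := by push_cast; ring
        rw [this, ee_add]; ring
      rw [this]
      refine (norm_add_le _ _).trans ?_
      rw [norm_mul, norm_ee, one_mul, norm_ee_one_sub]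
      push_cast; linarith
  obtain ⟨n, rfl | rfl⟩ := m.eq_nat_or_neg
  · simpa using hnat n
  · have : ee (- -(n:ℤ)) x - 1 = -ee (n:ℤ) x * (ee (-(n:ℤ)) x - 1) := by
      have : ee (n:ℤ) x * ee (-(n:ℤ)) x = 1 := by rw [← ee_add]; simp
      rw [neg_neg]; linear_combination this
    rw [this, norm_mul, norm_neg, norm_ee, one_mul]
    simpa using hnat n

/-- The desingularised kernel `log(4 sin²(πx)) (e^{-2πimx} - 1)`. -/
noncomputable def Fm (m : ℤ) (x : ℝ) : ℂ := ((lg x + Real.log 4 : ℝ) : ℂ) * (ee (-m) x - 1)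

lemma Fm_cont (m : ℤ) : Continuous (Fm m) := by
  have h := continuousOn_lg_mul (S := univ) (g := fun x => ee (-m) x - 1) (C := |(m:ℝ)| * 2)
    ((continuous_ee _).sub continuous_const).continuousOn (by
      intro x _; rw [mul_assoc]; exact norm_ee_sub_one_le m x)
  rw [continuousOn_univ] at h
  have h2 : Continuous fun x => (Real.log 4 : ℂ) * (ee (-m) x - 1) :=
    continuous_const.mul ((continuous_ee _).sub continuous_const)
  convert h.add h2 using 1
  ext x; simp only [Fm, Pi.add_apply]; push_cast; ring

lemma Fm_per (m : ℤ) : Function.Periodic (Fm m) 1 := by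
  intro x; unfold Fm; rw [lg_periodic, ee_periodic]

lemma lg4_mul_integrable {f : ℝ → ℂ} (hf : Continuous f) :
    IntervalIntegrable (fun x => ((lg x + Real.log 4 : ℝ) : ℂ) * f x) volume 0 1 := by
  have h2 : IntervalIntegrable (fun x => (Real.log 4 : ℂ) * f x) volume 0 1 :=
    (continuous_const.mul hf).intervalIntegrable _ _
  have := (lg_mul_integrable hf).add h2
  convert this using 1
  ext x; simp; ring

lemma fc_Fm (m n : ℤ) : fc (Fm m) n = ((lam (m + n) - lam n : ℝ) : ℂ) := by
  rw [fc_eq]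
  have : ∀ x, Fm m x * ee (-n) x = ((lg x + Real.log 4 : ℝ) : ℂ) * ee (-(m + n)) x
      - ((lg x + Real.log 4 : ℝ) : ℂ) * ee (-n) x := by
    intro x; rw [neg_add, ee_add, Fm]; ring
  simp only [this]
  rw [integral_sub (lg4_mul_integrable (continuous_ee _)) (lg4_mul_integrable (continuous_ee _)),
    integral_lg4_ee, integral_lg4_ee]
  push_cast; rfl

lemma Fm_summable (m : ℤ) : Summable fun n => ‖fc (Fm m) n‖ := by
  have h1 := summable_inv_sq
  have h2 : Summable fun n : ℤ => 1 / ((n + m : ℤ) : ℝ) ^ 2 :=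
    h1.comp_injective (add_left_injective m)
  refine Summable.of_nonneg_of_le (fun _ => norm_nonneg _) (fun n => ?_) ((h1.add h2).mul_left |(m:ℝ)|)
  rw [fc_Fm, Complex.norm_real]
  exact lam_diff m n

/-- Trapezoidal rule for `Fm m` on a shifted grid: by aliasing, the error is the sum of the Fourier
coefficients at the nonzero multiples of `N`. -/
lemma Fm_quad (m : ℤ) (N : ℕ) (hN : 0 < N) (s : ℝ) (hm : 2 * |(m:ℝ)| ≤ N) :
    ‖(lam m : ℂ) - (1 / (N:ℂ)) * ∑ j ∈ Finset.range N, Fm m (s - j / N)‖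
      ≤ 5 * |(m:ℝ)| / N ^ 2 * ∑' n : ℤ, 1 / (n : ℝ) ^ 2 := by
  have hNr : (0:ℝ) < N := by exact_mod_cast hN
  have hS := Fm_summable m
  have h1 : HasSum (fun n => fc (Fm m) n * (if (N : ℤ) ∣ n then ee n s else 0))
      ((1 / (N:ℂ)) * ∑ j ∈ Finset.range N, Fm m (s - j / N)) := by
    have := (hasSum_sum (s := Finset.range N) fun j _ =>
      hasSum_fc (Fm m) (Fm_cont m) (Fm_per m) hS.of_norm (s - j / N)).mul_left (1 / (N:ℂ))
    have e : (fun n => fc (Fm m) n * (if (N : ℤ) ∣ n then ee n s else 0)) = fun n =>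
        (1 / (N:ℂ)) * ∑ j ∈ Finset.range N, fc (Fm m) n * ee n (s - j / N) := by
      funext n
      rw [← disc_orth n N hN s, ← Finset.mul_sum]; ring
    rw [e]; exact this
  have hinj : Function.Injective fun l : ℤ => (N : ℤ) * l := by
    intro a b h
    exact mul_left_cancel₀ (by exact_mod_cast hN.ne') h
  have h2 := (hinj.hasSum_iff (f := fun n => fc (Fm m) n * (if (N : ℤ) ∣ n then ee n s else 0)) (by
    intro n hn
    have : ¬ (N : ℤ) ∣ n := by
      rintro ⟨k, rfl⟩; exact hn ⟨k, rfl⟩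
    simp [this])).2 h1
  have h3 := (hasSum_ite_eq (0:ℤ) (lam m : ℂ)).sub h2
  refine h3.norm_le_of_bounded (summable_inv_sq.hasSum.mul_left _) ?_
  intro l
  by_cases hl : l = 0
  · subst hl
    simp [fc_Fm, lam]
  · simp only [hl, if_false, Function.comp, dvd_mul_right, if_true, zero_sub, norm_neg, norm_mul, norm_ee,
      mul_one, fc_Fm, Complex.norm_real]
    refine (lam_diff m _).trans ?_
    have hl1 : (1:ℝ) ≤ |(l:ℝ)| := by exact_mod_cast Int.one_le_abs hl
    have hlp : 0 < |(l:ℝ)| := by linarith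
    have e1 : |(((N:ℤ) * l : ℤ) : ℝ)| = N * |(l:ℝ)| := by push_cast; rw [abs_mul, abs_of_pos hNr]
    have e2 : N * |(l:ℝ)| / 2 ≤ |(((N:ℤ) * l + m : ℤ) : ℝ)| := by
      have h := abs_sub_abs_le_abs_sub (((N:ℤ) * l : ℤ) : ℝ) (-(m:ℝ))
      rw [abs_neg, e1, sub_neg_eq_add] at h
      push_cast at h ⊢
      nlinarith
    have f1 : 1 / (((N:ℤ) * l : ℤ) : ℝ) ^ 2 = 1 / N ^ 2 * (1 / (l:ℝ) ^ 2) := by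
      push_cast; field_simp
    have f2 : 1 / (((N:ℤ) * l + m : ℤ) : ℝ) ^ 2 ≤ 4 / N ^ 2 * (1 / (l:ℝ) ^ 2) := by
      have : 4 / N ^ 2 * (1 / (l:ℝ) ^ 2) = 1 / (N * |(l:ℝ)| / 2) ^ 2 := by
        rw [← sq_abs (l:ℝ)]; field_simp; norm_num
      rw [this, ← sq_abs (((N:ℤ) * l + m : ℤ) : ℝ)]
      gcongr
    calc _ ≤ |(m:ℝ)| * (1 / N ^ 2 * (1 / (l:ℝ) ^ 2) + 4 / N ^ 2 * (1 / (l:ℝ) ^ 2)) := by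
          rw [f1]; gcongr
      _ = _ := by ring

/-- Quadrature error of one Fourier mode against the logarithmic kernel, after removing the
first-order term. Modes with `2|m| ≤ N` are controlled by aliasing, the others trivially. -/
lemma quad_mode (ε : ℝ) (hε : Real.sin (Real.pi * ε) ≠ 0) :
    ∃ C ≥ (0:ℝ), ∀ (N : ℕ), 0 < N → ∀ (i : ℕ) (m : ℤ),
      ‖(lam m : ℂ) - (1 / (N:ℂ)) * ∑ j ∈ Finset.range N,
          ((lg ((i + ε) / N - j / N) + Real.log 4 : ℝ) : ℂ) * ee (-m) ((i + ε) / N - j / N)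
        + (1 / (N:ℂ)) * ((lg ε + Real.log 4 : ℝ) : ℂ)‖ ≤ C * (1 / (N:ℝ)) ^ 2 * (m:ℝ) ^ 2 := by
  set L := lg ε + Real.log 4 with hL
  set Z := ∑' n : ℤ, 1 / (n : ℝ) ^ 2 with hZ
  have hZ0 : 0 ≤ Z := tsum_nonneg fun n => by positivity
  have hl4 : 0 < Real.log 4 := Real.log_pos (by norm_num)
  refine ⟨5 * Z + 4 * (1 + 2 * Real.log 4 + 2 * |L|), by positivity, ?_⟩
  intro N hN i m
  have hNr : (0:ℝ) < N := by exact_mod_cast hN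
  have hN1 : (1:ℝ) ≤ N := by exact_mod_cast hN
  have hNc : (N:ℂ) ≠ 0 := by exact_mod_cast hN.ne'
  set s := ((i:ℝ) + ε) / N with hs
  have hNs : (N:ℝ) * s = ε + ((i:ℤ):ℝ) := by rw [hs]; push_cast; field_simp; ring
  have hlgNs : lg (N * s) = lg ε := by unfold lg; rw [hNs, sin_sq_add_int]
  have hsin : Real.sin (Real.pi * (N * s)) ≠ 0 := by
    intro h
    have := sin_sq_add_int ε i
    rw [← hNs, h] at this
    exact hε (by simpa using this.symm)
  obtain ⟨-, hsum⟩ := log_prod N hN s hsin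
  rw [hlgNs, ← hL] at hsum
  by_cases hm : 2 * |(m:ℝ)| ≤ N
  · have hF := Fm_quad m N hN s hm
    have e : ∑ j ∈ Finset.range N, Fm m (s - j / N) = ∑ j ∈ Finset.range N,
        ((lg (s - j / N) + Real.log 4 : ℝ) : ℂ) * ee (-m) (s - j / N) - (L : ℂ) := by
      rw [← hsum, Complex.ofReal_sum, ← Finset.sum_sub_distrib]
      refine Finset.sum_congr rfl fun j _ => ?_
      rw [Fm]; ring
    rw [e, mul_sub, ← sub_add] at hF
    refine hF.trans ?_
    have hmm : |(m:ℝ)| ≤ (m:ℝ) ^ 2 := by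
      rcases eq_or_ne m 0 with h | h
      · simp [h]
      · have : (1:ℝ) ≤ |(m:ℝ)| := by exact_mod_cast Int.one_le_abs h
        rw [← sq_abs]; nlinarith
    have h9 : 0 ≤ 4 * (1 + 2 * Real.log 4 + 2 * |L|) := by positivity
    calc 5 * |(m:ℝ)| / N ^ 2 * Z = (5 * Z) * (1 / (N:ℝ)) ^ 2 * |(m:ℝ)| := by ring
      _ ≤ _ := by gcongr; linarith
  · push Not at hm
    have h1 : ‖(1 / (N:ℂ)) * ∑ j ∈ Finset.range N,
          ((lg (s - j / N) + Real.log 4 : ℝ) : ℂ) * ee (-m) (s - j / N)‖ ≤ 2 * Real.log 4 + |L| := by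
      rw [norm_mul, norm_div, norm_one, Complex.norm_natCast]
      have h2 : ‖∑ j ∈ Finset.range N,
          ((lg (s - j / N) + Real.log 4 : ℝ) : ℂ) * ee (-m) (s - j / N)‖ ≤ N * (2 * Real.log 4) - L := by
        -- `|l + log 4| ≤ 2 log 4 - (l + log 4)` since `l ≤ 0`, and the sum of `l + log 4` is known.
        refine (norm_sum_le _ _).trans ?_
        rw [← hsum]
        have : (N:ℝ) * (2 * Real.log 4) = ∑ j ∈ Finset.range N, 2 * Real.log 4 := by simp
        rw [this, ← Finset.sum_sub_distrib]
        refine Finset.sum_le_sum fun j _ => ?_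
        rw [norm_mul, norm_ee, mul_one, Complex.norm_real, Real.norm_eq_abs]
        have hle : lg (s - j / N) ≤ 0 := by
          unfold lg
          exact Real.log_nonpos (sq_nonneg _) (Real.sin_sq_le_one _)
        rw [abs_le]; constructor <;> linarith
      have h3 : N * (2 * Real.log 4) - L ≤ N * (2 * Real.log 4 + |L|) := by
        have := neg_abs_le L
        nlinarith [abs_nonneg L]
      calc _ ≤ 1 / (N:ℝ) * (N * (2 * Real.log 4 + |L|)) := by gcongr; linarith
        _ = _ := by field_simp
    have h2 : ‖(1 / (N:ℂ)) * (L : ℂ)‖ ≤ |L| := by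
      rw [norm_mul, norm_div, norm_one, Complex.norm_natCast, Complex.norm_real, Real.norm_eq_abs]
      have : 1 / (N:ℝ) ≤ 1 := by rw [div_le_one hNr]; exact hN1
      nlinarith [abs_nonneg L]
    have h3 : ‖(lam m : ℂ)‖ ≤ 1 := by rw [Complex.norm_real]; exact abs_lam_le m
    have h4 : 1 ≤ 4 * ((1 / (N:ℝ)) ^ 2 * (m:ℝ) ^ 2) := by
      rw [← sq_abs (m:ℝ)]
      have : 1 ≤ 2 * |(m:ℝ)| * (1 / N) := by
        rw [mul_one_div, le_div_iff₀ hNr]; linarith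
      nlinarith
    calc _ ≤ 1 + (2 * Real.log 4 + |L|) + |L| := by
          refine (norm_add_le _ _).trans (add_le_add ((norm_sub_le _ _).trans (add_le_add h3 h1)) h2)
      _ = (1 + 2 * Real.log 4 + 2 * |L|) * 1 := by ring
      _ ≤ (1 + 2 * Real.log 4 + 2 * |L|) * (4 * ((1 / (N:ℝ)) ^ 2 * (m:ℝ) ^ 2)) := by gcongr
      _ ≤ _ := by
        have : 0 ≤ 5 * Z * (1 / (N:ℝ)) ^ 2 * (m:ℝ) ^ 2 := by positivity
        nlinarith

/-! ### Smooth periodic functions and the corrected trapezoidal rule -/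

/-- Smooth 1-periodic functions. -/
def SP (f : ℝ → ℂ) : Prop := ContDiff ℝ (⊤ : ℕ∞) f ∧ Function.Periodic f 1

lemma SP.cont {f : ℝ → ℂ} (hf : SP f) : Continuous f := hf.1.continuous

lemma SP.hasDerivAt {f : ℝ → ℂ} (hf : SP f) (x : ℝ) : HasDerivAt f (deriv f x) x :=
  ((hf.1.differentiable (by simp)) x).hasDerivAt

lemma SP.deriv {f : ℝ → ℂ} (hf : SP f) : SP (deriv f) := by
  refine ⟨((contDiff_infty_iff_deriv (f := f)).1 hf.1).2, fun x => ?_⟩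
  rw [← deriv_comp_add_const]
  congr 1; ext y; exact hf.2 y

lemma SP.fc_deriv {f : ℝ → ℂ} (hf : SP f) (m : ℤ) :
    fc (_root_.deriv f) m = 2 * Real.pi * Complex.I * m * fc f m :=
  _root_.fc_deriv f _ hf.hasDerivAt hf.deriv.cont hf.2 m

/-- The norm of `L²(0,1)`. -/
noncomputable def nrm2 (f : ℝ → ℂ) : ℝ := Real.sqrt (∫ x in (0:ℝ)..1, ‖f x‖ ^ 2)

lemma nrm2_nonneg (f : ℝ → ℂ) : 0 ≤ nrm2 f := Real.sqrt_nonneg _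

lemma nrm2_sq (f : ℝ → ℂ) : nrm2 f ^ 2 = ∫ x in (0:ℝ)..1, ‖f x‖ ^ 2 :=
  Real.sq_sqrt (integral_nonneg zero_le_one fun _ _ => by positivity)

lemma norm_fc_deriv3 {f : ℝ → ℂ} (hf : SP f) (m : ℤ) :
    ‖fc (deriv (deriv (deriv f))) m‖ = (2 * Real.pi * |(m:ℝ)|) ^ 3 * ‖fc f m‖ := by
  rw [hf.deriv.deriv.fc_deriv, hf.deriv.fc_deriv, hf.fc_deriv]
  simp only [norm_mul, Complex.norm_ofNat, Complex.norm_real, Complex.norm_I, Real.norm_eq_abs,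
    abs_of_pos Real.pi_pos, Complex.norm_intCast]
  ring

/-- Weighted absolute summability of the Fourier coefficients, controlled by the third derivative
through Cauchy–Schwarz. -/
lemma S2_bound {f : ℝ → ℂ} (hf : SP f) :
    (Summable fun m : ℤ => (m:ℝ) ^ 2 * ‖fc f m‖) ∧
    ∑' m : ℤ, (m:ℝ) ^ 2 * ‖fc f m‖
      ≤ Real.sqrt (∑' n : ℤ, 1 / (n : ℝ) ^ 2) * nrm2 (deriv (deriv (deriv f))) := by
  have hP := parseval _ hf.deriv.deriv.deriv.cont
  have hs1 : Summable fun m : ℤ => (1 / |(m:ℝ)|) ^ (2:ℝ) := by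
    refine summable_inv_sq.congr fun m => ?_
    rw [Real.rpow_two, div_pow, sq_abs, one_pow]
  have hs2 : Summable fun m : ℤ => ‖fc (deriv (deriv (deriv f))) m‖ ^ (2:ℝ) := by
    refine hP.summable.congr fun m => ?_
    rw [Real.rpow_two]
  have key := Real.summable_and_inner_le_Lp_mul_Lq_tsum_of_nonneg
    (p := 2) (q := 2) Real.HolderConjugate.two_two
    (f := fun m : ℤ => 1 / |(m:ℝ)|) (g := fun m : ℤ => ‖fc (deriv (deriv (deriv f))) m‖)
    (fun m => by positivity) (fun m => norm_nonneg _) hs1 hs2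
  have hle : ∀ m : ℤ, (m:ℝ) ^ 2 * ‖fc f m‖ ≤ 1 / |(m:ℝ)| * ‖fc (deriv (deriv (deriv f))) m‖ := by
    intro m
    rcases eq_or_ne m 0 with h | h
    · subst h; simp
    · have hm : 0 < |(m:ℝ)| := abs_pos.2 (by exact_mod_cast h)
      rw [norm_fc_deriv3 hf, ← sq_abs (m:ℝ)]
      have : 1 / |(m:ℝ)| * ((2 * Real.pi * |(m:ℝ)|) ^ 3 * ‖fc f m‖)
        = (2 * Real.pi) ^ 3 * (|(m:ℝ)| ^ 2 * ‖fc f m‖) := by field_simp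
      rw [this]
      have h1 : 1 ≤ (2 * Real.pi) ^ 3 := one_le_pow₀ (by linarith [Real.two_le_pi])
      exact le_mul_of_one_le_left (by positivity) h1
  have hsum : Summable fun m : ℤ => (m:ℝ) ^ 2 * ‖fc f m‖ :=
    Summable.of_nonneg_of_le (fun m => by positivity) hle key.1
  refine ⟨hsum, (hsum.tsum_le_tsum hle key.1).trans (key.2.trans (le_of_eq ?_))⟩
  rw [Real.sqrt_eq_rpow, nrm2, Real.sqrt_eq_rpow, ← hP.tsum_eq]
  congr 2
  · refine tsum_congr fun m => ?_
    rw [Real.rpow_two, div_pow, sq_abs, one_pow]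
  · refine tsum_congr fun m => ?_
    rw [Real.rpow_two]

lemma norm_fc_le_ite {f : ℝ → ℂ} (m : ℤ) :
    ‖fc f m‖ ≤ (if m = 0 then ‖fc f 0‖ else 0) + (m:ℝ) ^ 2 * ‖fc f m‖ := by
  split_ifs with h
  · subst h; simp
  · have : (1:ℝ) ≤ |(m:ℝ)| := by exact_mod_cast Int.one_le_abs h
    rw [← sq_abs]; nlinarith [norm_nonneg (fc f m), one_le_pow₀ this (n := 2)]

lemma SP.summable_norm_fc {f : ℝ → ℂ} (hf : SP f) : Summable fun m => ‖fc f m‖ :=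
  Summable.of_nonneg_of_le (fun _ => norm_nonneg _) norm_fc_le_ite
    ((hasSum_ite_eq (0:ℤ) ‖fc f 0‖).summable.add (S2_bound hf).1)

lemma SP.hasSum {f : ℝ → ℂ} (hf : SP f) (x : ℝ) : HasSum (fun m => fc f m * ee m x) (f x) :=
  hasSum_fc f hf.cont hf.2 hf.summable_norm_fc.of_norm x

lemma lg4_shift {f : ℝ → ℂ} (hf : SP f) (s : ℝ) :
    ∫ t in (0:ℝ)..1, ((lg (s - t) + Real.log 4 : ℝ) : ℂ) * f t
      = ∫ x in (0:ℝ)..1, ((lg x + Real.log 4 : ℝ) : ℂ) * f (s - x) := by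
  rw [← integral_shift (fun x => ((lg x + Real.log 4 : ℝ) : ℂ) * f (s - x)) ?_ s]
  · simp
  · intro x
    simp only
    rw [lg_periodic, show s - (x + 1) = s - x - 1 by ring, hf.2.sub_eq]

/-- Convolution with `log(4 sin²(π·))` is the Fourier multiplier `lam`. -/
lemma conv_lg4 {f : ℝ → ℂ} (hf : SP f) (s : ℝ) :
    HasSum (fun m => fc f m * lam m * ee m s)
      (∫ x in (0:ℝ)..1, ((lg x + Real.log 4 : ℝ) : ℂ) * f (s - x)) := by
  have hInt : ∀ m, IntegrableOn (fun x => fc f m * ee m s *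
      (((lg x + Real.log 4 : ℝ) : ℂ) * ee (-m) x)) (Ioc (0:ℝ) 1) := fun m =>
    ((intervalIntegrable_iff_integrableOn_Ioc_of_le zero_le_one).1
      (lg4_mul_integrable (continuous_ee (-m)))).const_mul _
  have key := hasSum_integral_of_summable_integral_norm (μ := volume.restrict (Ioc (0:ℝ) 1))
    (F := fun m x => fc f m * ee m s * (((lg x + Real.log 4 : ℝ) : ℂ) * ee (-m) x)) hInt (by
      simp only [norm_mul, norm_ee, mul_one, MeasureTheory.integral_const_mul]
      exact hf.summable_norm_fc.mul_right _)
  rw [integral_of_le zero_le_one]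
  have e1 : (fun m => fc f m * lam m * ee m s) = fun m => ∫ x in Ioc (0:ℝ) 1,
      fc f m * ee m s * (((lg x + Real.log 4 : ℝ) : ℂ) * ee (-m) x) := by
    funext m
    rw [MeasureTheory.integral_const_mul, ← integral_of_le zero_le_one, integral_lg4_ee]; ring
  have e2 : (fun x => ((lg x + Real.log 4 : ℝ) : ℂ) * f (s - x)) = fun x =>
      ∑' m, fc f m * ee m s * (((lg x + Real.log 4 : ℝ) : ℂ) * ee (-m) x) := by
    funext x
    have h := (hf.hasSum (s - x)).mul_left ((lg x + Real.log 4 : ℝ) : ℂ)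
    rw [← h.tsum_eq]
    refine tsum_congr fun m => ?_
    rw [sub_eq_add_neg, ee_add_arg, ee_neg_arg]; ring
  rw [e1, e2]; exact key

/-- Corrected trapezoidal rule for `log(4 sin²)` on a shifted grid. -/
lemma quad_lg4 (ε : ℝ) (hε : Real.sin (Real.pi * ε) ≠ 0) :
    ∃ C ≥ (0:ℝ), ∀ f, SP f → ∀ (N : ℕ), 0 < N → ∀ (i : ℕ),
      ‖(∫ t in (0:ℝ)..1, ((lg ((i + ε) / N - t) + Real.log 4 : ℝ) : ℂ) * f t)
        - (1 / (N:ℂ)) * ∑ j ∈ Finset.range N,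
          ((lg ((i + ε) / N - j / N) + Real.log 4 : ℝ) : ℂ) * f (j / N)
        + (1 / (N:ℂ)) * ((lg ε + Real.log 4 : ℝ) : ℂ) * f ((i + ε) / N)‖
      ≤ C * (1 / (N:ℝ)) ^ 2 * nrm2 (deriv (deriv (deriv f))) := by
  obtain ⟨C, hC, h⟩ := quad_mode ε hε
  refine ⟨C * Real.sqrt (∑' n : ℤ, 1 / (n : ℝ) ^ 2), by positivity, ?_⟩
  intro f hf N hN i
  specialize h N hN i
  set s := ((i:ℝ) + ε) / N with hs
  rw [lg4_shift hf]
  have h1 := conv_lg4 hf s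
  have h2 := (hasSum_sum (s := Finset.range N) fun j _ =>
      (hf.hasSum (j / N)).mul_left ((lg (s - j / N) + Real.log 4 : ℝ) : ℂ)).mul_left (1 / (N:ℂ))
  have h3 := (hf.hasSum s).mul_left ((1 / (N:ℂ)) * ((lg ε + Real.log 4 : ℝ) : ℂ))
  have h4 := (h1.sub h2).add h3
  obtain ⟨hs1, hs2⟩ := S2_bound hf
  refine (h4.norm_le_of_bounded (hs1.hasSum.mul_left (C * (1 / (N:ℝ)) ^ 2)) fun m => ?_).trans ?_
  · have e : fc f m * lam m * ee m s
        - 1 / (N:ℂ) * ∑ j ∈ Finset.range N,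
          ((lg (s - j / N) + Real.log 4 : ℝ) : ℂ) * (fc f m * ee m (j / N))
        + 1 / (N:ℂ) * ((lg ε + Real.log 4 : ℝ) : ℂ) * (fc f m * ee m s)
        = fc f m * ee m s * ((lam m : ℂ) - (1 / (N:ℂ)) * ∑ j ∈ Finset.range N,
          ((lg (s - j / N) + Real.log 4 : ℝ) : ℂ) * ee (-m) (s - j / N)
        + (1 / (N:ℂ)) * ((lg ε + Real.log 4 : ℝ) : ℂ)) := by
      have e2 : ∑ j ∈ Finset.range N,
          ((lg (s - j / N) + Real.log 4 : ℝ) : ℂ) * (fc f m * ee m (j / N))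
          = fc f m * ee m s * ∑ j ∈ Finset.range N,
          ((lg (s - j / N) + Real.log 4 : ℝ) : ℂ) * ee (-m) (s - j / N) := by
        rw [Finset.mul_sum]
        refine Finset.sum_congr rfl fun j _ => ?_
        have e3 : ee m s * ee (-m) (s - j / N) = ee m (j / N) := by
          rw [← ee_neg_arg, ← ee_add_arg]; congr 1; ring
        rw [← e3]; ring
      rw [e2]; ring
    rw [e, norm_mul, norm_mul, norm_ee, mul_one]
    calc _ ≤ ‖fc f m‖ * (C * (1 / (N:ℝ)) ^ 2 * (m:ℝ) ^ 2) := by gcongr; exact h m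
      _ = _ := by ring
  · calc _ ≤ C * (1 / (N:ℝ)) ^ 2 * (Real.sqrt (∑' n : ℤ, 1 / (n : ℝ) ^ 2)
          * nrm2 (deriv (deriv (deriv f)))) := by gcongr
      _ = _ := by ring

lemma fc_zero (f : ℝ → ℂ) : fc f 0 = ∫ t in (0:ℝ)..1, f t := by
  rw [fc_eq]; simp

/-- Trapezoidal rule for smooth periodic functions. -/
lemma quad_one {f : ℝ → ℂ} (hf : SP f) (N : ℕ) (hN : 0 < N) :
    ‖(∫ t in (0:ℝ)..1, f t) - (1 / (N:ℂ)) * ∑ j ∈ Finset.range N, f (j / N)‖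
      ≤ Real.sqrt (∑' n : ℤ, 1 / (n : ℝ) ^ 2) * (1 / (N:ℝ)) ^ 2 * nrm2 (deriv (deriv (deriv f))) := by
  have hNr : (0:ℝ) < N := by exact_mod_cast hN
  have h1 := hasSum_ite_eq (0:ℤ) (∫ t in (0:ℝ)..1, f t)
  have h2 := (hasSum_sum (s := Finset.range N) fun j _ => hf.hasSum (j / N)).mul_left (1 / (N:ℂ))
  obtain ⟨hs1, hs2⟩ := S2_bound hf
  refine ((h1.sub h2).norm_le_of_bounded (hs1.hasSum.mul_left ((1 / (N:ℝ)) ^ 2)) fun m => ?_).trans ?_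
  · have e : 1 / (N:ℂ) * ∑ j ∈ Finset.range N, fc f m * ee m (j / N)
        = fc f m * (if (N:ℤ) ∣ -m then 1 else 0) := by
      have := disc_orth (-m) N hN 0
      simp only [zero_sub, ee_neg_arg, neg_neg, ee_zero_arg] at this
      rw [← this, ← Finset.mul_sum]; ring
    rw [e]
    rcases eq_or_ne m 0 with h | h
    · subst h; simp [fc_zero]
    · simp only [h, if_false, zero_sub, norm_neg, norm_mul]
      split_ifs with hd
      · have h3 : (N:ℝ) ≤ |(m:ℝ)| := by
          have := Int.le_of_dvd (abs_pos.2 h) ((dvd_abs (N:ℤ) m).2 ((dvd_neg).1 hd))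
          exact_mod_cast this
        have h4 : 1 ≤ (1 / (N:ℝ)) ^ 2 * (m:ℝ) ^ 2 := by
          rw [← mul_pow, one_div_mul_eq_div, ← sq_abs, abs_div, abs_of_pos hNr]
          exact one_le_pow₀ ((one_le_div hNr).2 h3)
        rw [norm_one, mul_one, ← mul_assoc]
        exact le_mul_of_one_le_left (norm_nonneg _) h4
      · simp; positivity
  · calc _ ≤ (1 / (N:ℝ)) ^ 2 * (Real.sqrt (∑' n : ℤ, 1 / (n : ℝ) ^ 2)
          * nrm2 (deriv (deriv (deriv f)))) := by gcongr
      _ = _ := by ring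

/-! ### Sobolev bounds and convolution with the logarithm -/

lemma norm_fc_deriv {f : ℝ → ℂ} (hf : SP f) (m : ℤ) :
    ‖fc (deriv f) m‖ = 2 * Real.pi * |(m:ℝ)| * ‖fc f m‖ := by
  rw [hf.fc_deriv]
  simp only [norm_mul, Complex.norm_ofNat, Complex.norm_real, Complex.norm_I, Real.norm_eq_abs,
    abs_of_pos Real.pi_pos, Complex.norm_intCast, mul_one]

/-- Poincaré inequality. -/
lemma poincare {f : ℝ → ℂ} (hf : SP f) : nrm2 f ≤ ‖fc f 0‖ + nrm2 (deriv f) := by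
  have h1 := parseval f hf.cont
  have h2 := parseval _ hf.deriv.cont
  have h3 : nrm2 f ^ 2 ≤ ‖fc f 0‖ ^ 2 + nrm2 (deriv f) ^ 2 := by
    rw [nrm2_sq, nrm2_sq]
    refine hasSum_le (fun m => ?_) h1 ((hasSum_ite_eq (0:ℤ) (‖fc f 0‖ ^ 2)).add h2)
    rw [norm_fc_deriv hf]
    split_ifs with h
    · subst h; simp
    · have : (1:ℝ) ≤ |(m:ℝ)| := by exact_mod_cast Int.one_le_abs h
      have h5 : 1 ≤ 2 * Real.pi * |(m:ℝ)| := by nlinarith [Real.two_le_pi]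
      rw [zero_add]
      gcongr
      exact le_mul_of_one_le_left (norm_nonneg _) h5
  refine abs_le_of_sq_le_sq' ?_ (add_nonneg (norm_nonneg _) (nrm2_nonneg _)) |>.2
  nlinarith [norm_nonneg (fc f 0), nrm2_nonneg (deriv f)]

/-- Poincaré inequality for derivatives, whose mean vanishes. -/
lemma poincare' {f : ℝ → ℂ} (hf : SP f) : nrm2 (deriv f) ≤ nrm2 (deriv (deriv f)) := by
  have h := poincare hf.deriv
  rw [hf.fc_deriv] at h
  simpa using h

lemma sob_bounds {φ : ℝ → ℂ} (hf : SP φ) :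
    ‖fc φ 0‖ ≤ sobNorm 3 φ ∧
    nrm2 (deriv (deriv (deriv φ))) ≤ (2 * Real.pi) ^ 3 * sobNorm 3 φ := by
  have hP := parseval _ hf.deriv.deriv.deriv.cont
  have e : ∀ m : ℤ, (if m = 0 then (0:ℝ) else |(m : ℝ)| ^ (2 * (3:ℝ)) * ‖fc φ m‖ ^ 2)
      = ((2 * Real.pi) ^ 6)⁻¹ * ‖fc (deriv (deriv (deriv φ))) m‖ ^ 2 := by
    intro m
    rw [norm_fc_deriv3 hf]
    have : |(m:ℝ)| ^ (2 * (3:ℝ)) = |(m:ℝ)| ^ 6 := by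
      rw [show (2 * (3:ℝ)) = ((6:ℕ):ℝ) by norm_num, Real.rpow_natCast]
    rw [this]
    have hp := Real.pi_pos
    split_ifs with h
    · subst h; simp
    · field_simp
  have hT : sobNorm 3 φ ^ 2 = ‖fc φ 0‖ ^ 2
      + ((2 * Real.pi) ^ 6)⁻¹ * nrm2 (deriv (deriv (deriv φ))) ^ 2 := by
    unfold sobNorm
    simp only [e]
    rw [tsum_mul_left, hP.tsum_eq, nrm2_sq, Real.sq_sqrt]
    have : 0 ≤ ∫ x in (0:ℝ)..1, ‖deriv (deriv (deriv φ)) x‖ ^ 2 :=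
      integral_nonneg zero_le_one fun _ _ => by positivity
    positivity
  have h0 : 0 ≤ sobNorm 3 φ := Real.sqrt_nonneg _
  have hp := Real.pi_pos
  constructor
  · refine (abs_le_of_sq_le_sq' ?_ h0).2
    rw [hT]; have : 0 ≤ ((2 * Real.pi) ^ 6)⁻¹ * nrm2 (deriv (deriv (deriv φ))) ^ 2 := by positivity
    linarith
  · refine (abs_le_of_sq_le_sq' ?_ (by positivity)).2
    rw [mul_pow, hT, mul_add, ← mul_assoc]
    have : ((2 * Real.pi) ^ 3) ^ 2 * ((2 * Real.pi) ^ 6)⁻¹ = 1 := by field_simp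
    rw [this, one_mul]
    have : 0 ≤ ((2 * Real.pi) ^ 3) ^ 2 * ‖fc φ 0‖ ^ 2 := by positivity
    linarith

/-- The norms controlled by the third-order Sobolev norm. -/
lemma sobolev : ∃ C ≥ (0:ℝ), ∀ φ, SP φ →
    nrm2 φ ≤ C * sobNorm 3 φ ∧ nrm2 (deriv φ) ≤ C * sobNorm 3 φ ∧
    nrm2 (deriv (deriv φ)) ≤ C * sobNorm 3 φ ∧
    nrm2 (deriv (deriv (deriv φ))) ≤ C * sobNorm 3 φ ∧
    (∀ x, ‖φ x‖ ≤ C * sobNorm 3 φ) ∧ (∀ x, ‖deriv φ x‖ ≤ C * sobNorm 3 φ) := by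
  set Z := Real.sqrt (∑' n : ℤ, 1 / (n : ℝ) ^ 2) with hZ
  have hZ0 : 0 ≤ Z := Real.sqrt_nonneg _
  have hp := Real.pi_pos
  set D := (2 * Real.pi) ^ 3 with hD
  have hD0 : 0 ≤ D := by positivity
  refine ⟨1 + D + Z * D + 2 * Real.pi * (Z * D), by positivity, fun φ hf => ?_⟩
  obtain ⟨h0, h3⟩ := sob_bounds hf
  set S := sobNorm 3 φ with hS
  have hS0 : 0 ≤ S := Real.sqrt_nonneg _
  have h2 := poincare' hf.deriv
  have h1 := poincare' hf
  have h00 := poincare hf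
  obtain ⟨hs1, hs2⟩ := S2_bound hf
  have hs3 : ∑' m : ℤ, (m:ℝ) ^ 2 * ‖fc φ m‖ ≤ Z * D * S := by
    refine hs2.trans ?_
    rw [mul_assoc]; gcongr
  have hDS : 0 ≤ D * S := by positivity
  have hZDS : 0 ≤ Z * D * S := by positivity
  have hpZ : 0 ≤ 2 * Real.pi * (Z * D) * S := by positivity
  have hsup : ∀ x, ‖φ x‖ ≤ S + Z * D * S := by
    intro x
    refine ((hf.hasSum x).norm_le_of_bounded
      ((hasSum_ite_eq (0:ℤ) ‖fc φ 0‖).add hs1.hasSum) fun m => ?_).trans (add_le_add h0 hs3)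
    rw [norm_mul, norm_ee, mul_one]; exact norm_fc_le_ite m
  have hsup' : ∀ x, ‖deriv φ x‖ ≤ 2 * Real.pi * (Z * D) * S := by
    intro x
    refine ((hf.deriv.hasSum x).norm_le_of_bounded
      (hs1.hasSum.mul_left (2 * Real.pi)) fun m => ?_).trans ?_
    · rw [norm_mul, norm_ee, mul_one, norm_fc_deriv hf, mul_assoc]
      gcongr
      rcases eq_or_ne m 0 with h | h
      · simp [h]
      · have : (1:ℝ) ≤ |(m:ℝ)| := by exact_mod_cast Int.one_le_abs h
        rw [← sq_abs]; nlinarith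
    · calc _ ≤ 2 * Real.pi * (Z * D * S) := by gcongr
        _ = _ := by ring
  have e : (1 + D + Z * D + 2 * Real.pi * (Z * D)) * S
    = S + D * S + Z * D * S + 2 * Real.pi * (Z * D) * S := by ring
  rw [e]
  refine ⟨by linarith, by linarith, by linarith, by linarith, fun x => ?_, fun x => ?_⟩
  · linarith [hsup x]
  · linarith [hsup' x]

/-- Convolving a derivative with `log sin²` loses no derivative in `L²`. -/
lemma conv_lg_deriv {f : ℝ → ℂ} (hf : SP f) :
    Continuous (fun s => ∫ x in (0:ℝ)..1, (lg x : ℂ) * deriv f (s - x)) ∧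
    Function.Periodic (fun s => ∫ x in (0:ℝ)..1, (lg x : ℂ) * deriv f (s - x)) 1 ∧
    nrm2 (fun s => ∫ x in (0:ℝ)..1, (lg x : ℂ) * deriv f (s - x)) ≤ 2 * Real.pi * nrm2 f := by
  have hp := Real.pi_pos
  have h0 : ∀ s, ∫ x in (0:ℝ)..1, deriv f (s - x) = 0 := by
    intro s
    rw [integral_shift _ hf.deriv.2, ← fc_zero, hf.fc_deriv]; simp
  have h1 : ∀ s, HasSum (fun m => fc (deriv f) m * lam m * ee m s)
      (∫ x in (0:ℝ)..1, (lg x : ℂ) * deriv f (s - x)) := by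
    intro s
    have h := conv_lg4 hf.deriv s
    have hc : Continuous fun x => deriv f (s - x) := hf.deriv.cont.comp (by fun_prop)
    have e : ∫ x in (0:ℝ)..1, ((lg x + Real.log 4 : ℝ) : ℂ) * deriv f (s - x)
        = ∫ x in (0:ℝ)..1, (lg x : ℂ) * deriv f (s - x) := by
      have e1 : ∀ x, ((lg x + Real.log 4 : ℝ) : ℂ) * deriv f (s - x)
        = (lg x : ℂ) * deriv f (s - x) + (Real.log 4 : ℂ) * deriv f (s - x) := by
        intro x; push_cast; ring
      simp only [e1]
      have hi2 : IntervalIntegrable (fun x => (Real.log 4 : ℂ) * deriv f (s - x)) volume 0 1 :=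
        (continuous_const.mul hc).intervalIntegrable _ _
      rw [integral_add (lg_mul_integrable hc) hi2,
        intervalIntegral.integral_const_mul, h0]; simp
    rw [e] at h; exact h
  have hle : ∀ m, ‖fc (deriv f) m * lam m‖ ≤ 2 * Real.pi * ‖fc f m‖ := by
    intro m
    rw [norm_mul, norm_fc_deriv hf, Complex.norm_real, lam, norm_neg, norm_div, norm_one,
      Real.norm_eq_abs, abs_abs]
    rcases eq_or_ne m 0 with h | h
    · subst h; simp; positivity
    · have hm : 0 < |(m:ℝ)| := abs_pos.2 (by exact_mod_cast h)
      apply le_of_eq; field_simp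
  have hsum : Summable fun m => ‖fc (deriv f) m * lam m‖ :=
    Summable.of_nonneg_of_le (fun _ => norm_nonneg _) hle (hf.summable_norm_fc.mul_left _)
  have hcont : Continuous (fun s => ∫ x in (0:ℝ)..1, (lg x : ℂ) * deriv f (s - x)) := by
    have : (fun s => ∫ x in (0:ℝ)..1, (lg x : ℂ) * deriv f (s - x))
        = fun s => ∑' m, fc (deriv f) m * lam m * ee m s := by
      funext s; exact (h1 s).tsum_eq.symm
    rw [this]
    refine continuous_tsum (fun m => continuous_const.mul (continuous_ee m)) hsum fun m s => ?_
    rw [norm_mul, norm_ee, mul_one]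
  refine ⟨hcont, ?_, ?_⟩
  · intro s
    simp only
    congr 1; funext x
    rw [show s + 1 - x = s - x + 1 by ring, hf.deriv.2]
  · have hq := parseval _ hcont
    have hf2 := (parseval _ hf.cont).mul_left ((2 * Real.pi) ^ 2)
    refine (abs_le_of_sq_le_sq' ?_ (mul_nonneg (by positivity) (nrm2_nonneg _))).2
    rw [mul_pow, nrm2_sq, nrm2_sq]
    refine hasSum_le (fun m => ?_) hq hf2
    rw [fc_of_hasSum _ _ hsum h1, ← mul_pow]
    gcongr
    exact hle m

lemma nrm2_shift {f : ℝ → ℂ} (hf : SP f) (s : ℝ) :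
    ∫ x in (0:ℝ)..1, ‖f (s - x)‖ ^ 2 = nrm2 f ^ 2 := by
  rw [nrm2_sq]
  exact integral_shift (fun x => ‖f x‖ ^ 2) (fun x => by simp only [hf.2 x]) s

/-- Cauchy–Schwarz on the unit interval. -/
lemma integral_cs {u v : ℝ → ℝ} (hu : AEStronglyMeasurable u (volume.restrict (Ioc (0:ℝ) 1)))
    (hu2 : IntervalIntegrable (fun x => u x ^ 2) volume 0 1) (hv : Continuous v)
    (hu0 : ∀ x, 0 ≤ u x) (hv0 : ∀ x, 0 ≤ v x) :
    ∫ x in (0:ℝ)..1, u x * v x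
      ≤ Real.sqrt (∫ x in (0:ℝ)..1, u x ^ 2) * Real.sqrt (∫ x in (0:ℝ)..1, v x ^ 2) := by
  rw [intervalIntegrable_iff_integrableOn_Ioc_of_le zero_le_one] at hu2
  have hv2 : IntegrableOn (fun x => v x ^ 2) (Ioc (0:ℝ) 1) :=
    ((hv.pow 2).integrableOn_Icc).mono_set Ioc_subset_Icc_self
  have h := integral_mul_le_Lp_mul_Lq_of_nonneg (μ := volume.restrict (Ioc (0:ℝ) 1))
    Real.HolderConjugate.two_two
    (Eventually.of_forall hu0) (Eventually.of_forall hv0)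
    (by simpa using (memLp_two_iff_integrable_sq hu).2 hu2)
    (by simpa using (memLp_two_iff_integrable_sq hv.aestronglyMeasurable).2 hv2)
  simp only [integral_of_le zero_le_one, Real.sqrt_eq_rpow]
  simpa using h

/-- `L²` size of the logarithmic kernel. -/
noncomputable def Lg : ℝ := Real.sqrt (∫ x in (0:ℝ)..1, |lg x| ^ 2)

lemma Lg_nonneg : 0 ≤ Lg := Real.sqrt_nonneg _

/-- Pointwise bound for a logarithmic potential, by Cauchy–Schwarz and `lg ∈ L²(0,1)`. -/
lemma conv_lg_bound {f : ℝ → ℂ} (hf : SP f) (s : ℝ) {B : ℝ → ℂ} {M : ℝ} (hB : Continuous B)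
    (hM : ∀ x ∈ Icc (0:ℝ) 1, ‖B x‖ ≤ M) :
    ‖∫ x in (0:ℝ)..1, (lg x : ℂ) * (B x * f (s - x))‖ ≤ M * Lg * nrm2 f := by
  have hc : Continuous fun x => f (s - x) := hf.cont.comp (by fun_prop)
  have hM0 : 0 ≤ M := (norm_nonneg _).trans (hM 0 (by simp))
  have hcs := integral_cs (u := fun x => |lg x|) (v := fun x => ‖f (s - x)‖)
    (measurable_lg.abs.aestronglyMeasurable) (by simpa using lg_sq_integrable) hc.norm
    (fun _ => abs_nonneg _) (fun _ => norm_nonneg _)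
  have hi : IntervalIntegrable (fun x => |lg x| * ‖f (s - x)‖) volume 0 1 := by
    have := (lg_mul_integrable hc).norm
    simpa using this
  calc _ ≤ ∫ x in (0:ℝ)..1, ‖(lg x : ℂ) * (B x * f (s - x))‖ :=
        norm_integral_le_integral_norm zero_le_one
    _ ≤ ∫ x in (0:ℝ)..1, M * (|lg x| * ‖f (s - x)‖) := by
        refine integral_mono_on zero_le_one (lg_mul_integrable (hB.mul hc)).norm (hi.const_mul M) ?_
        intro x hx
        rw [norm_mul, norm_mul, Complex.norm_real, Real.norm_eq_abs]
        have := hM x hx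
        calc |lg x| * (‖B x‖ * ‖f (s - x)‖) ≤ |lg x| * (M * ‖f (s - x)‖) := by gcongr
          _ = _ := by ring
    _ = M * ∫ x in (0:ℝ)..1, |lg x| * ‖f (s - x)‖ := intervalIntegral.integral_const_mul _ _
    _ ≤ M * (Lg * nrm2 f) := by
        gcongr
        refine hcs.trans (le_of_eq ?_)
        rw [nrm2_shift hf, Real.sqrt_sq (nrm2_nonneg f)]; rfl
    _ = _ := by ring

lemma conv_bound {f : ℝ → ℂ} (hf : SP f) (s : ℝ) :
    ∫ x in (0:ℝ)..1, ‖f (s - x)‖ ≤ nrm2 f := by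
  have hc : Continuous fun x => f (s - x) := hf.cont.comp (by fun_prop)
  have hcs := integral_cs (u := fun x => 1) (v := fun x => ‖f (s - x)‖)
    aestronglyMeasurable_const (by simp) hc.norm
    (fun _ => zero_le_one) (fun _ => norm_nonneg _)
  rw [nrm2_shift hf, Real.sqrt_sq (nrm2_nonneg f)] at hcs
  simpa using hcs

/-! ### Jointly smooth kernels and differentiation under the integral -/

/-- Jointly smooth functions of two real variables, in curried form. -/
def JS (H : ℝ → ℝ → ℂ) : Prop := ContDiff ℝ (⊤ : ℕ∞) (fun p : ℝ × ℝ => H p.1 p.2)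

/-- Partial derivative in the first variable. -/
noncomputable def Ds (H : ℝ → ℝ → ℂ) (s x : ℝ) : ℂ := deriv (fun s => H s x) s

/-- Partial derivative in the second variable. -/
noncomputable def Dx (H : ℝ → ℝ → ℂ) (s x : ℝ) : ℂ := deriv (fun x => H s x) x

lemma JS.cont {H : ℝ → ℝ → ℂ} (h : JS H) : Continuous (fun p : ℝ × ℝ => H p.1 p.2) :=
  ContDiff.continuous h

lemma JS.cont_right {H : ℝ → ℝ → ℂ} (h : JS H) (s : ℝ) : Continuous (H s) :=
  h.cont.comp (g := fun p : ℝ × ℝ => H p.1 p.2) (f := fun x => (s, x)) (by fun_prop)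

lemma JS.comp {H : ℝ → ℝ → ℂ} (h : JS H) {a b : ℝ × ℝ → ℝ} (ha : ContDiff ℝ (⊤ : ℕ∞) a)
    (hb : ContDiff ℝ (⊤ : ℕ∞) b) : ContDiff ℝ (⊤ : ℕ∞) (fun p => H (a p) (b p)) :=
  ContDiff.comp (g := fun p : ℝ × ℝ => H p.1 p.2) h (ha.prodMk hb)

lemma JS.right {H : ℝ → ℝ → ℂ} (h : JS H) (s : ℝ) : ContDiff ℝ (⊤ : ℕ∞) (H s) :=
  ContDiff.comp (g := fun p : ℝ × ℝ => H p.1 p.2) (f := fun x => (s, x)) h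
    (contDiff_const.prodMk contDiff_id)

lemma JS.hasDerivAt_aux {H : ℝ → ℝ → ℂ} (h : JS H) (s x : ℝ) :
    HasDerivAt (fun s => H s x) (fderiv ℝ (fun p : ℝ × ℝ => H p.1 p.2) (s, x) (1, 0)) s := by
  have h1 : HasFDerivAt (fun p : ℝ × ℝ => H p.1 p.2) _ (s, x) :=
    ((ContDiff.differentiable h (by simp)) (s, x)).hasFDerivAt
  exact h1.comp_hasDerivAt (f := fun s => (s, x)) s ((hasDerivAt_id s).prodMk (hasDerivAt_const s x))

lemma JS.hasDerivAt {H : ℝ → ℝ → ℂ} (h : JS H) (s x : ℝ) :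
    HasDerivAt (fun s => H s x) (Ds H s x) s :=
  (h.hasDerivAt_aux s x).differentiableAt.hasDerivAt

lemma JS.Ds {H : ℝ → ℝ → ℂ} (h : JS H) : JS (Ds H) := by
  have : (fun p : ℝ × ℝ => _root_.Ds H p.1 p.2)
      = fun p => fderiv ℝ (fun p : ℝ × ℝ => H p.1 p.2) p (1, 0) := by
    funext p; exact (h.hasDerivAt_aux p.1 p.2).deriv
  unfold JS
  rw [this]
  exact (ContDiff.fderiv_right (m := (⊤ : ℕ∞)) h (by simp)).clm_apply contDiff_const

lemma JS.swap {H : ℝ → ℝ → ℂ} (h : JS H) : JS (fun s x => H x s) :=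
  h.comp contDiff_snd contDiff_fst

lemma JS.hasDerivAt_x {H : ℝ → ℝ → ℂ} (h : JS H) (s x : ℝ) :
    HasDerivAt (H s) (Dx H s x) x := h.swap.hasDerivAt x s

lemma JS.Dx {H : ℝ → ℝ → ℂ} (h : JS H) : JS (Dx H) := h.swap.Ds.swap

/-- Smooth functions are bounded on bounded squares. -/
lemma JS.bound {H : ℝ → ℝ → ℂ} (h : JS H) (R : ℝ) :
    ∃ M ≥ (0:ℝ), ∀ s x, |s| ≤ R → |x| ≤ R → ‖H s x‖ ≤ M := by
  obtain ⟨M, hM⟩ := ((isCompact_Icc (a := -R) (b := R)).prod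
    (isCompact_Icc (a := -R) (b := R))).exists_bound_of_continuousOn h.cont.continuousOn
  refine ⟨max M 0, le_max_right _ _, fun s x hs hx => (hM (s, x) ⟨abs_le.1 hs, abs_le.1 hx⟩).trans
    (le_max_left _ _)⟩

/-- Differentiation under the integral sign. -/
lemma hasDerivAt_param {w : ℝ → ℂ} (hw : IntervalIntegrable w volume 0 1) {H : ℝ → ℝ → ℂ}
    (h : JS H) (s : ℝ) :
    HasDerivAt (fun s => ∫ x in (0:ℝ)..1, w x * H s x) (∫ x in (0:ℝ)..1, w x * Ds H s x) s := by
  obtain ⟨M, hM0, hM⟩ := h.Ds.bound (|s| + 1)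
  have hi : ∀ {G : ℝ → ℝ → ℂ}, JS G → ∀ s, IntervalIntegrable (fun x => w x * G s x) volume 0 1 :=
    fun hG s => hw.mul_continuousOn (hG.cont_right s).continuousOn
  refine (intervalIntegral.hasDerivAt_integral_of_dominated_loc_of_deriv_le (F := fun s x => w x * H s x)
    (F' := fun s x => w x * Ds H s x) (bound := fun x => ‖w x‖ * M) (s := Metric.ball s 1)
    (Metric.ball_mem_nhds s one_pos) (Eventually.of_forall fun s' => (hi h s').def'.aestronglyMeasurable)
    (hi h s) (hi h.Ds s).def'.aestronglyMeasurable ?_ (hw.norm.mul_const M) ?_).2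
  · refine Eventually.of_forall fun x hx s' hs' => ?_
    rw [uIoc_of_le zero_le_one] at hx
    rw [norm_mul]
    gcongr
    refine hM s' x ?_ ?_
    · rw [Metric.mem_ball, Real.dist_eq] at hs'
      have := abs_sub_abs_le_abs_sub s' s
      linarith
    · rw [abs_of_pos hx.1]; linarith [hx.2, abs_nonneg s]
  · exact Eventually.of_forall fun x _ s' _ => (h.hasDerivAt s' x).const_mul _

/-- The operator `f ↦ ∫₀¹ w(x) B(s,x) f(s-x) dx`. -/
noncomputable def Tc (w : ℝ → ℂ) (B : ℝ → ℝ → ℂ) (f : ℝ → ℂ) (s : ℝ) : ℂ :=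
  ∫ x in (0:ℝ)..1, w x * (B s x * f (s - x))

lemma JS.mul_shift {B : ℝ → ℝ → ℂ} (h : JS B) {f : ℝ → ℂ} (hf : SP f) :
    JS (fun s x => B s x * f (s - x)) := by
  unfold JS
  exact ContDiff.mul h (hf.1.comp (contDiff_fst.sub contDiff_snd))

lemma hasDerivAt_Tc {w : ℝ → ℂ} (hw : IntervalIntegrable w volume 0 1) {B : ℝ → ℝ → ℂ} (h : JS B)
    {f : ℝ → ℂ} (hf : SP f) (s : ℝ) :
    HasDerivAt (Tc w B f) (Tc w (Ds B) f s + Tc w B (deriv f) s) s := by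
  have key := hasDerivAt_param hw (h.mul_shift hf) s
  have hi : ∀ {G : ℝ → ℝ → ℂ}, JS G → ∀ s, IntervalIntegrable (fun x => w x * G s x) volume 0 1 :=
    fun hG s => hw.mul_continuousOn (hG.cont_right s).continuousOn
  have e : ∫ x in (0:ℝ)..1, w x * Ds (fun s x => B s x * f (s - x)) s x
      = Tc w (Ds B) f s + Tc w B (deriv f) s := by
    unfold Tc
    rw [← integral_add (hi (h.Ds.mul_shift hf) s) (hi (h.mul_shift hf.deriv) s)]
    congr 1; funext x
    have h1 : HasDerivAt (fun s => f (s - x)) (deriv f (s - x)) s :=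
      (hf.hasDerivAt (s - x)).comp_sub_const s x
    rw [← mul_add]; congr 1
    exact ((h.hasDerivAt s x).mul h1).deriv
  rw [e] at key
  exact key

/-! ### Gain of one derivative for kernels vanishing on the diagonal -/

/-- In the variables `(s, x)` with `x = s - t`, the diagonal is `x = 0` and `x = 1`. If `M` vanishes
there, the kernel `log sin² · M` gains a full derivative: integration by parts moves the derivative
onto the kernel, and the zeros of `M` compensate the cotangent this produces. -/
lemma conv_gain {M : ℝ → ℝ → ℂ} (hM : JS M) (h0 : ∀ s, M s 0 = 0) (h1 : ∀ s, M s 1 = 0)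
    (R : ℝ) (hR : 0 ≤ R) :
    ∃ C ≥ (0:ℝ), ∀ f, SP f → ∀ s, |s| ≤ R →
      ‖Tc (fun x => (lg x : ℂ)) M (deriv f) s‖ ≤ C * nrm2 f := by
  obtain ⟨C0, hC0, hb⟩ := hM.Dx.bound (R + 1)
  have hp := Real.pi_pos
  refine ⟨Real.pi * C0 + C0 * Lg, by have := Lg_nonneg; positivity, fun f hf s hs => ?_⟩
  have hb' : ∀ x ∈ Icc (0:ℝ) 1, ‖Dx M s x‖ ≤ C0 := fun x hx =>
    hb s x (by linarith) (by rw [abs_of_nonneg hx.1]; linarith [hx.2])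
  have hMb : ∀ x ∈ Icc (0:ℝ) 1, ‖M s x‖ ≤ C0 / 2 * |Real.sin (Real.pi * x)| := by
    intro x hx
    have hmv : ∀ y ∈ Icc (0:ℝ) 1, ‖M s x - M s y‖ ≤ C0 * ‖x - y‖ := fun y hy =>
      (convex_Icc (0:ℝ) 1).norm_image_sub_le_of_norm_hasDerivWithin_le
        (fun z _ => (hM.hasDerivAt_x s z).hasDerivWithinAt) hb' hy hx
    have e0 := hmv 0 (by simp)
    have e1 := hmv 1 (by simp)
    rw [h0, sub_zero, sub_zero, Real.norm_eq_abs, abs_of_nonneg hx.1] at e0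
    rw [h1, sub_zero, Real.norm_eq_abs, abs_of_nonpos (by linarith [hx.2])] at e1
    have e2 := sin_pi_lb hx
    have e3 : ‖M s x‖ ≤ C0 * min x (1 - x) := by
      rcases le_total x (1 - x) with h | h
      · rw [min_eq_left h]; exact e0
      · rw [min_eq_right h]; linarith
    calc _ ≤ C0 * min x (1 - x) := e3
      _ = C0 / 2 * (2 * min x (1 - x)) := by ring
      _ ≤ _ := by gcongr; exact e2.trans (le_abs_self _)
  have hMc := hM.cont_right s
  have hMxc := hM.Dx.cont_right s
  have hfc : Continuous fun x => f (s - x) := hf.cont.comp (by fun_prop)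
  have hfc' : Continuous fun x => deriv f (s - x) := hf.deriv.cont.comp (by fun_prop)
  have hfb : ∃ F, ∀ x ∈ Icc (0:ℝ) 1, ‖f (s - x)‖ ≤ F :=
    (isCompact_Icc).exists_bound_of_continuousOn hfc.continuousOn
  obtain ⟨F, hF⟩ := hfb
  set k : ℝ → ℂ := fun x =>
    ((2 * Real.pi * (Real.cos (Real.pi * x) / Real.sin (Real.pi * x)) : ℝ) : ℂ) * (M s x * f (s - x))
    with hk
  have hkb : ∀ x ∈ Icc (0:ℝ) 1, ‖k x‖ ≤ Real.pi * C0 * ‖f (s - x)‖ := by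
    intro x hx
    rw [hk]; simp only
    rw [norm_mul, norm_mul, Complex.norm_real, Real.norm_eq_abs, abs_mul, abs_div,
      abs_of_pos (by positivity : 0 < 2 * Real.pi), ← mul_assoc]
    refine mul_le_mul_of_nonneg_right ?_ (norm_nonneg _)
    by_cases hsn : Real.sin (Real.pi * x) = 0
    · rw [hsn]; simp; positivity
    · have hsp : 0 < |Real.sin (Real.pi * x)| := abs_pos.2 hsn
      calc 2 * Real.pi * (|Real.cos (Real.pi * x)| / |Real.sin (Real.pi * x)|) * ‖M s x‖
          ≤ 2 * Real.pi * (1 / |Real.sin (Real.pi * x)|) * (C0 / 2 * |Real.sin (Real.pi * x)|) := by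
            gcongr
            · exact Real.abs_cos_le_one _
            · exact hMb x hx
        _ = _ := by field_simp
  have hkm : Measurable k := by
    have m1 : Measurable fun x : ℝ =>
        2 * Real.pi * (Real.cos (Real.pi * x) / Real.sin (Real.pi * x)) := by fun_prop
    exact (Complex.measurable_ofReal.comp m1).mul (hMc.mul hfc).measurable
  have hki : IntervalIntegrable k volume 0 1 := by
    rw [intervalIntegrable_iff_integrableOn_Ioc_of_le zero_le_one]
    refine Measure.integrableOn_of_bounded (M := Real.pi * C0 * F) (by simp) hkm.aestronglyMeasurable ?_
    refine (ae_restrict_iff' measurableSet_Ioc).2 (Eventually.of_forall fun x hx => ?_)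
    have hx' := Ioc_subset_Icc_self hx
    refine (hkb x hx').trans ?_
    gcongr
    exact hF x hx'
  have i1 : IntervalIntegrable (fun x => (lg x : ℂ) * (Dx M s x * f (s - x))) volume 0 1 :=
    lg_mul_integrable (hMxc.mul hfc)
  have i2 : IntervalIntegrable (fun x => (lg x : ℂ) * (M s x * deriv f (s - x))) volume 0 1 :=
    lg_mul_integrable (hMc.mul hfc')
  have hcont : ContinuousOn (fun x => (lg x : ℂ) * (M s x * f (s - x))) (Icc 0 1) := by
    refine continuousOn_lg_mul (C := C0 / 2 * F) (hMc.mul hfc).continuousOn fun x hx => ?_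
    rw [norm_mul]
    calc _ ≤ (C0 / 2 * |Real.sin (Real.pi * x)|) * F := by
          gcongr
          · exact hMb x hx
          · exact hF x hx
      _ = _ := by ring
  have ftc := integral_eq_sub_of_hasDerivAt_of_le zero_le_one hcont
    (f' := fun x => k x + (lg x : ℂ) * (Dx M s x * f (s - x))
      - (lg x : ℂ) * (M s x * deriv f (s - x))) (fun x hx => by
      have d1 := (hasDerivAt_lg hx).ofReal_comp
      have d2 : HasDerivAt (fun x => f (s - x)) (-deriv f (s - x)) x :=
        (hf.hasDerivAt (s - x)).comp_const_sub s x
      have d3 := d1.fun_mul ((hM.hasDerivAt_x s x).fun_mul d2)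
      refine d3.congr_deriv ?_
      rw [hk]; ring) ((hki.add i1).sub i2)
  have hs1 := integral_sub (hki.add i1) i2
  replace ftc := hs1.symm.trans ftc
  have hs2 := integral_add hki i1
  replace ftc := (congrArg (· - _) hs2.symm).trans ftc
  rw [h0, h1] at ftc
  have e : Tc (fun x => (lg x : ℂ)) M (deriv f) s
      = (∫ x in (0:ℝ)..1, k x) + ∫ x in (0:ℝ)..1, (lg x : ℂ) * (Dx M s x * f (s - x)) := by
    unfold Tc
    simp only [zero_mul, mul_zero, sub_zero] at ftc
    exact (sub_eq_zero.1 ftc).symm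
  rw [e]
  have b1 : ‖∫ x in (0:ℝ)..1, k x‖ ≤ Real.pi * C0 * nrm2 f := by
    calc _ ≤ ∫ x in (0:ℝ)..1, ‖k x‖ := norm_integral_le_integral_norm zero_le_one
      _ ≤ ∫ x in (0:ℝ)..1, Real.pi * C0 * ‖f (s - x)‖ :=
          integral_mono_on zero_le_one hki.norm
            ((hfc.norm.const_mul (Real.pi * C0)).intervalIntegrable _ _) hkb
      _ = Real.pi * C0 * ∫ x in (0:ℝ)..1, ‖f (s - x)‖ := intervalIntegral.integral_const_mul _ _
      _ ≤ _ := by gcongr; exact conv_bound hf s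
  have b2 := conv_lg_bound hf s hMxc hb'
  calc _ ≤ Real.pi * C0 * nrm2 f + C0 * Lg * nrm2 f := (norm_add_le _ _).trans (add_le_add b1 b2)
    _ = _ := by ring

lemma lgC_integrable : IntervalIntegrable (fun x => (lg x : ℂ)) volume 0 1 := by
  simpa using lg_mul_integrable (f := fun _ => 1) continuous_const

lemma Tc_bound {B : ℝ → ℝ → ℂ} (hB : JS B) (R : ℝ) (hR : 0 ≤ R) :
    ∃ C ≥ (0:ℝ), ∀ f, SP f → ∀ s, |s| ≤ R → ‖Tc (fun x => (lg x : ℂ)) B f s‖ ≤ C * nrm2 f := by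
  obtain ⟨C0, hC0, hb⟩ := hB.bound (R + 1)
  refine ⟨C0 * Lg, mul_nonneg hC0 Lg_nonneg, fun f hf s hs => ?_⟩
  exact conv_lg_bound hf s (hB.cont_right s) fun x hx =>
    hb s x (by linarith) (by rw [abs_of_nonneg hx.1]; linarith [hx.2])

lemma SPK.js {A : ℝ → ℝ → ℂ} (h : SPK A) : JS A := h.1

/-- The logarithmic potential as a convolution-type operator with fixed singularity. -/
lemma Vop_eq {A K : ℝ → ℝ → ℂ} (hA : SPK A) (hK : SPK K) {f : ℝ → ℂ} (hf : SP f) (s : ℝ) :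
    Vop (logKer A K) f s = Complex.I / (2 * Real.pi) *
      Tc (fun x => (lg x : ℂ)) (fun s x => A s (s - x)) f s + ∫ x in (0:ℝ)..1, f x * K s x := by
  have hp : Function.Periodic (fun x => (lg x : ℂ) * (A s (s - x) * f (s - x))) 1 := by
    intro x
    simp only
    have e : s - x = s - (x + 1) + 1 := by ring
    rw [lg_periodic, e, hA.2.2, hf.2]
  have h1 := integral_shift _ hp s
  have hAf : Continuous fun x => A s (s - x) * f (s - x) :=
    ((hA.js.cont_right s).comp (by fun_prop : Continuous fun x => s - x)).mul
      (hf.cont.comp (by fun_prop))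
  have hInt : IntervalIntegrable (fun t => (lg (s - t) : ℂ) * (A s t * f t)) volume 0 1 := by
    have hi : IntervalIntegrable (fun x => (lg x : ℂ) * (A s (s - x) * f (s - x))) volume (s - 0) (s - 1) :=
      hp.intervalIntegrable₀ one_ne_zero (lg_mul_integrable hAf) _ _
    have := hi.comp_sub_left s
    simpa using this
  have hKi : IntervalIntegrable (fun t => f t * K s t) volume 0 1 :=
    (hf.cont.mul (hK.js.cont_right s)).intervalIntegrable _ _
  simp only [sub_sub_cancel] at h1
  unfold Tc
  rw [← h1, ← intervalIntegral.integral_const_mul, ← integral_add (hInt.const_mul _) hKi]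
  unfold Vop logKer
  congr 1; funext t
  unfold lg; ring

/-! ### Regularity of `V₁φ′` -/

/-- `V₁φ'` has a continuous third derivative whose `L²` norm on unit intervals is controlled by
`‖φ‖₃`; constancy of `A₁` on the diagonal makes the top-order part a Fourier multiplier. -/
lemma g_main {A K : ℝ → ℝ → ℂ} (hA : SPK A) (hK : SPK K) {α : ℂ} (hd : ∀ s, A s s = α)
    (R : ℝ) (hR : 0 ≤ R) :
    ∃ C ≥ (0:ℝ), ∀ φ, SP φ → ∃ g1 g2 g3 : ℝ → ℂ,
      (∀ s, HasDerivAt (Vop (logKer A K) (deriv φ)) (g1 s) s) ∧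
      (∀ s, HasDerivAt g1 (g2 s) s) ∧ (∀ s, HasDerivAt g2 (g3 s) s) ∧ Continuous g3 ∧
      ∀ a, -R ≤ a → a + 1 ≤ R → ∫ s in a..(a + 1), ‖g3 s‖ ^ 2 ≤ C * sobNorm 3 φ ^ 2 := by
  -- `B` is `A` in the variables `(s, x)`, `x = s - t`, which fix the singularity at `x = 0, 1`.
  set B : ℝ → ℝ → ℂ := fun s x => A s (s - x) with hBdef
  have hB : JS B := hA.js.comp contDiff_fst (contDiff_fst.sub contDiff_snd)
  -- `M` vanishes at `x = 0` because `A` is constant on the diagonal, at `x = 1` by periodicity.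
  set M : ℝ → ℝ → ℂ := fun s x => B s x - α with hMdef
  have hM : JS M := ContDiff.sub hB contDiff_const
  have hM0 : ∀ s, M s 0 = 0 := by intro s; simp [hMdef, hBdef, hd]
  have hM1 : ∀ s, M s 1 = 0 := by
    intro s
    have := hA.2.2 s (s - 1)
    rw [sub_add_cancel, hd] at this
    simp [hMdef, hBdef, ← this]
  obtain ⟨b3, hb3, H3⟩ := Tc_bound hB.Ds.Ds.Ds R hR
  obtain ⟨b2, hb2, H2⟩ := Tc_bound hB.Ds.Ds R hR
  obtain ⟨b1, hb1, H1⟩ := Tc_bound hB.Ds R hR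
  obtain ⟨bm, hbm, Hm⟩ := conv_gain hM hM0 hM1 R hR
  obtain ⟨k3, hk3, HK⟩ := hK.js.Ds.Ds.Ds.bound (R + 1)
  obtain ⟨E, hE, HE⟩ := sobolev
  set c : ℂ := Complex.I / (2 * Real.pi) with hc
  set C1 : ℝ := ‖c‖ * (b3 * E + 3 * (b2 * E) + 3 * (b1 * E) + bm * E) + k3 * E with hC1
  have hC10 : 0 ≤ C1 := by positivity
  set C2 : ℝ := ‖c‖ * ‖α‖ with hC2
  refine ⟨2 * C1 ^ 2 + 2 * C2 ^ 2 * (2 * Real.pi * E) ^ 2, by positivity, fun φ hφ => ?_⟩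
  obtain ⟨-, E1, E2, E3, -, E5⟩ := HE φ hφ
  set S := sobNorm 3 φ with hS
  have hS0 : 0 ≤ S := Real.sqrt_nonneg _
  set w : ℝ → ℂ := fun x => (lg x : ℂ) with hw
  have hwi : IntervalIntegrable w volume 0 1 := lgC_integrable
  set f := deriv φ with hf
  have f0 : SP f := hφ.deriv
  have f1 : SP (deriv f) := f0.deriv
  have f2 : SP (deriv (deriv f)) := f1.deriv
  have f3 : SP (deriv (deriv (deriv f))) := f2.deriv
  have hfi : IntervalIntegrable f volume 0 1 := f0.cont.intervalIntegrable _ _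
  have dT := fun {X : ℝ → ℝ → ℂ} (hX : JS X) {u : ℝ → ℂ} (hu : SP u) (s : ℝ) =>
    hasDerivAt_Tc hwi hX hu s
  have dP := fun {X : ℝ → ℝ → ℂ} (hX : JS X) (s : ℝ) => hasDerivAt_param hfi hX s
  have cT : ∀ {X : ℝ → ℝ → ℂ} (hX : JS X) {u : ℝ → ℂ} (hu : SP u), Continuous (Tc w X u) :=
    fun hX _ hu => continuous_iff_continuousAt.2 fun s => (dT hX hu s).continuousAt
  have cP : ∀ {X : ℝ → ℝ → ℂ} (hX : JS X), Continuous fun s => ∫ x in (0:ℝ)..1, f x * X s x :=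
    fun hX => continuous_iff_continuousAt.2 fun s => (dP hX s).continuousAt
  set g1 : ℝ → ℂ := fun s => c * (Tc w (Ds B) f s + Tc w B (deriv f) s)
    + ∫ x in (0:ℝ)..1, f x * Ds K s x with hg1
  set g2 : ℝ → ℂ := fun s => c * (Tc w (Ds (Ds B)) f s + 2 * Tc w (Ds B) (deriv f) s
    + Tc w B (deriv (deriv f)) s) + ∫ x in (0:ℝ)..1, f x * Ds (Ds K) s x with hg2
  set g3 : ℝ → ℂ := fun s => c * (Tc w (Ds (Ds (Ds B))) f s + 3 * Tc w (Ds (Ds B)) (deriv f) s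
    + 3 * Tc w (Ds B) (deriv (deriv f)) s + Tc w B (deriv (deriv (deriv f))) s)
    + ∫ x in (0:ℝ)..1, f x * Ds (Ds (Ds K)) s x with hg3
  have hg3c : Continuous g3 := by
    have := cT hB.Ds.Ds.Ds f0
    have := cT hB.Ds.Ds f1
    have := cT hB.Ds f2
    have := cT hB f3
    have := cP hK.js.Ds.Ds.Ds
    rw [hg3]; fun_prop
  refine ⟨g1, g2, g3, ?_, ?_, ?_, hg3c, ?_⟩
  · intro s
    have e : Vop (logKer A K) f = fun s => c * Tc w B f s + ∫ x in (0:ℝ)..1, f x * K s x := by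
      funext s; exact Vop_eq hA hK f0 s
    rw [e]
    exact ((dT hB f0 s).const_mul c).fun_add (dP hK.js s)
  · intro s
    refine ((((dT hB.Ds f0 s).fun_add (dT hB f1 s)).const_mul c).fun_add (dP hK.js.Ds s)).congr_deriv ?_
    rw [hg2]; ring
  · intro s
    refine (((((dT hB.Ds.Ds f0 s).fun_add ((dT hB.Ds f1 s).const_mul 2)).fun_add (dT hB f2 s)).const_mul c).fun_add
      (dP hK.js.Ds.Ds s)).congr_deriv ?_
    rw [hg3]; ring
  · intro a ha1 ha2
    -- Only the term with three derivatives of `f` needs the splitting `B = α + M`: its `α`-part `q` is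
    -- bounded in `L²`, everything else pointwise.
    obtain ⟨qc, qp, qn⟩ := conv_lg_deriv f2
    set q : ℝ → ℂ := fun s => ∫ x in (0:ℝ)..1, (lg x : ℂ) * deriv (deriv (deriv f)) (s - x) with hq
    have hTB : ∀ s, Tc w B (deriv (deriv (deriv f))) s
        = α * q s + Tc w M (deriv (deriv (deriv f))) s := by
      intro s
      have hcs : Continuous fun x => deriv (deriv (deriv f)) (s - x) := f3.cont.comp (by fun_prop)
      rw [hq]; unfold Tc
      simp only
      have hi : IntervalIntegrable (fun x => w x * (M s x * deriv (deriv (deriv f)) (s - x))) volume 0 1 :=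
        lg_mul_integrable ((hM.cont_right s).mul hcs)
      rw [← intervalIntegral.integral_const_mul, ← integral_add ((lg_mul_integrable hcs).const_mul α) hi]
      congr 1; funext x
      rw [hMdef, hw]; ring
    have hbound : ∀ s, |s| ≤ R → ‖g3 s‖ ≤ C1 * S + C2 * ‖q s‖ := by
      intro s hs
      have t3 := (H3 f f0 s hs).trans (mul_le_mul_of_nonneg_left E1 hb3)
      have t2 := (H2 _ f1 s hs).trans (mul_le_mul_of_nonneg_left E2 hb2)
      have t1 := (H1 _ f2 s hs).trans (mul_le_mul_of_nonneg_left E3 hb1)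
      have tm := (Hm _ f2 s hs).trans (mul_le_mul_of_nonneg_left E3 hbm)
      have tK : ‖∫ x in (0:ℝ)..1, f x * Ds (Ds (Ds K)) s x‖ ≤ k3 * (E * S) := by
        have := norm_integral_le_of_norm_le_const (a := (0:ℝ)) (b := 1) (C := k3 * (E * S))
          (f := fun x => f x * Ds (Ds (Ds K)) s x) (fun x hx => by
            rw [uIoc_of_le zero_le_one] at hx
            rw [norm_mul, mul_comm]
            gcongr
            · exact HK s x (by linarith) (by rw [abs_of_pos hx.1]; linarith [hx.2])
            · exact E5 x)
        simpa using this
      rw [hg3]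
      simp only
      rw [hTB]
      calc _ ≤ ‖c‖ * (‖Tc w (Ds (Ds (Ds B))) f s‖ + 3 * ‖Tc w (Ds (Ds B)) (deriv f) s‖
            + 3 * ‖Tc w (Ds B) (deriv (deriv f)) s‖
            + (‖α‖ * ‖q s‖ + ‖Tc w M (deriv (deriv (deriv f))) s‖))
            + ‖∫ x in (0:ℝ)..1, f x * Ds (Ds (Ds K)) s x‖ := by
            refine (norm_add_le _ _).trans (add_le_add ?_ le_rfl)
            rw [norm_mul]
            refine mul_le_mul_of_nonneg_left ?_ (norm_nonneg _)
            refine (norm_add_le _ _).trans (add_le_add ((norm_add_le _ _).trans (add_le_add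
              ((norm_add_le _ _).trans (add_le_add le_rfl ?_)) ?_))
              ((norm_add_le _ _).trans (add_le_add ?_ le_rfl)))
            · rw [norm_mul]; simp
            · rw [norm_mul]; simp
            · rw [norm_mul]
        _ ≤ ‖c‖ * (b3 * (E * S) + 3 * (b2 * (E * S)) + 3 * (b1 * (E * S))
            + (‖α‖ * ‖q s‖ + bm * (E * S))) + k3 * (E * S) := by gcongr
        _ = _ := by rw [hC1, hC2]; ring
    have hqint : ∫ s in a..(a + 1), ‖q s‖ ^ 2 = nrm2 q ^ 2 := by
      rw [nrm2_sq]
      have hper : Function.Periodic (fun s => ‖q s‖ ^ 2) 1 := fun s => by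
        simp only; rw [qp s]
      have := hper.intervalIntegral_add_eq a 0
      simpa using this
    have hle : a ≤ a + 1 := by linarith
    calc ∫ s in a..(a + 1), ‖g3 s‖ ^ 2
        ≤ ∫ s in a..(a + 1), (2 * (C1 * S) ^ 2 + 2 * C2 ^ 2 * ‖q s‖ ^ 2) := by
          refine integral_mono_on hle ((hg3c.norm.pow 2).intervalIntegrable _ _)
            ((by fun_prop : Continuous fun s => 2 * (C1 * S) ^ 2 + 2 * C2 ^ 2 * ‖q s‖ ^ 2).intervalIntegrable _ _)
            fun s hs => ?_
          have hsR : |s| ≤ R := abs_le.2 ⟨by linarith [hs.1], by linarith [hs.2]⟩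
          have h := pow_le_pow_left₀ (norm_nonneg _) (hbound s hsR) 2
          nlinarith [sq_nonneg (C1 * S - C2 * ‖q s‖)]
      _ = 2 * (C1 * S) ^ 2 + 2 * C2 ^ 2 * nrm2 q ^ 2 := by
          have hi : IntervalIntegrable (fun s => 2 * C2 ^ 2 * ‖q s‖ ^ 2) volume a (a + 1) :=
            (by fun_prop : Continuous fun s => 2 * C2 ^ 2 * ‖q s‖ ^ 2).intervalIntegrable _ _
          rw [integral_add intervalIntegrable_const hi,
            intervalIntegral.integral_const_mul (2 * C2 ^ 2), hqint]
          simp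
      _ ≤ 2 * (C1 * S) ^ 2 + 2 * C2 ^ 2 * (2 * Real.pi * (E * S)) ^ 2 := by
          gcongr
          · exact nrm2_nonneg _
          · exact qn.trans (by have := Real.pi_pos; gcongr)
      _ = _ := by ring

/-! ### Midpoint differences on the shifted grid -/

/-- Symmetric difference versus derivative: the error is controlled by the third derivative. -/
lemma midpoint_err {g g1 g2 g3 : ℝ → ℂ} (h1 : ∀ s, HasDerivAt g (g1 s) s)
    (h2 : ∀ s, HasDerivAt g1 (g2 s) s) (h3 : ∀ s, HasDerivAt g2 (g3 s) s) (hc : Continuous g3)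
    (t r : ℝ) (hr : 0 ≤ r) :
    ‖g (t + r) - g (t - r) - 2 * (r : ℂ) * g1 t‖ ≤ r ^ 2 * ∫ x in (t - r)..(t + r), ‖g3 x‖ := by
  set E := ∫ x in (t - r)..(t + r), ‖g3 x‖ with hE
  have hE0 : 0 ≤ E := integral_nonneg (by linarith) fun _ _ => norm_nonneg _
  have plus : ∀ {f f' : ℝ → ℂ}, (∀ s, HasDerivAt f (f' s) s) → ∀ y : ℝ,
      HasDerivAt (fun y => f (t + y)) (f' (t + y)) y := fun hf y =>
    (hf (t + y)).comp_const_add t y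
  have minus : ∀ {f f' : ℝ → ℂ}, (∀ s, HasDerivAt f (f' s) s) → ∀ y : ℝ,
      HasDerivAt (fun y => f (t - y)) (-f' (t - y)) y := fun hf y =>
    (hf (t - y)).comp_const_sub t y
  have b2 : ∀ y ∈ Icc 0 r, ‖g2 (t + y) - g2 (t - y)‖ ≤ E := by
    intro y hy
    rw [← integral_eq_sub_of_hasDerivAt (fun x _ => h3 x) (hc.intervalIntegrable _ _)]
    refine (intervalIntegral.norm_integral_le_integral_norm (by linarith [hy.1])).trans ?_
    exact integral_mono_interval (by linarith [hy.2]) (by linarith [hy.1]) (by linarith [hy.2])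
      (Eventually.of_forall fun _ => norm_nonneg _) (hc.norm.intervalIntegrable _ _)
  have b1 : ∀ y ∈ Icc 0 r, ‖g1 (t + y) + g1 (t - y) - 2 * g1 t‖ ≤ E * r := by
    intro y hy
    have hd : ∀ x ∈ Icc 0 r, HasDerivWithinAt (fun y => g1 (t + y) + g1 (t - y))
        (g2 (t + x) - g2 (t - x)) (Icc 0 r) x := fun x _ => by
      have := ((plus h2 x).fun_add (minus h2 x)).hasDerivWithinAt (s := Icc 0 r)
      simpa [sub_eq_add_neg] using this
    have := norm_image_sub_le_of_norm_deriv_le_segment' hd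
      (fun x hx => b2 x ⟨hx.1, hx.2.le⟩) y hy
    simp only [add_zero, sub_zero] at this
    rw [two_mul]
    exact this.trans (mul_le_mul_of_nonneg_left hy.2 hE0)
  have hd : ∀ x ∈ Icc 0 r, HasDerivWithinAt (fun y : ℝ => g (t + y) - g (t - y) - 2 * (y : ℂ) * g1 t)
      (g1 (t + x) + g1 (t - x) - 2 * g1 t) (Icc 0 r) x := fun x _ => by
    have e : HasDerivAt (fun y : ℝ => 2 * (y : ℂ) * g1 t) (2 * g1 t) x := by
      have := ((hasDerivAt_id x).ofReal_comp.const_mul (2:ℂ)).mul_const (g1 t)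
      simpa using this
    have := (((plus h1 x).fun_sub (minus h1 x)).fun_sub e).hasDerivWithinAt (s := Icc 0 r)
    simpa [sub_eq_add_neg] using this
  have := norm_image_sub_le_of_norm_deriv_le_segment' hd
      (fun x hx => b1 x ⟨hx.1, hx.2.le⟩) r ⟨hr, le_rfl⟩
  simp only [add_zero, sub_zero, sub_self, Complex.ofReal_zero, mul_zero, zero_mul] at this
  linarith

lemma integral_sq_le {u : ℝ → ℝ} (hu : Continuous u) {a b : ℝ} (hab : a < b) :
    (∫ x in a..b, u x) ^ 2 ≤ (b - a) * ∫ x in a..b, u x ^ 2 := by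
  set m := ∫ x in a..b, u x with hm
  have h0 : 0 ≤ ∫ x in a..b, ((b - a) * u x - m) ^ 2 :=
    integral_nonneg hab.le fun _ _ => sq_nonneg _
  have e : ∀ x, ((b - a) * u x - m) ^ 2 = (b - a) ^ 2 * u x ^ 2 + (-(2 * (b - a) * m) * u x + m ^ 2) :=
    fun x => by ring
  simp_rw [e] at h0
  have i1 : IntervalIntegrable (fun x => (b - a) ^ 2 * u x ^ 2) volume a b :=
    (by fun_prop : Continuous fun x => (b - a) ^ 2 * u x ^ 2).intervalIntegrable _ _
  have i2 : IntervalIntegrable (fun x => -(2 * (b - a) * m) * u x + m ^ 2) volume a b :=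
    (by fun_prop : Continuous fun x => -(2 * (b - a) * m) * u x + m ^ 2).intervalIntegrable _ _
  have i3 : IntervalIntegrable (fun x => -(2 * (b - a) * m) * u x) volume a b :=
    (by fun_prop : Continuous fun x => -(2 * (b - a) * m) * u x).intervalIntegrable _ _
  rw [integral_add i1 i2, integral_add i3 intervalIntegrable_const,
    intervalIntegral.integral_const_mul, intervalIntegral.integral_const_mul, ← hm,
    intervalIntegral.integral_const, smul_eq_mul] at h0
  have hp : 0 < b - a := by linarith
  have : 0 ≤ (b - a) * ((b - a) * (∫ x in a..b, u x ^ 2) - m ^ 2) := by nlinarith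
  have := nonneg_of_mul_nonneg_right this hp
  linarith

/-- Splitting an integral over one period into the cells of the shifted grid. -/
lemma sum_cells {E : Type*} [NormedAddCommGroup E] [NormedSpace ℝ E] {N : ℕ} (hN : 0 < N) (ε : ℝ)
    {u : ℝ → E}
    (hu : ∀ a b, IntervalIntegrable u volume a b) :
    ∑ i ∈ Finset.range N, ∫ x in (sg (1 / (N:ℝ)) ε i)..(sg (1 / (N:ℝ)) ε (i + 1)), u x
      = ∫ x in (sg (1 / (N:ℝ)) ε 0)..(sg (1 / (N:ℝ)) ε 0 + 1), u x := by
  have h := sum_integral_adjacent_intervals (μ := volume) (f := u) (a := fun i : ℕ => sg (1 / (N:ℝ)) ε i)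
    (n := N) fun k _ => hu _ _
  have hN' : (N:ℝ) ≠ 0 := by positivity
  have e : sg (1 / (N:ℝ)) ε 0 + 1 = sg (1 / (N:ℝ)) ε N := by
    unfold sg; push_cast; field_simp; ring
  rw [e]
  simpa using h

/-- The squared midpoint errors summed over the grid. -/
lemma midpoint_sum {g g1 g2 g3 : ℝ → ℂ} (h1 : ∀ s, HasDerivAt g (g1 s) s)
    (h2 : ∀ s, HasDerivAt g1 (g2 s) s) (h3 : ∀ s, HasDerivAt g2 (g3 s) s) (hc : Continuous g3)
    (ε : ℝ) (N : ℕ) (hN : 0 < N) :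
    ∑ i ∈ Finset.range N, ‖g (sg (1 / (N:ℝ)) ε (i + 1)) - g (sg (1 / (N:ℝ)) ε i)
        - 1 / (N:ℂ) * g1 (tg (1 / (N:ℝ)) ε i)‖ ^ 2
      ≤ (1 / (N:ℝ)) ^ 5 * ∫ x in (sg (1 / (N:ℝ)) ε 0)..(sg (1 / (N:ℝ)) ε 0 + 1), ‖g3 x‖ ^ 2 := by
  have hN' : (0:ℝ) < N := by positivity
  rw [← sum_cells (u := fun x => ‖g3 x‖ ^ 2) hN ε fun a b => (hc.norm.pow 2).intervalIntegrable a b, Finset.mul_sum]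
  refine Finset.sum_le_sum fun i _ => ?_
  set h := 1 / (N:ℝ) with hh
  have hh0 : 0 < h := by positivity
  have e1 : sg h ε (i + 1) = tg h ε i + h / 2 := by unfold sg tg; push_cast; ring
  have e2 : sg h ε i = tg h ε i - h / 2 := by unfold sg tg; ring
  have e3 : 1 / (N:ℂ) = 2 * ((h / 2 : ℝ) : ℂ) := by rw [hh]; push_cast; ring
  rw [e1, e2, e3]
  have hm := midpoint_err h1 h2 h3 hc (tg h ε i) (h / 2) (by positivity)
  have hs := integral_sq_le hc.norm (a := tg h ε i - h / 2) (b := tg h ε i + h / 2) (by linarith)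
  have hnn : 0 ≤ ∫ x in (tg h ε i - h / 2)..(tg h ε i + h / 2), ‖g3 x‖ ^ 2 :=
    integral_nonneg (by linarith) fun _ _ => by positivity
  calc _ ≤ ((h / 2) ^ 2 * ∫ x in (tg h ε i - h / 2)..(tg h ε i + h / 2), ‖g3 x‖) ^ 2 :=
        pow_le_pow_left₀ (norm_nonneg _) hm 2
    _ = (h ^ 4 / 16) * (∫ x in (tg h ε i - h / 2)..(tg h ε i + h / 2), ‖g3 x‖) ^ 2 := by ring
    _ ≤ (h ^ 4 / 16) * ((tg h ε i + h / 2 - (tg h ε i - h / 2)) *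
          ∫ x in (tg h ε i - h / 2)..(tg h ε i + h / 2), ‖g3 x‖ ^ 2) := by gcongr
    _ = h ^ 5 / 16 * ∫ x in (tg h ε i - h / 2)..(tg h ε i + h / 2), ‖g3 x‖ ^ 2 := by ring
    _ ≤ _ := by
        refine mul_le_mul_of_nonneg_right ?_ hnn
        have : 0 < h ^ 5 := by positivity
        linarith

/-! ### Step functions and cell averages -/

lemma stepf_periodic (N : ℕ) [NeZero N] (ε : ℝ) (v : ZMod N → ℂ) :
    Function.Periodic (stepf N ε v) 1 := by
  intro s
  unfold stepf
  have e : (s + 1) * (N:ℝ) + 1 / 2 - ε = s * N + 1 / 2 - ε + (N:ℕ) := by ring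
  rw [e, Int.floor_add_natCast]
  simp

lemma stepf_measurable (N : ℕ) (ε : ℝ) (v : ZMod N → ℂ) : Measurable (stepf N ε v) := by
  have h1 : Measurable fun s : ℝ => ⌊s * N + 1 / 2 - ε⌋ :=
    Int.measurable_floor.comp (by fun_prop)
  exact (measurable_from_top (f := fun k : ℤ => v (k : ZMod N))).comp h1

lemma stepf_eq {N : ℕ} (hN : 0 < N) (ε : ℝ) (v : ZMod N → ℂ) (i : ℕ) {s : ℝ}
    (hs : s ∈ Ioo (sg (1 / (N:ℝ)) ε i) (sg (1 / (N:ℝ)) ε (i + 1))) : stepf N ε v s = v i := by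
  have hN' : (0:ℝ) < N := by positivity
  unfold stepf
  obtain ⟨h1, h2⟩ := hs
  unfold sg at h1 h2
  rw [mul_one_div, div_lt_iff₀ hN'] at h1
  rw [mul_one_div, lt_div_iff₀ hN'] at h2
  have : ⌊s * N + 1 / 2 - ε⌋ = (i : ℤ) := by
    rw [Int.floor_eq_iff]
    push_cast at *
    constructor <;> linarith
  rw [this]; simp

/-- Integration against the step function reduces to a sum over the cells of the shifted grid; by
periodicity the interval `(0,1)` may be replaced by the union of these cells. -/
lemma stepf_integral {N : ℕ} [NeZero N] (ε : ℝ) (v : ZMod N → ℂ) {F : ℝ → ℂ} (hF : SP F) :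
    ∫ t in (0:ℝ)..1, stepf N ε v t * F t = ∑ i ∈ Finset.range N, v i *
      ∫ t in (sg (1 / (N:ℝ)) ε i)..(sg (1 / (N:ℝ)) ε (i + 1)), F t := by
  have hN : 0 < N := Nat.pos_of_ne_zero (NeZero.ne N)
  have hper : Function.Periodic (fun t => stepf N ε v t * F t) 1 := fun t => by
    simp only; rw [stepf_periodic N ε v t, hF.2 t]
  have hInt : ∀ a b, IntervalIntegrable (fun t => stepf N ε v t * F t) volume a b := by
    intro a b
    have hb : ∀ x, ‖stepf N ε v x‖ ≤ ∑ i, ‖v i‖ := fun x =>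
      Finset.single_le_sum (f := fun i => ‖v i‖) (fun _ _ => norm_nonneg _) (Finset.mem_univ _)
    rw [intervalIntegrable_iff]
    exact ((hF.cont.intervalIntegrable a b).def').bdd_mul
      (stepf_measurable N ε v).aestronglyMeasurable (Eventually.of_forall hb)
  have h1 := hper.intervalIntegral_add_eq 0 (sg (1 / (N:ℝ)) ε 0)
  rw [zero_add] at h1
  rw [h1, ← sum_cells hN ε hInt]
  refine Finset.sum_congr rfl fun i _ => ?_
  rw [← intervalIntegral.integral_const_mul]
  refine integral_congr_Ioo_of_le ?_ fun s hs => ?_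
  · unfold sg; gcongr; simp
  · change stepf N ε v s * F s = v i * F s
    rw [stepf_eq hN ε v i hs]

lemma SP.bounded {f : ℝ → ℂ} (hf : SP f) : ∃ M ≥ (0:ℝ), ∀ x, ‖f x‖ ≤ M := by
  obtain ⟨M, hM⟩ := (isCompact_Icc (a := (0:ℝ)) (b := 1)).exists_bound_of_continuousOn
    hf.cont.continuousOn
  refine ⟨max M 0, le_max_right _ _, fun x => ?_⟩
  obtain ⟨y, hy, e⟩ := hf.2.exists_mem_Ico₀ one_pos x
  rw [e]
  exact (hM y ⟨hy.1, hy.2.le⟩).trans (le_max_left _ _)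

/-- Cell integral against `h` times the midpoint value. -/
lemma cell_err {F : ℝ → ℂ} (hF : SP F) {L : ℝ} (hL0 : 0 ≤ L) (hL : ∀ x, ‖deriv F x‖ ≤ L) (ε : ℝ) {N : ℕ}
    (hN : 0 < N) (i : ℕ) :
    ‖(∫ t in (sg (1 / (N:ℝ)) ε i)..(sg (1 / (N:ℝ)) ε (i + 1)), F t)
      - 1 / (N:ℂ) * F (tg (1 / (N:ℝ)) ε i)‖ ≤ L * (1 / (N:ℝ)) ^ 2 := by
  have hN' : (0:ℝ) < N := by positivity
  set h := 1 / (N:ℝ) with hh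
  have hh0 : 0 < h := by positivity
  have e1 : sg h ε (i + 1) = tg h ε i + h / 2 := by unfold sg tg; push_cast; ring
  have e2 : sg h ε i = tg h ε i - h / 2 := by unfold sg tg; ring
  have e3 : 1 / (N:ℂ) * F (tg h ε i)
      = ∫ t in (tg h ε i - h / 2)..(tg h ε i + h / 2), F (tg h ε i) := by
    rw [intervalIntegral.integral_const, Complex.real_smul, hh]
    push_cast; ring
  rw [e1, e2, e3, ← integral_sub (hF.cont.intervalIntegrable _ _) intervalIntegrable_const]
  have : ∀ x ∈ uIoc (tg h ε i - h / 2) (tg h ε i + h / 2), ‖F x - F (tg h ε i)‖ ≤ L * h := by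
    intro x hx
    rw [uIoc_of_le (by linarith)] at hx
    refine (Convex.norm_image_sub_le_of_norm_deriv_le (𝕜 := ℝ)
      (fun x _ => (hF.hasDerivAt x).differentiableAt)
      (fun x _ => hL x) convex_univ (mem_univ _) (mem_univ _)).trans ?_
    refine mul_le_mul_of_nonneg_left ?_ hL0
    rw [Real.norm_eq_abs, abs_le]
    constructor <;> linarith [hx.1, hx.2]
  refine (norm_integral_le_of_norm_le_const this).trans (le_of_eq ?_)
  rw [show tg h ε i + h / 2 - (tg h ε i - h / 2) = h by ring, abs_of_pos hh0]; ring

lemma SPK.diag {A : ℝ → ℝ → ℂ} (hA : SPK A) : SP fun t => A t t := by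
  refine ⟨ContDiff.comp (g := fun p : ℝ × ℝ => A p.1 p.2) (f := fun x => (x, x)) hA.1
    (contDiff_id.prodMk contDiff_id), fun t => ?_⟩
  simp only
  rw [hA.2.1, hA.2.2]

lemma SPK.row {A : ℝ → ℝ → ℂ} (hA : SPK A) (s : ℝ) : SP (A s) := ⟨hA.js.right s, hA.2.2 s⟩

lemma SP.mul {f g : ℝ → ℂ} (hf : SP f) (hg : SP g) : SP fun x => f x * g x :=
  ⟨hf.1.mul hg.1, fun x => by simp only; rw [hf.2 x, hg.2 x]⟩

/-- Cell averages of `A(t,t) φ(t)` against midpoint values. -/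
lemma diag_cell {A : ℝ → ℝ → ℂ} (hA : SPK A) (ε : ℝ) : ∃ C ≥ (0:ℝ), ∀ φ, SP φ → ∀ N : ℕ, 0 < N →
    ∀ i : ℕ, ‖(∫ t in (sg (1 / (N:ℝ)) ε i)..(sg (1 / (N:ℝ)) ε (i + 1)), A t t * φ t)
      - 1 / (N:ℂ) * (A (tg (1 / (N:ℝ)) ε i) (tg (1 / (N:ℝ)) ε i) * φ (tg (1 / (N:ℝ)) ε i))‖
      ≤ C * (1 / (N:ℝ)) ^ 2 * sobNorm 3 φ := by
  obtain ⟨M0, hM0, b0⟩ := hA.diag.bounded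
  obtain ⟨M1, hM1, b1⟩ := hA.diag.deriv.bounded
  obtain ⟨E, hE, hs⟩ := sobolev
  refine ⟨M1 * E + M0 * E, by positivity, fun φ hφ N hN i => ?_⟩
  obtain ⟨-, -, -, -, c0, c1⟩ := hs φ hφ
  have hS : 0 ≤ sobNorm 3 φ := Real.sqrt_nonneg _
  refine (cell_err (hA.diag.mul hφ) (L := M1 * (E * sobNorm 3 φ) + M0 * (E * sobNorm 3 φ))
    (by positivity) (fun x => ?_) ε hN i).trans (le_of_eq (by ring))
  rw [((hA.diag.hasDerivAt x).fun_mul (hφ.hasDerivAt x)).deriv]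
  refine (norm_add_le _ _).trans ?_
  rw [norm_mul, norm_mul]
  gcongr
  · exact b1 x
  · exact c0 x
  · exact b0 x
  · exact c1 x

/-! ### Corrected quadrature for `V₂` -/

lemma deriv_row_mul {H : ℝ → ℝ → ℂ} (h : JS H) {f : ℝ → ℂ} (hf : SP f) (s : ℝ) (x : ℝ) :
    HasDerivAt (fun x => H s x * f x) (Dx H s x * f x + H s x * deriv f x) x :=
  (h.hasDerivAt_x s x).fun_mul (hf.hasDerivAt x)

/-- Leibniz rule: the third derivative of a smooth row times `φ` is controlled by the
third-order Sobolev norm of `φ`, uniformly for rows in a bounded range. -/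
lemma row_third {A : ℝ → ℝ → ℂ} (hA : SPK A) (R : ℝ) (hR : 1 ≤ R) : ∃ C ≥ (0:ℝ), ∀ φ, SP φ →
    ∀ s, |s| ≤ R → nrm2 (deriv (deriv (deriv fun x => A s x * φ x))) ≤ C * sobNorm 3 φ := by
  have j0 := hA.js
  have j1 := j0.Dx
  have j2 := j1.Dx
  have j3 := j2.Dx
  obtain ⟨M0, hM0, b0⟩ := j0.bound R
  obtain ⟨M1, hM1, b1⟩ := j1.bound R
  obtain ⟨M2, hM2, b2⟩ := j2.bound R
  obtain ⟨M3, hM3, b3⟩ := j3.bound R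
  obtain ⟨E, hE, hs⟩ := sobolev
  set M := M0 + M1 + M2 + M3 with hM
  have hMn : 0 ≤ M := by positivity
  refine ⟨9 * M * E, by positivity, fun φ hφ s hsR => ?_⟩
  obtain ⟨n0, n1, n2, n3, -, -⟩ := hs φ hφ
  set S := sobNorm 3 φ with hS
  have hS0 : 0 ≤ S := Real.sqrt_nonneg _
  have p1 := hφ.deriv
  have p2 := p1.deriv
  have p3 := p2.deriv
  have d1 : (deriv fun x => A s x * φ x) = fun x => Dx A s x * φ x + A s x * deriv φ x :=
    funext fun x => (deriv_row_mul j0 hφ s x).deriv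
  have d2 : (deriv fun x => Dx A s x * φ x + A s x * deriv φ x)
      = fun x => (Dx (Dx A) s x * φ x + Dx A s x * deriv φ x)
        + (Dx A s x * deriv φ x + A s x * deriv (deriv φ) x) :=
    funext fun x => ((deriv_row_mul j1 hφ s x).fun_add (deriv_row_mul j0 p1 s x)).deriv
  have d3 : (deriv fun x => (Dx (Dx A) s x * φ x + Dx A s x * deriv φ x)
        + (Dx A s x * deriv φ x + A s x * deriv (deriv φ) x))
      = fun x => ((Dx (Dx (Dx A)) s x * φ x + Dx (Dx A) s x * deriv φ x)
          + (Dx (Dx A) s x * deriv φ x + Dx A s x * deriv (deriv φ) x))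
        + ((Dx (Dx A) s x * deriv φ x + Dx A s x * deriv (deriv φ) x)
          + (Dx A s x * deriv (deriv φ) x + A s x * deriv (deriv (deriv φ)) x)) :=
    funext fun x => (((deriv_row_mul j2 hφ s x).fun_add (deriv_row_mul j1 p1 s x)).fun_add
      ((deriv_row_mul j1 p1 s x).fun_add (deriv_row_mul j0 p2 s x))).deriv
  have hf3 : SP (deriv (deriv (deriv fun x => A s x * φ x))) :=
    ((hA.row s).mul hφ).deriv.deriv.deriv
  rw [d1, d2, d3] at hf3 ⊢
  set F := fun x => ((Dx (Dx (Dx A)) s x * φ x + Dx (Dx A) s x * deriv φ x)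
          + (Dx (Dx A) s x * deriv φ x + Dx A s x * deriv (deriv φ) x))
        + ((Dx (Dx A) s x * deriv φ x + Dx A s x * deriv (deriv φ) x)
          + (Dx A s x * deriv (deriv φ) x + A s x * deriv (deriv (deriv φ)) x)) with hF
  have c0 := hφ.cont
  have c1 := p1.cont
  have c2 := p2.cont
  have c3 := p3.cont
  have hpt : ∀ x ∈ Icc (0:ℝ) 1, ‖F x‖ ^ 2 ≤ 20 * M ^ 2 * (‖φ x‖ ^ 2 + ‖deriv φ x‖ ^ 2
      + ‖deriv (deriv φ) x‖ ^ 2 + ‖deriv (deriv (deriv φ)) x‖ ^ 2) := by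
    intro x hx
    have hxR : |x| ≤ R := by rw [abs_of_nonneg hx.1]; linarith [hx.2]
    set u0 := ‖φ x‖ with hu0
    set u1 := ‖deriv φ x‖ with hu1
    set u2 := ‖deriv (deriv φ) x‖ with hu2
    set u3 := ‖deriv (deriv (deriv φ)) x‖ with hu3
    have a0 : ‖A s x * deriv (deriv (deriv φ)) x‖ ≤ M * u3 := by
      rw [norm_mul]; gcongr; exact (b0 s x hsR hxR).trans (by rw [hM]; linarith)
    have a1 : ‖Dx A s x * deriv (deriv φ) x‖ ≤ M * u2 := by
      rw [norm_mul]; gcongr; exact (b1 s x hsR hxR).trans (by rw [hM]; linarith)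
    have a2 : ‖Dx (Dx A) s x * deriv φ x‖ ≤ M * u1 := by
      rw [norm_mul]; gcongr; exact (b2 s x hsR hxR).trans (by rw [hM]; linarith)
    have a3 : ‖Dx (Dx (Dx A)) s x * φ x‖ ≤ M * u0 := by
      rw [norm_mul]; gcongr; exact (b3 s x hsR hxR).trans (by rw [hM]; linarith)
    have hle : ‖F x‖ ≤ M * (u0 + 3 * u1 + 3 * u2 + u3) := by
      refine (norm_add_le_of_le (norm_add_le_of_le (norm_add_le_of_le a3 a2)
        (norm_add_le_of_le a2 a1)) (norm_add_le_of_le (norm_add_le_of_le a2 a1)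
        (norm_add_le_of_le a1 a0))).trans (le_of_eq (by ring))
    have h20 : (u0 + 3 * u1 + 3 * u2 + u3) ^ 2 ≤ 20 * (u0 ^ 2 + u1 ^ 2 + u2 ^ 2 + u3 ^ 2) := by
      nlinarith [sq_nonneg (3 * u0 - u1), sq_nonneg (3 * u0 - u2), sq_nonneg (u0 - u3),
        sq_nonneg (u1 - u2), sq_nonneg (u1 - 3 * u3), sq_nonneg (u2 - 3 * u3)]
    calc ‖F x‖ ^ 2 ≤ (M * (u0 + 3 * u1 + 3 * u2 + u3)) ^ 2 :=
          pow_le_pow_left₀ (norm_nonneg _) hle 2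
      _ = M ^ 2 * (u0 + 3 * u1 + 3 * u2 + u3) ^ 2 := by ring
      _ ≤ M ^ 2 * (20 * (u0 ^ 2 + u1 ^ 2 + u2 ^ 2 + u3 ^ 2)) := by gcongr
      _ = _ := by ring
  have ii : ∀ {f : ℝ → ℂ}, Continuous f → IntervalIntegrable (fun x => ‖f x‖ ^ 2) volume 0 1 :=
    fun hf => (hf.norm.pow 2).intervalIntegrable _ _
  have hInt : nrm2 F ^ 2 ≤ 20 * M ^ 2 * (nrm2 φ ^ 2 + nrm2 (deriv φ) ^ 2
      + nrm2 (deriv (deriv φ)) ^ 2 + nrm2 (deriv (deriv (deriv φ))) ^ 2) := by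
    simp only [nrm2_sq]
    rw [← integral_add (ii c0) (ii c1), ← integral_add ((ii c0).add (ii c1)) (ii c2),
      ← integral_add (((ii c0).add (ii c1)).add (ii c2)) (ii c3),
      ← intervalIntegral.integral_const_mul]
    refine integral_mono_on zero_le_one (ii hf3.cont) ?_ hpt
    exact Continuous.intervalIntegrable (by fun_prop) _ _
  have hES : 0 ≤ E * S := by positivity
  refine le_of_sq_le_sq ?_ (by positivity)
  refine hInt.trans ?_
  calc _ ≤ 20 * M ^ 2 * ((E * S) ^ 2 + (E * S) ^ 2 + (E * S) ^ 2 + (E * S) ^ 2) := by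
        gcongr <;> exact nrm2_nonneg _
    _ ≤ _ := by nlinarith [sq_nonneg (M * (E * S))]

lemma lg_shift_integrable {f : ℝ → ℂ} (hf : SP f) (s : ℝ) :
    IntervalIntegrable (fun t => (lg (s - t) : ℂ) * f t) volume 0 1 := by
  have hp : Function.Periodic (fun x => (lg x : ℂ) * f (s - x)) 1 := by
    intro x
    simp only
    have e : s - x = s - (x + 1) + 1 := by ring
    rw [lg_periodic, e, hf.2]
  have hi : IntervalIntegrable (fun x => (lg x : ℂ) * f (s - x)) volume (s - 0) (s - 1) :=
    hp.intervalIntegrable₀ one_ne_zero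
      (lg_mul_integrable (hf.cont.comp (by fun_prop : Continuous fun x => s - x))) _ _
  have := hi.comp_sub_left s
  simpa using this

lemma Cbar1_eq (ε : ℝ) (hε : Real.sin (Real.pi * ε) ≠ 0) :
    Cbar1 ε = Complex.I / (2 * Real.pi) * ((lg ε + Real.log 4 : ℝ) : ℂ) := by
  unfold Cbar1 lg
  rw [Real.log_mul (by norm_num) (pow_ne_zero 2 hε), add_comm]
  have hp : (Real.pi : ℂ) ≠ 0 := by exact_mod_cast Real.pi_ne_zero
  congr 1
  field_simp
  simp

/-- The trapezoidal rule on the shifted grid for the logarithmic potential, with its first-order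
correction. -/
lemma V2_quad {A K : ℝ → ℝ → ℂ} (hA : SPK A) (hK : SPK K) (ε : ℝ)
    (hε : Real.sin (Real.pi * ε) ≠ 0) : ∃ C ≥ (0:ℝ), ∀ φ, SP φ → ∀ N : ℕ, 0 < N →
    ∀ i : ℕ, i < N → ‖Vop (logKer A K) φ (tg (1 / (N:ℝ)) ε i)
      - 1 / (N:ℂ) * ∑ j ∈ Finset.range N, logKer A K (tg (1 / (N:ℝ)) ε i) (tg (1 / (N:ℝ)) 0 j)
          * φ (tg (1 / (N:ℝ)) 0 j)
      + 1 / (N:ℂ) * Cbar1 ε * (A (tg (1 / (N:ℝ)) ε i) (tg (1 / (N:ℝ)) ε i)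
          * φ (tg (1 / (N:ℝ)) ε i))‖
      ≤ C * (1 / (N:ℝ)) ^ 2 * sobNorm 3 φ := by
  obtain ⟨Q, hQ, q⟩ := quad_lg4 ε hε
  set Z := Real.sqrt (∑' n : ℤ, 1 / (n:ℝ) ^ 2) with hZ
  have hZ0 : 0 ≤ Z := Real.sqrt_nonneg _
  obtain ⟨CA, hCA, bA⟩ := row_third hA (|ε| + 2) (by linarith [abs_nonneg ε])
  obtain ⟨CK, hCK, bK⟩ := row_third hK (|ε| + 2) (by linarith [abs_nonneg ε])
  set c : ℂ := Complex.I / (2 * Real.pi) with hc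
  refine ⟨‖c‖ * (Q * CA) + ‖c * (Real.log 4 : ℂ)‖ * (Z * CA) + Z * CK, by positivity,
    fun φ hφ N hN i hi => ?_⟩
  have hN' : (0:ℝ) < N := by positivity
  have hN1 : (1:ℝ) ≤ N := by exact_mod_cast hN
  set S := sobNorm 3 φ with hS
  have hS0 : 0 ≤ S := Real.sqrt_nonneg _
  have et : tg (1 / (N:ℝ)) ε i = ((i:ℝ) + ε) / N := by unfold tg; push_cast; ring
  have et0 : ∀ j : ℕ, tg (1 / (N:ℝ)) 0 j = (j:ℝ) / N := fun j => by unfold tg; push_cast; ring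
  simp only [et, et0]
  set s := ((i:ℝ) + ε) / N with hs
  have hsR : |s| ≤ |ε| + 2 := by
    rw [hs, abs_div, abs_of_pos hN', div_le_iff₀ hN']
    have h1 : |(i:ℝ) + ε| ≤ i + |ε| := by
      refine (abs_add_le _ _).trans ?_
      rw [abs_of_nonneg (Nat.cast_nonneg i)]
    have h2 : (i:ℝ) ≤ N := by exact_mod_cast hi.le
    nlinarith [abs_nonneg ε]
  have hf : SP fun x => A s x * φ x := (hA.row s).mul hφ
  have hk : SP fun x => K s x * φ x := (hK.row s).mul hφ
  have X := q _ hf N hN i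
  have Y := quad_one hf N hN
  have W := quad_one hk N hN
  rw [← hs] at X
  rw [← hZ] at Y W
  simp only at X Y W
  have hli := lg_shift_integrable hf s
  have i1 : IntervalIntegrable (fun t => ((lg (s - t) + Real.log 4 : ℝ) : ℂ) * (A s t * φ t))
      volume 0 1 := by
    have := hli.add ((hf.cont.intervalIntegrable 0 1).const_mul (Real.log 4 : ℂ))
    refine this.congr fun t _ => ?_
    simp only [Complex.ofReal_add]
    ring
  have hV : Vop (logKer A K) φ s
      = c * (∫ t in (0:ℝ)..1, ((lg (s - t) + Real.log 4 : ℝ) : ℂ) * (A s t * φ t))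
        - c * (Real.log 4 : ℂ) * (∫ t in (0:ℝ)..1, A s t * φ t) + ∫ t in (0:ℝ)..1, K s t * φ t := by
    rw [← intervalIntegral.integral_const_mul, ← intervalIntegral.integral_const_mul,
      ← integral_sub (i1.const_mul c) ((hf.cont.intervalIntegrable 0 1).const_mul _),
      ← integral_add ((i1.const_mul c).sub ((hf.cont.intervalIntegrable 0 1).const_mul _))
        (hk.cont.intervalIntegrable 0 1)]
    unfold Vop
    congr 1; funext t
    unfold logKer lg
    rw [← hc]
    push_cast
    ring
  have hsum : ∑ j ∈ Finset.range N, logKer A K s ((j:ℝ) / N) * φ ((j:ℝ) / N)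
      = c * (∑ j ∈ Finset.range N, ((lg (s - (j:ℝ) / N) + Real.log 4 : ℝ) : ℂ)
          * (A s ((j:ℝ) / N) * φ ((j:ℝ) / N)))
        - c * (Real.log 4 : ℂ) * (∑ j ∈ Finset.range N, A s ((j:ℝ) / N) * φ ((j:ℝ) / N))
        + ∑ j ∈ Finset.range N, K s ((j:ℝ) / N) * φ ((j:ℝ) / N) := by
    rw [Finset.mul_sum, Finset.mul_sum, ← Finset.sum_sub_distrib, ← Finset.sum_add_distrib]
    refine Finset.sum_congr rfl fun j _ => ?_
    unfold logKer lg
    rw [← hc]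
    push_cast
    ring
  rw [hV, hsum, Cbar1_eq ε hε, ← hc]
  have nA := bA φ hφ s hsR
  have nK := bK φ hφ s hsR
  have hh : 0 ≤ (1 / (N:ℝ)) ^ 2 := by positivity
  have X' := X.trans (mul_le_mul_of_nonneg_left nA (by positivity))
  have Y' := Y.trans (mul_le_mul_of_nonneg_left nA (by positivity))
  have W' := W.trans (mul_le_mul_of_nonneg_left nK (by positivity))
  have key := norm_add_le_of_le (norm_sub_le_of_le
    ((norm_mul_le c _).trans (mul_le_mul_of_nonneg_left X' (norm_nonneg _)))
    ((norm_mul_le (c * (Real.log 4 : ℂ)) _).trans (mul_le_mul_of_nonneg_left Y' (norm_nonneg _)))) W'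
  refine (le_of_eq ?_).trans (key.trans (le_of_eq ?_))
  · congr 1; ring
  · ring

/-! ### The consistency estimate -/

/-- Sums over `ZMod N` written through representatives in `{0,…,N-1}`. -/
lemma sum_zmod {M : Type*} [AddCommMonoid M] (N : ℕ) [NeZero N] (u : ZMod N → ℕ → M) :
    ∑ i : ZMod N, u i i.val = ∑ k ∈ Finset.range N, u (k : ZMod N) k := by
  refine Finset.sum_bij' (fun i _ => i.val) (fun k _ => (k : ZMod N)) ?_ ?_ ?_ ?_ ?_
  · intro i _; exact Finset.mem_range.2 (ZMod.val_lt i)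
  · intro k _; exact Finset.mem_univ _
  · intro i _; exact ZMod.natCast_zmod_val i
  · intro k hk; exact ZMod.val_cast_of_lt (Finset.mem_range.1 hk)
  · intro i _; simp only [ZMod.natCast_zmod_val]

/-- Cauchy–Schwarz pairing of the coefficients with the per-node consistency errors. -/
lemma pairing {N : ℕ} (hN : 0 < N) {v d r : ℕ → ℂ} {P Q S : ℝ} (hP : 0 ≤ P) (hQ : 0 ≤ Q)
    (hS : 0 ≤ S)
    (hd : ∑ i ∈ Finset.range N, ‖d i‖ ^ 2 ≤ (1 / (N:ℝ)) ^ 5 * (P * S ^ 2))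
    (hr : ∀ i < N, ‖r i‖ ≤ Q * (1 / (N:ℝ)) ^ 3 * S) :
    ‖∑ i ∈ Finset.range N, v i * (d i + r i)‖ ≤ (Real.sqrt P + Q) * (1 / (N:ℝ)) ^ 2
      * Real.sqrt ((1 / (N:ℝ)) * ∑ i ∈ Finset.range N, ‖v i‖ ^ 2) * S := by
  have hN' : (0:ℝ) < N := by positivity
  have cs : ∀ {w : ℕ → ℂ} {B : ℝ}, 0 ≤ B → ∑ i ∈ Finset.range N, ‖w i‖ ^ 2 ≤ (1 / (N:ℝ)) ^ 5 * B ^ 2 →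
      ‖∑ i ∈ Finset.range N, v i * w i‖ ≤ B * (1 / (N:ℝ)) ^ 2
        * Real.sqrt ((1 / (N:ℝ)) * ∑ i ∈ Finset.range N, ‖v i‖ ^ 2) := by
    intro w B hB hw
    have h1 : ‖∑ i ∈ Finset.range N, v i * w i‖ ≤ ∑ i ∈ Finset.range N, ‖v i‖ * ‖w i‖ :=
      (norm_sum_le _ _).trans (le_of_eq (Finset.sum_congr rfl fun i _ => norm_mul _ _))
    have h2 := Finset.sum_mul_sq_le_sq_mul_sq (Finset.range N) (fun i => ‖v i‖) (fun i => ‖w i‖)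
    have hv : 0 ≤ ∑ i ∈ Finset.range N, ‖v i‖ ^ 2 := Finset.sum_nonneg fun _ _ => by positivity
    refine h1.trans (le_of_sq_le_sq ?_ (by positivity))
    refine h2.trans ((mul_le_mul_of_nonneg_left hw hv).trans (le_of_eq ?_))
    rw [mul_pow, Real.sq_sqrt (by positivity)]
    ring
  have t1 := cs (w := d) (B := Real.sqrt P * S) (by positivity) (hd.trans (le_of_eq (by
    rw [mul_pow, Real.sq_sqrt hP])))
  have t2 := cs (w := r) (B := Q * S) (by positivity) (by
    calc ∑ i ∈ Finset.range N, ‖r i‖ ^ 2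
        ≤ ∑ _i ∈ Finset.range N, (Q * (1 / (N:ℝ)) ^ 3 * S) ^ 2 :=
          Finset.sum_le_sum fun i hi =>
            pow_le_pow_left₀ (norm_nonneg _) (hr i (Finset.mem_range.1 hi)) 2
      _ = (1 / (N:ℝ)) ^ 5 * (Q * S) ^ 2 := by
          rw [Finset.sum_const, Finset.card_range, nsmul_eq_mul]
          field_simp)
  simp_rw [mul_add, Finset.sum_add_distrib]
  refine (norm_add_le_of_le t1 t2).trans (le_of_eq (by ring))

/-- first-order consistency expansion of the Nyström scheme:
`|h Σ_i ψ_i (Wφ)(t_{i+ε}) − Σ_i ψ_i [(V₁φ′)(s_{i+ε}) − (V₁φ′)(s_{i+1+ε})]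
  − h² Σ_{i,j} ψ_i V₂(t_{i+ε},t_j) φ(t_j) + h C̄₁(ε) ∫₀¹ ψ_h A₂(t,t) φ| ≤ C h² ‖ψ_h‖₀ ‖φ‖₃`. -/
theorem stmt_13
    (A1 K1 A2 K2 : ℝ → ℝ → ℂ) (hA1 : SPK A1) (hK1 : SPK K1) (hA2 : SPK A2) (hK2 : SPK K2)
    (α : ℂ) (hα : α ≠ 0) (hdiag : ∀ s : ℝ, A1 s s = α)
    (ε : ℝ) (hε : ∀ k : ℤ, ε ≠ (k : ℝ) / 2) :
    ∃ C > (0:ℝ), ∀ φ : ℝ → ℂ, ContDiff ℝ (⊤ : ℕ∞) φ → Function.Periodic φ 1 →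
      ∀ (N : ℕ) [NeZero N], ∀ ψ : ZMod N → ℂ,
        ‖(1 / (N : ℂ)) * (∑ i : ZMod N,
              ψ i * Wop (logKer A1 K1) (logKer A2 K2) φ (tg (1 / (N : ℝ)) ε ((i.val : ℕ) : ℤ)))
            - (∑ i : ZMod N, ψ i *
                (Vop (logKer A1 K1) (deriv φ) (sg (1 / (N : ℝ)) ε ((i.val : ℕ) : ℤ))
                  - Vop (logKer A1 K1) (deriv φ) (sg (1 / (N : ℝ)) ε (((i.val : ℕ) : ℤ) + 1))))
            - (1 / (N : ℂ)) ^ 2 * (∑ i : ZMod N, ∑ j : ZMod N,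
                ψ i * logKer A2 K2 (tg (1 / (N : ℝ)) ε ((i.val : ℕ) : ℤ))
                    (tg (1 / (N : ℝ)) 0 ((j.val : ℕ) : ℤ))
                  * φ (tg (1 / (N : ℝ)) 0 ((j.val : ℕ) : ℤ)))
            + (1 / (N : ℂ)) * Cbar1 ε
                * ∫ t in (0:ℝ)..1, stepf N ε ψ t * A2 t t * φ t‖ ≤
          C * (1 / (N : ℝ)) ^ 2
            * Real.sqrt ((1 / (N : ℝ)) * ∑ i : ZMod N, ‖ψ i‖ ^ 2) * sobNorm 3 φ := by
  have hsin : Real.sin (Real.pi * ε) ≠ 0 := by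
    intro h0
    obtain ⟨n, hn⟩ := Real.sin_eq_zero_iff.1 h0
    have : (n:ℝ) = ε := mul_right_cancel₀ Real.pi_ne_zero (by rw [hn]; ring)
    refine hε (2 * n) ?_
    push_cast
    linarith
  obtain ⟨P, hP, hg⟩ := g_main hA1 hK1 hdiag (|ε| + 2) (by positivity)
  obtain ⟨Q1, hQ1, hq⟩ := V2_quad hA2 hK2 ε hsin
  obtain ⟨Q2, hQ2, hc⟩ := diag_cell hA2 ε
  set Q := Q1 + ‖Cbar1 ε‖ * Q2 with hQ
  have hQ0 : 0 ≤ Q := by positivity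
  refine ⟨Real.sqrt P + Q + 1, by positivity, fun φ hφ1 hφ2 N _ ψ => ?_⟩
  have hφ : SP φ := ⟨hφ1, hφ2⟩
  have hN : 0 < N := Nat.pos_of_ne_zero (NeZero.ne N)
  have hN' : (0:ℝ) < N := by positivity
  have hN1 : (1:ℝ) ≤ N := by exact_mod_cast hN
  obtain ⟨g1, g2, g3, d1, d2, d3, g3c, g3b⟩ := hg φ hφ
  set g := Vop (logKer A1 K1) (deriv φ) with hgdef
  set S := sobNorm 3 φ with hS
  have hS0 : 0 ≤ S := Real.sqrt_nonneg _
  have hab : |sg (1 / (N:ℝ)) ε 0| ≤ |ε| + 1 := by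
    have e : sg (1 / (N:ℝ)) ε 0 = (ε - 1 / 2) / N := by unfold sg; push_cast; ring
    rw [e, abs_div, abs_of_pos hN', div_le_iff₀ hN']
    have : |ε - 1 / 2| ≤ |ε| + 1 := (abs_sub _ _).trans (by norm_num)
    nlinarith [abs_nonneg ε]
  have hd := (midpoint_sum d1 d2 d3 g3c ε N hN).trans (mul_le_mul_of_nonneg_left
    (g3b (sg (1 / (N:ℝ)) ε 0) (by linarith [(abs_le.1 hab).1]) (by linarith [(abs_le.1 hab).2]))
    (by positivity))
  -- `r i` collects the corrected `V₂` quadrature error and the cell-average error at node `i`; the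
  -- midpoint values of `A₂(t,t) φ(t)` cancel between the two.
  set r : ℕ → ℂ := fun i =>
    1 / (N:ℂ) * (Vop (logKer A2 K2) φ (tg (1 / (N:ℝ)) ε i)
      - 1 / (N:ℂ) * ∑ j ∈ Finset.range N, logKer A2 K2 (tg (1 / (N:ℝ)) ε i) (tg (1 / (N:ℝ)) 0 j)
          * φ (tg (1 / (N:ℝ)) 0 j)
      + 1 / (N:ℂ) * Cbar1 ε * (A2 (tg (1 / (N:ℝ)) ε i) (tg (1 / (N:ℝ)) ε i)
          * φ (tg (1 / (N:ℝ)) ε i)))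
    + 1 / (N:ℂ) * Cbar1 ε * ((∫ t in (sg (1 / (N:ℝ)) ε i)..(sg (1 / (N:ℝ)) ε (i + 1)), A2 t t * φ t)
      - 1 / (N:ℂ) * (A2 (tg (1 / (N:ℝ)) ε i) (tg (1 / (N:ℝ)) ε i) * φ (tg (1 / (N:ℝ)) ε i)))
    with hr
  have hnN : ‖1 / (N:ℂ)‖ = 1 / (N:ℝ) := by simp
  have hrb : ∀ i < N, ‖r i‖ ≤ Q * (1 / (N:ℝ)) ^ 3 * S := by
    intro i hi
    refine (norm_add_le _ _).trans ?_
    rw [norm_mul, norm_mul, norm_mul, hnN]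
    calc _ ≤ 1 / (N:ℝ) * (Q1 * (1 / (N:ℝ)) ^ 2 * S)
          + 1 / (N:ℝ) * ‖Cbar1 ε‖ * (Q2 * (1 / (N:ℝ)) ^ 2 * S) := by
          gcongr
          · exact hq φ hφ N hN i hi
          · exact hc φ hφ N hN i
      _ = _ := by rw [hQ]; ring
  have key := pairing hN (v := fun k => ψ (k : ZMod N)) (S := S) hP hQ0 hS0 hd hrb
  have hnorm : ∑ i : ZMod N, ‖ψ i‖ ^ 2 = ∑ i ∈ Finset.range N, ‖ψ (i : ZMod N)‖ ^ 2 :=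
    sum_zmod N fun i _ => ‖ψ i‖ ^ 2
  have hstep : ∫ t in (0:ℝ)..1, stepf N ε ψ t * A2 t t * φ t
      = ∑ i ∈ Finset.range N, ψ i *
        ∫ t in (sg (1 / (N:ℝ)) ε i)..(sg (1 / (N:ℝ)) ε (i + 1)), A2 t t * φ t := by
    simp_rw [mul_assoc]
    exact stepf_integral ε ψ (hA2.diag.mul hφ)
  have hW : ∀ s, Wop (logKer A1 K1) (logKer A2 K2) φ s = -g1 s + Vop (logKer A2 K2) φ s := fun s => by
    unfold Wop
    rw [← hgdef, (d1 s).deriv]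
  have hsW := sum_zmod N fun i k => ψ i * Wop (logKer A1 K1) (logKer A2 K2) φ (tg (1 / (N:ℝ)) ε k)
  have hsg := sum_zmod N fun i k => ψ i * (g (sg (1 / (N:ℝ)) ε k) - g (sg (1 / (N:ℝ)) ε (k + 1)))
  have hsV := sum_zmod N fun i k => ∑ j : ZMod N, ψ i * logKer A2 K2 (tg (1 / (N:ℝ)) ε k)
    (tg (1 / (N:ℝ)) 0 ((j.val : ℕ) : ℤ)) * φ (tg (1 / (N:ℝ)) 0 ((j.val : ℕ) : ℤ))
  have hsj : ∀ k : ℕ, ∑ j : ZMod N, ψ (k : ZMod N) * logKer A2 K2 (tg (1 / (N:ℝ)) ε k)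
      (tg (1 / (N:ℝ)) 0 ((j.val : ℕ) : ℤ)) * φ (tg (1 / (N:ℝ)) 0 ((j.val : ℕ) : ℤ))
      = ψ (k : ZMod N) * ∑ j ∈ Finset.range N, logKer A2 K2 (tg (1 / (N:ℝ)) ε k)
        (tg (1 / (N:ℝ)) 0 j) * φ (tg (1 / (N:ℝ)) 0 j) := fun k => by
    rw [sum_zmod N fun _ j => ψ (k : ZMod N) * logKer A2 K2 (tg (1 / (N:ℝ)) ε k)
      (tg (1 / (N:ℝ)) 0 j) * φ (tg (1 / (N:ℝ)) 0 j), Finset.mul_sum]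
    exact Finset.sum_congr rfl fun j _ => mul_assoc _ _ _
  simp only [hsj] at hsV
  rw [hsW, hsg, hsV, hstep, hnorm, Finset.mul_sum, Finset.mul_sum, Finset.mul_sum,
    ← Finset.sum_sub_distrib, ← Finset.sum_sub_distrib, ← Finset.sum_add_distrib]
  refine (le_of_eq ?_).trans (key.trans ?_)
  · congr 1
    refine Finset.sum_congr rfl fun i _ => ?_
    rw [hW, hr]
    ring
  · have hle : Real.sqrt P + Q ≤ Real.sqrt P + Q + 1 := by linarith
    exact mul_le_mul_of_nonneg_right (mul_le_mul_of_nonneg_right (mul_le_mul_of_nonneg_right hle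
      (by positivity)) (Real.sqrt_nonneg _)) hS0
end

section
/- There exists an absolute constant C > 0 such that for every real ε, every positive integer N (h = 1/N), every vector (ψ₀,…,ψ_{N−1}) ∈ ℂ^N with associated step function ψ_h = Σ_{j=0}^{N−1} ψ_j χ_{j+ε}, and every 1-periodic function u ∈ C³(ℝ, ℂ), the corrected midpoint quadrature satisfies | Σ_{j=0}^{N−1} ψ_j ( h u(t_{j+ε}) + (h³/24) u″(t_{j+ε}) − ∫_{t_{j+ε}−h/2}^{t_{j+ε}+h/2} u(t) dt ) | ≤ C h³ ‖ψ_h‖₀ ‖u‖₃. -/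
open MeasureTheory

/-- Integration by parts; the case `m = 0` is included. -/
lemma fc_of_hasDerivAt {f f' : ℝ → ℂ} (hf : ∀ x, HasDerivAt f (f' x) x) (hc : Continuous f')
    (hp : f 1 = f 0) (m : ℤ) : fc f' m = 2 * Real.pi * Complex.I * m * fc f m := by
  have hcf : Continuous f := continuous_iff_continuousAt.2 fun x => (hf x).continuousAt
  have he : ∀ x : ℝ, HasDerivAt
      (fun t : ℝ => Complex.exp (-(2 * Real.pi * Complex.I * (m : ℂ) * (t : ℂ))))
      (Complex.exp (-(2 * Real.pi * Complex.I * (m : ℂ) * (x : ℂ))) *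
        (-(2 * Real.pi * Complex.I * (m : ℂ) * 1))) x := by
    intro x
    have h1 : HasDerivAt (fun t : ℝ => (t : ℂ)) 1 x := Complex.ofRealCLM.hasDerivAt
    exact ((h1.const_mul (2 * Real.pi * Complex.I * (m : ℂ))).neg).cexp
  have hparts := intervalIntegral.integral_deriv_mul_eq_sub (a := 0) (b := 1)
    (fun x _ => hf x) (fun x _ => he x) (hc.intervalIntegrable _ _)
    (Continuous.intervalIntegrable (by fun_prop) _ _)
  rw [intervalIntegral.integral_add (Continuous.intervalIntegrable (by fun_prop) _ _)
    (Continuous.intervalIntegrable (by fun_prop) _ _)] at hparts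
  have hend : Complex.exp (-(2 * Real.pi * Complex.I * (m : ℂ) * ((1 : ℝ) : ℂ))) = 1 := by
    have := Complex.exp_int_mul_two_pi_mul_I (-m)
    rw [← this]; congr 1; push_cast; ring
  rw [hend, hp] at hparts
  have hpull : (∫ x in (0:ℝ)..1, f x * (Complex.exp (-(2 * Real.pi * Complex.I * (m : ℂ) * (x : ℂ)))
      * (-(2 * Real.pi * Complex.I * (m : ℂ) * 1))))
      = -(2 * Real.pi * Complex.I * (m : ℂ)) * fc f m := by
    rw [fc, ← intervalIntegral.integral_const_mul]
    congr 1; ext x; ring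
  rw [hpull] at hparts
  simp only [Complex.ofReal_zero, mul_zero, neg_zero, Complex.exp_zero, sub_self] at hparts
  rw [show fc f' m = ∫ x in (0:ℝ)..1,
    f' x * Complex.exp (-(2 * Real.pi * Complex.I * (m : ℂ) * (x : ℂ))) from rfl]
  linear_combination hparts

lemma hasSum_sq_fc {f : ℝ → ℂ} (hc : Continuous f) :
    HasSum (fun m : ℤ => ‖fc f m‖ ^ 2) (∫ t in (0:ℝ)..1, ‖f t‖ ^ 2) := by
  have hL2 : MemLp f 2 (volume.restrict (Set.Ioc (0:ℝ) 1)) :=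
    (memLp_two_iff_integrable_sq_norm hc.aestronglyMeasurable).2
      (((hc.norm.pow 2).intervalIntegrable 0 1).1)
  have h := hasSum_sq_fourierCoeffOn (zero_lt_one (α := ℝ)) hL2
  have hfc : ∀ m : ℤ, fourierCoeffOn (zero_lt_one (α := ℝ)) f m = fc f m := by
    intro m
    rw [fourierCoeffOn_eq_integral, fc]
    simp only [fourier_coe_apply]
    simp only [sub_zero, div_one, one_smul, smul_eq_mul]
    congr 1; ext x
    rw [mul_comm]
    congr 2; push_cast; ring
  simpa [hfc] using h

lemma integral_sq_le_sobNorm {u u1 u2 u3 : ℝ → ℂ} (h1 : ∀ x, HasDerivAt u (u1 x) x)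
    (h2 : ∀ x, HasDerivAt u1 (u2 x) x) (h3 : ∀ x, HasDerivAt u2 (u3 x) x) (hc : Continuous u3)
    (p0 : u 1 = u 0) (p1 : u1 1 = u1 0) (p2 : u2 1 = u2 0) :
    Real.sqrt (∫ t in (0:ℝ)..1, ‖u3 t‖ ^ 2) ≤ (2 * Real.pi) ^ 3 * sobNorm 3 u := by
  have c2 : Continuous u2 := continuous_iff_continuousAt.2 fun x => (h3 x).continuousAt
  have c1 : Continuous u1 := continuous_iff_continuousAt.2 fun x => (h2 x).continuousAt
  have hterm : ∀ m : ℤ, ‖fc u3 m‖ ^ 2 = (2 * Real.pi) ^ 6 *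
      (if m = 0 then 0 else |(m : ℝ)| ^ (2 * (3:ℝ)) * ‖fc u m‖ ^ 2) := by
    intro m
    rw [fc_of_hasDerivAt h3 hc p2, fc_of_hasDerivAt h2 c2 p1, fc_of_hasDerivAt h1 c1 p0]
    split_ifs with hm
    · simp [hm]
    · have h6 : |(m : ℝ)| ^ (2 * (3:ℝ)) = |(m : ℝ)| ^ 6 := by
        rw [← Real.rpow_natCast]; norm_num
      rw [h6]
      simp only [norm_mul, Complex.norm_I, Complex.norm_real, Complex.norm_intCast,
        Complex.norm_ofNat, Real.norm_of_nonneg Real.pi_pos.le]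
      ring
  have htsum := (hasSum_sq_fc hc).tsum_eq
  simp_rw [hterm] at htsum
  rw [tsum_mul_left] at htsum
  have hpi := Real.pi_pos
  rw [← htsum, sobNorm, Real.sqrt_le_left (by positivity),
    mul_pow _ (Real.sqrt _) 2, Real.sq_sqrt]
  · rw [← pow_mul]
    gcongr
    exact le_add_of_nonneg_left (by positivity)
  · refine add_nonneg (by positivity) (tsum_nonneg fun m => ?_)
    split_ifs <;> positivity

/-- Taylor estimate on the interval of half-length `r` centred at `c`, where `h = 2r`. -/
lemma local_error {u u1 u2 u3 : ℝ → ℂ} (h1 : ∀ x, HasDerivAt u (u1 x) x)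
    (h2 : ∀ x, HasDerivAt u1 (u2 x) x) (h3 : ∀ x, HasDerivAt u2 (u3 x) x) (hc : Continuous u3)
    (c r : ℝ) (hr : 0 ≤ r) :
    ‖((2 * r : ℝ) : ℂ) * u c + ((2 * r : ℝ) : ℂ) ^ 3 / 24 * u2 c - ∫ t in (c - r)..(c + r), u t‖
      ≤ 2 * r ^ 3 * ∫ t in (c - r)..(c + r), ‖u3 t‖ := by
  set M := ∫ t in (c - r)..(c + r), ‖u3 t‖ with hM
  have c0 : Continuous u := continuous_iff_continuousAt.2 fun x => (h1 x).continuousAt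
  have hcI : c ∈ Set.Icc (c - r) (c + r) := ⟨by linarith, by linarith⟩
  have hM0 : 0 ≤ M := intervalIntegral.integral_nonneg (by linarith) fun _ _ => norm_nonneg _
  have hsc : ∀ s ∈ Set.Icc (c - r) (c + r), ‖s - c‖ ≤ r := by
    intro s hs
    rw [Real.norm_eq_abs, abs_le]; constructor <;> linarith [hs.1, hs.2]
  -- The variation of `u″` is at most the integral of `|u‴|`.
  have b2 : ∀ s ∈ Set.Icc (c - r) (c + r), ‖u2 s - u2 c‖ ≤ M := by
    intro s hs
    rw [← intervalIntegral.integral_eq_sub_of_hasDerivAt (fun x _ => h3 x)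
      (hc.intervalIntegrable c s)]
    refine (intervalIntegral.norm_integral_le_abs_integral_norm).trans ?_
    rw [← abs_of_nonneg hM0, hM]
    refine intervalIntegral.abs_integral_mono_interval ?_ ?_ (hc.norm.intervalIntegrable _ _)
    · rw [Set.uIoc_of_le (by linarith : c - r ≤ c + r)]
      intro x hx
      rcases le_total c s with h | h
      · rw [Set.uIoc_of_le h] at hx; exact ⟨by linarith [hx.1], hx.2.trans hs.2⟩
      · rw [Set.uIoc_of_ge h] at hx; exact ⟨hs.1.trans_lt hx.1, by linarith [hx.2]⟩
    · exact Filter.Eventually.of_forall fun _ => norm_nonneg _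
  have dsub : ∀ x : ℝ, HasDerivAt (fun t : ℝ => ((t - c : ℝ) : ℂ)) 1 x := fun x => by
    simpa using ((hasDerivAt_id x).sub_const c).ofReal_comp
  have b1 : ∀ s ∈ Set.Icc (c - r) (c + r), ‖u1 s - u1 c - u2 c * ((s - c : ℝ) : ℂ)‖ ≤ M * r := by
    intro s hs
    have := (convex_Icc (c - r) (c + r)).norm_image_sub_le_of_norm_hasDerivWithin_le
      (f := fun s => u1 s - u1 c - u2 c * ((s - c : ℝ) : ℂ)) (f' := fun s => u2 s - u2 c)
      (fun x _ => by
        refine ((((h2 x).sub_const (u1 c)).sub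
          ((dsub x).const_mul (u2 c))).congr_deriv ?_).hasDerivWithinAt
        ring)
      b2 hcI hs
    simp only [sub_self, Complex.ofReal_zero, mul_zero, sub_zero] at this
    exact this.trans (mul_le_mul_of_nonneg_left (hsc s hs) hM0)
  have b0 : ∀ s ∈ Set.Icc (c - r) (c + r),
      ‖u s - u c - u1 c * ((s - c : ℝ) : ℂ) - u2 c / 2 * ((s - c : ℝ) : ℂ) ^ 2‖ ≤ M * r * r := by
    intro s hs
    have := (convex_Icc (c - r) (c + r)).norm_image_sub_le_of_norm_hasDerivWithin_le
      (f := fun s => u s - u c - u1 c * ((s - c : ℝ) : ℂ) - u2 c / 2 * ((s - c : ℝ) : ℂ) ^ 2)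
      (f' := fun s => u1 s - u1 c - u2 c * ((s - c : ℝ) : ℂ))
      (fun x _ => by
        have := ((((h1 x).sub_const (u c)).sub ((dsub x).const_mul (u1 c))).sub
          (((dsub x).pow 2).const_mul (u2 c / 2)))
        refine (this.congr_deriv ?_).hasDerivWithinAt
        push_cast; ring)
      b1 hcI hs
    simp only [sub_self, Complex.ofReal_zero, mul_zero, sub_zero, ne_eq, OfNat.ofNat_ne_zero,
      not_false_eq_true, zero_pow] at this
    exact this.trans (mul_le_mul_of_nonneg_left (hsc s hs) (by positivity))
  have hint : (∫ s in (c - r)..(c + r),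
      (u s - u c - u1 c * ((s - c : ℝ) : ℂ) - u2 c / 2 * ((s - c : ℝ) : ℂ) ^ 2))
      = (∫ s in (c - r)..(c + r), u s) -
        (((2 * r : ℝ) : ℂ) * u c + ((2 * r : ℝ) : ℂ) ^ 3 / 24 * u2 c) := by
    have hpoly : (∫ s in (c - r)..(c + r),
        (u c + u1 c * ((s - c : ℝ) : ℂ) + u2 c / 2 * ((s - c : ℝ) : ℂ) ^ 2))
        = ((2 * r : ℝ) : ℂ) * u c + ((2 * r : ℝ) : ℂ) ^ 3 / 24 * u2 c := by
      rw [intervalIntegral.integral_eq_sub_of_hasDerivAt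
        (f := fun s => u c * ((s - c : ℝ) : ℂ) + u1 c / 2 * ((s - c : ℝ) : ℂ) ^ 2
          + u2 c / 6 * ((s - c : ℝ) : ℂ) ^ 3)]
      · push_cast; ring
      · intro x _
        refine ((((dsub x).const_mul (u c)).add (((dsub x).pow 2).const_mul (u1 c / 2))).add
          (((dsub x).pow 3).const_mul (u2 c / 6))).congr_deriv ?_
        push_cast; ring
      · exact Continuous.intervalIntegrable (by fun_prop) _ _
    rw [← hpoly, ← intervalIntegral.integral_sub (c0.intervalIntegrable _ _)
      (Continuous.intervalIntegrable (by fun_prop) _ _)]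
    congr 1; ext s; ring
  rw [norm_sub_rev, ← hint]
  refine (intervalIntegral.norm_integral_le_of_norm_le_const (C := M * r * r) ?_).trans ?_
  · intro s hs
    rw [Set.uIoc_of_le (by linarith)] at hs
    exact b0 s ⟨hs.1.le, hs.2⟩
  · rw [show c + r - (c - r) = 2 * r by ring, abs_of_nonneg (by positivity)]
    exact le_of_eq (by ring)

lemma sq_integral_norm_le {f : ℝ → ℂ} (hc : Continuous f) {a b : ℝ} (hab : a < b) :
    (∫ t in a..b, ‖f t‖) ^ 2 ≤ (b - a) * ∫ t in a..b, ‖f t‖ ^ 2 := by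
  set I := ∫ t in a..b, ‖f t‖ with hI
  have hba : 0 < b - a := sub_pos.2 hab
  -- The integral of `((b - a)‖f‖ - I)²` is nonnegative.
  have h0 : 0 ≤ ∫ t in a..b, ((b - a) * ‖f t‖ - I) ^ 2 :=
    intervalIntegral.integral_nonneg hab.le fun _ _ => sq_nonneg _
  have hexp : (∫ t in a..b, ((b - a) * ‖f t‖ - I) ^ 2)
      = (b - a) * ((b - a) * (∫ t in a..b, ‖f t‖ ^ 2) - I ^ 2) := by
    have : ∀ t, ((b - a) * ‖f t‖ - I) ^ 2
        = (b - a) ^ 2 * ‖f t‖ ^ 2 - 2 * (b - a) * I * ‖f t‖ + I ^ 2 := fun t => by ring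
    simp_rw [this]
    rw [intervalIntegral.integral_add (Continuous.intervalIntegrable (by fun_prop) _ _)
      (Continuous.intervalIntegrable (by fun_prop) _ _),
      intervalIntegral.integral_sub (Continuous.intervalIntegrable (by fun_prop) _ _)
      (Continuous.intervalIntegrable (by fun_prop) _ _), intervalIntegral.integral_const_mul,
      intervalIntegral.integral_const_mul, intervalIntegral.integral_const, ← hI, smul_eq_mul]
    ring
  rw [hexp] at h0
  have := nonneg_of_mul_nonneg_right h0 hba
  linarith

/-- The grid intervals `(t_{j+ε} - h/2, t_{j+ε} + h/2)`, `0 ≤ j < N`, tile one full period. -/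
lemma sum_integral_grid (N : ℕ) [NeZero N] (ε : ℝ) {g : ℝ → ℝ} (hc : Continuous g)
    (hp : Function.Periodic g 1) :
    ∑ j : ZMod N, (∫ t in (tg (1 / (N : ℝ)) ε ((j.val : ℕ) : ℤ) - 1 / (2 * (N : ℝ)))..(
      tg (1 / (N : ℝ)) ε ((j.val : ℕ) : ℤ) + 1 / (2 * (N : ℝ))), g t)
      = ∫ t in (0:ℝ)..1, g t := by
  have hN : (N : ℝ) ≠ 0 := Nat.cast_ne_zero.2 (NeZero.ne N)
  let a : ℕ → ℝ := fun k => (k - 1 / 2 + ε) / N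
  have key : ∀ k : ℕ, (∫ t in (tg (1 / (N : ℝ)) ε (k : ℤ) - 1 / (2 * (N : ℝ)))..(
      tg (1 / (N : ℝ)) ε (k : ℤ) + 1 / (2 * (N : ℝ))), g t) = ∫ t in a k..a (k + 1), g t := by
    intro k
    congr 1 <;> simp only [tg, a] <;> push_cast <;> field_simp <;> ring
  have hsum : ∀ F : ℕ → ℝ, ∑ j : ZMod N, F j.val = ∑ k ∈ Finset.range N, F k := by
    intro F
    obtain ⟨n, rfl⟩ := Nat.exists_eq_succ_of_ne_zero (NeZero.ne N)
    exact Fin.sum_univ_eq_sum_range F (n + 1)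
  rw [hsum (fun k => ∫ t in (tg (1 / (N : ℝ)) ε (k : ℤ) - 1 / (2 * (N : ℝ)))..(
      tg (1 / (N : ℝ)) ε (k : ℤ) + 1 / (2 * (N : ℝ))), g t)]
  simp_rw [key]
  rw [intervalIntegral.sum_integral_adjacent_intervals fun k _ => hc.intervalIntegrable _ _]
  have ha : a N = a 0 + 1 := by
    simp only [a]; push_cast; field_simp; ring
  rw [ha, hp.intervalIntegral_add_eq (a 0) 0, zero_add]

lemma periodic_of_hasDerivAt {f f' : ℝ → ℂ} (hf : ∀ x, HasDerivAt f (f' x) x)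
    (hp : Function.Periodic f 1) : Function.Periodic f' 1 := by
  intro x
  have h := (hf (x + 1)).comp_add_const x 1
  rw [funext hp] at h
  exact h.unique (hf x)

/-- corrected midpoint quadrature tested against a step function:
`|Σ_j ψ_j ( h u(t_{j+ε}) + (h³/24) u″(t_{j+ε}) − ∫ u )| ≤ C h³ ‖ψ_h‖₀ ‖u‖₃`
with an absolute constant `C`. -/
theorem stmt_19 :
    ∃ C > (0:ℝ), ∀ (ε : ℝ) (N : ℕ) [NeZero N], ∀ ψ : ZMod N → ℂ,
      ∀ u : ℝ → ℂ, ContDiff ℝ 3 u → Function.Periodic u 1 →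
        ‖∑ j : ZMod N, ψ j *
            ((1 / (N : ℂ)) * u (tg (1 / (N : ℝ)) ε ((j.val : ℕ) : ℤ))
              + (1 / (N : ℂ)) ^ 3 / 24 * deriv (deriv u) (tg (1 / (N : ℝ)) ε ((j.val : ℕ) : ℤ))
              - ∫ t in (tg (1 / (N : ℝ)) ε ((j.val : ℕ) : ℤ) - 1 / (2 * (N : ℝ)))..(
                  tg (1 / (N : ℝ)) ε ((j.val : ℕ) : ℤ) + 1 / (2 * (N : ℝ))), u t)‖ ≤
          C * (1 / (N : ℝ)) ^ 3
            * Real.sqrt ((1 / (N : ℝ)) * ∑ j : ZMod N, ‖ψ j‖ ^ 2) * sobNorm 3 u := by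
  refine ⟨2 * Real.pi ^ 3, by positivity, ?_⟩
  intro ε N _ ψ u hu hp
  have hNpos : (0 : ℝ) < N := Nat.cast_pos.2 (NeZero.pos N)
  have d1 : ContDiff ℝ 2 (deriv u) := ((contDiff_succ_iff_deriv (n := 2)).1 hu).2.2
  have d2 : ContDiff ℝ 1 (deriv (deriv u)) := ((contDiff_succ_iff_deriv (n := 1)).1 d1).2.2
  have d3 : Continuous (deriv (deriv (deriv u))) := d2.continuous_deriv le_rfl
  have h1 : ∀ x, HasDerivAt u (deriv u x) x := fun x =>
    (hu.differentiable (by norm_num) x).hasDerivAt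
  have h2 : ∀ x, HasDerivAt (deriv u) (deriv (deriv u) x) x := fun x =>
    (d1.differentiable (by norm_num) x).hasDerivAt
  have h3 : ∀ x, HasDerivAt (deriv (deriv u)) (deriv (deriv (deriv u)) x) x := fun x =>
    (d2.differentiable (by norm_num) x).hasDerivAt
  have p1 := periodic_of_hasDerivAt h1 hp
  have p2 := periodic_of_hasDerivAt h2 p1
  have p3 := periodic_of_hasDerivAt h3 p2
  generalize deriv (deriv (deriv u)) = u3 at *
  generalize deriv (deriv u) = u2 at *
  generalize deriv u = u1 at *
  set c : ZMod N → ℝ := fun j => tg (1 / (N : ℝ)) ε ((j.val : ℕ) : ℤ) with hcdef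
  set r : ℝ := 1 / (2 * (N : ℝ)) with hr
  have hr0 : 0 < r := by positivity
  have h2r : (1 / (N : ℝ)) = 2 * r := by rw [hr]; field_simp
  have hloc : ∀ j, ‖(1 / (N : ℂ)) * u (c j) + (1 / (N : ℂ)) ^ 3 / 24 * u2 (c j)
      - ∫ t in (c j - r)..(c j + r), u t‖
      ≤ 2 * r ^ 3 * Real.sqrt (2 * r) * Real.sqrt (∫ t in (c j - r)..(c j + r), ‖u3 t‖ ^ 2) := by
    intro j
    have hcast : (1 / (N : ℂ)) = ((2 * r : ℝ) : ℂ) := by rw [← h2r]; push_cast; rfl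
    rw [hcast]
    refine (local_error h1 h2 h3 d3 (c j) r hr0.le).trans ?_
    rw [mul_assoc (2 * r ^ 3), ← Real.sqrt_mul (by positivity)]
    gcongr
    refine Real.le_sqrt_of_sq_le ?_
    have := sq_integral_norm_le d3 (show c j - r < c j + r by linarith)
    rwa [show c j + r - (c j - r) = 2 * r by ring] at this
  have hgrid := sum_integral_grid N ε (g := fun t => ‖u3 t‖ ^ 2) (by fun_prop)
    (fun x => by simp only [p3 x])
  have hfin := integral_sq_le_sobNorm h1 h2 h3 d3 (by simpa using hp 0) (by simpa using p1 0)
    (by simpa using p2 0)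
  have hCS : ∑ j, ‖ψ j‖ * Real.sqrt (∫ t in (c j - r)..(c j + r), ‖u3 t‖ ^ 2)
      ≤ Real.sqrt (∑ j, ‖ψ j‖ ^ 2) * Real.sqrt (∫ t in (0:ℝ)..1, ‖u3 t‖ ^ 2) := by
    refine (Real.sum_mul_le_sqrt_mul_sqrt _ _ _).trans (le_of_eq ?_)
    congr 2
    rw [← hgrid]
    refine Finset.sum_congr rfl fun j _ => Real.sq_sqrt ?_
    exact intervalIntegral.integral_nonneg (by linarith) fun _ _ => by positivity
  rw [h2r]
  calc _ ≤ ∑ j, ‖ψ j‖ * (2 * r ^ 3 * Real.sqrt (2 * r) *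
          Real.sqrt (∫ t in (c j - r)..(c j + r), ‖u3 t‖ ^ 2)) := by
        refine (norm_sum_le _ _).trans (Finset.sum_le_sum fun j _ => ?_)
        rw [norm_mul]
        have := hloc j
        simp only [hcdef, h2r] at this ⊢
        gcongr
    _ = 2 * r ^ 3 * Real.sqrt (2 * r) *
          ∑ j, ‖ψ j‖ * Real.sqrt (∫ t in (c j - r)..(c j + r), ‖u3 t‖ ^ 2) := by
        rw [Finset.mul_sum]
        exact Finset.sum_congr rfl fun j _ => by ring
    _ ≤ 2 * r ^ 3 * Real.sqrt (2 * r) *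
          (Real.sqrt (∑ j, ‖ψ j‖ ^ 2) * ((2 * Real.pi) ^ 3 * sobNorm 3 u)) := by
        gcongr
        exact hCS.trans (by gcongr)
    _ = _ := by
        rw [Real.sqrt_mul (by positivity : (0:ℝ) ≤ 2 * r)]
        ring
end
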